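/- arXiv:1407.4208 — 3 statements merged into one kernel-verified Lean document; each statement's English description precedes it below -/
import Mathlib

section
/- Let γ = (γ_j)_{j≥1} be nonnegative weights with ∑_{j≥1} γ_j < ∞ and let δ > 0. Then there exists a constant C > 0 (depending only on γ and δ, not on p, m, or s) such that for every prime number p, every m ∈ ℕ, and every s ∈ ℕ there exists a p^m-element point set P in [0,1)^s with weighted star-discrepancy D*_γ(P) ≤ C·p^{−m(1−δ)}. -/
open Finset

/-- Local discrepancy of the point set `x` at the corner point `t`:
`Δ(t) = #{n : x_n ∈ [0,t)}/N − ∏_j t_j`. -/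
noncomputable def localDisc {N s : ℕ} (x : Fin N → Fin s → ℝ) (t : Fin s → ℝ) : ℝ :=
  ((univ.filter fun n => ∀ j, x n j < t j).card : ℝ) / N - ∏ j, t j

/-- `(z_u, 1)`: the vector `z` with all components whose index is not in `u`
replaced by `1`. -/
def projPoint {s : ℕ} (u : Finset (Fin s)) (z : Fin s → ℝ) : Fin s → ℝ :=
  fun j => if j ∈ u then z j else 1

/-- The weight `γ_u = ∏_{j ∈ u} γ_j` of a set of coordinates `u ⊆ {1,…,s}`;
coordinate `j : Fin s` carries weight `γ (j+1)` (weights are indexed from `1`). -/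
noncomputable def weightOf {s : ℕ} (γ : ℕ → ℝ) (u : Finset (Fin s)) : ℝ :=
  ∏ j ∈ u, γ (j.1 + 1)

/-- Weighted star-discrepancy
`D*_γ(x) = sup_{z ∈ [0,1]^s} max_{∅ ≠ u ⊆ [s]} γ_u |Δ(z_u,1)|`. -/
noncomputable def wStarDisc {N s : ℕ} (γ : ℕ → ℝ) (x : Fin N → Fin s → ℝ) : ℝ :=
  sSup {d : ℝ | ∃ z : Fin s → ℝ, (∀ j, z j ∈ Set.Icc (0:ℝ) 1) ∧
    ∃ u : Finset (Fin s), u.Nonempty ∧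
      d = weightOf γ u * |localDisc x (projPoint u z)|}

/-- `N`-th minimal weighted star-discrepancy `disc_γ(N,s)`. -/
noncomputable def wMinDisc (γ : ℕ → ℝ) (N s : ℕ) : ℝ :=
  sInf {d : ℝ | ∃ x : Fin N → Fin s → ℝ,
    (∀ n j, x n j ∈ Set.Ico (0:ℝ) 1) ∧ d = wStarDisc γ x}

/-- Bound for normalised exponential sums. -/
noncomputable def rr (q : ℕ) (b : ZMod q) : ℝ :=
  (1 / (b.val : ℝ) + 1 / ((q : ℝ) - b.val)) / 2

lemma rr_nonneg (q : ℕ) [NeZero q] (b : ZMod q) : 0 ≤ rr q b := by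
  have h : (b.val : ℝ) < q := by exact_mod_cast ZMod.val_lt b
  have : 0 < (q : ℝ) - b.val := by linarith
  unfold rr; positivity

lemma sin_lower (x : ℝ) (h0 : 0 ≤ x) (h1 : x ≤ 1) : 2 * x * (1 - x) ≤ Real.sin (Real.pi * x) := by
  have hpi := Real.pi_pos
  rcases le_total x (1 / 2) with h | h
  · have := Real.mul_le_sin (x := Real.pi * x) (by positivity) (by nlinarith)
    have e : 2 / Real.pi * (Real.pi * x) = 2 * x := by field_simp
    nlinarith
  · have := Real.mul_le_sin (x := Real.pi * (1 - x)) (mul_nonneg hpi.le (by linarith)) (by nlinarith)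
    have e : 2 / Real.pi * (Real.pi * (1 - x)) = 2 * (1 - x) := by field_simp
    have e2 : Real.sin (Real.pi * (1 - x)) = Real.sin (Real.pi * x) := by
      rw [← Real.sin_pi_sub]; congr 1; ring
    nlinarith

lemma norm_char_sub_one (q : ℕ) [NeZero q] (b : ZMod q) :
    4 * ((b.val : ℝ) / q) * (1 - (b.val : ℝ) / q) ≤ ‖ZMod.stdAddChar b - 1‖ := by
  have hq : (0 : ℝ) < q := by exact_mod_cast Nat.pos_of_ne_zero (NeZero.ne q)
  have hlt : (b.val : ℝ) < q := by exact_mod_cast ZMod.val_lt b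
  have e : ZMod.stdAddChar b =
      Complex.exp (Complex.I * ((2 * Real.pi * ((b.val : ℝ) / q) : ℝ) : ℂ)) := by
    have := ZMod.stdAddChar_coe (N := q) (b.val : ℤ)
    rw [Int.cast_natCast, ZMod.natCast_zmod_val] at this
    rw [this]; congr 1; push_cast; ring
  rw [e, Complex.norm_exp_I_mul_ofReal_sub_one]
  have hs := sin_lower ((b.val : ℝ) / q) (by positivity) (by rw [div_le_one hq]; exact hlt.le)
  have e3 : 2 * Real.pi * ((b.val : ℝ) / q) / 2 = Real.pi * ((b.val : ℝ) / q) := by ring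
  rw [e3, Real.norm_eq_abs]
  refine le_trans ?_ (le_abs_self _)
  linarith

lemma geo_bound (q : ℕ) [NeZero q] (b : ZMod q) (hb : b ≠ 0) (a : ℕ) :
    ‖∑ n ∈ range a, ZMod.stdAddChar ((n : ZMod q) * b)‖ ≤ q * rr q b := by
  have hq : (0 : ℝ) < q := by exact_mod_cast Nat.pos_of_ne_zero (NeZero.ne q)
  have hlt : (b.val : ℝ) < q := by exact_mod_cast ZMod.val_lt b
  have hv : (0 : ℝ) < b.val := by
    have : b.val ≠ 0 := by rwa [Ne, ZMod.val_eq_zero]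
    exact_mod_cast Nat.pos_of_ne_zero this
  have e : ∀ n : ℕ, ZMod.stdAddChar ((n : ZMod q) * b) = (ZMod.stdAddChar b) ^ n := by
    intro n
    rw [← nsmul_eq_mul, AddChar.map_nsmul_eq_pow]
  simp_rw [e]
  have hg := geom_sum_mul (ZMod.stdAddChar b) a
  have hn : ‖ZMod.stdAddChar b‖ = 1 := AddChar.norm_apply _ _
  have h2 : ‖∑ n ∈ range a, (ZMod.stdAddChar b) ^ n‖ * ‖ZMod.stdAddChar b - 1‖ ≤ 2 := by
    rw [← norm_mul, hg]
    refine (norm_sub_le _ _).trans ?_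
    rw [norm_pow, hn]; norm_num
  have h3 := norm_char_sub_one q b
  set v : ℝ := (b.val : ℝ)
  have hpos : 0 < 4 * (v / q) * (1 - v / q) := by
    have : v / q < 1 := by rwa [div_lt_one hq]
    have : 0 < 1 - v / q := by linarith
    positivity
  have h4 : ‖∑ n ∈ range a, (ZMod.stdAddChar b) ^ n‖ * (4 * (v / q) * (1 - v / q)) ≤ 2 :=
    le_trans (mul_le_mul_of_nonneg_left h3 (norm_nonneg _)) h2
  rw [← le_div_iff₀ hpos] at h4
  refine h4.trans (le_of_eq ?_)
  unfold rr
  change _ = (q : ℝ) * ((1 / v + 1 / (q - v)) / 2)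
  have h5 : (q : ℝ) - v ≠ 0 := by linarith
  field_simp
  ring

lemma sum_rr (q : ℕ) [Fact q.Prime] :
    ∑ b ∈ univ.erase (0 : ZMod q), rr q b ≤ 1 + Real.log q := by
  obtain ⟨k, rfl⟩ : ∃ k, q = k + 1 := Nat.exists_eq_succ_of_ne_zero (Fact.out (p := q.Prime)).ne_zero
  have h1 : ∑ b ∈ univ.erase (0 : ZMod (k+1)), rr (k+1) b
      = ∑ i ∈ range k, (1 / ((i : ℝ) + 1) + 1 / ((k : ℝ) - i)) / 2 := by
    have : ∑ b ∈ univ.erase (0 : ZMod (k+1)), rr (k+1) b =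
        ∑ i : Fin k, rr (k+1) (show ZMod (k+1) from i.succ) := by
      have h0 := Finset.add_sum_erase univ (fun b : ZMod (k+1) => rr (k+1) b) (mem_univ 0)
      have h2 : ∑ b : ZMod (k+1), rr (k+1) b = _ := Fin.sum_univ_succ (fun b : Fin (k+1) => rr (k+1) b)
      have h3 := h0.trans h2
      exact add_left_cancel h3
    rw [this, ← Fin.sum_univ_eq_sum_range (fun i => (1 / ((i : ℝ) + 1) + 1 / ((k : ℝ) - i)) / 2)]
    refine Finset.sum_congr rfl fun i _ => ?_
    unfold rr
    have : ZMod.val (show ZMod (k+1) from i.succ) = i.1 + 1 := rfl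
    rw [this]; push_cast
    congr 3; ring
  have h2 : ∑ i ∈ range k, 1 / ((k : ℝ) - i) = ∑ i ∈ range k, 1 / ((i : ℝ) + 1) := by
    rw [← Finset.sum_range_reflect]
    refine Finset.sum_congr rfl fun i hi => ?_
    have := mem_range.1 hi
    rw [Nat.cast_sub (by omega), Nat.cast_sub (by omega)]
    congr 1; push_cast; ring
  rw [h1, ← Finset.sum_div, Finset.sum_add_distrib, h2]
  have h3 := harmonic_le_one_add_log k
  have h4 : ((harmonic k : ℚ) : ℝ) = ∑ i ∈ range k, 1 / ((i : ℝ) + 1) := by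
    simp [harmonic]
  rw [h4] at h3
  have h5 : Real.log k ≤ Real.log ((k + 1 : ℕ) : ℝ) := by
    rcases Nat.eq_zero_or_pos k with rfl | hk
    · simp
    · exact Real.log_le_log (by exact_mod_cast hk) (by push_cast; linarith)
  linarith

/-- Fourier coefficients of the indicator of `{0, …, a-1}` in `ZMod q`. -/
noncomputable def fc (q : ℕ) [NeZero q] (a : ℕ) (h : ZMod q) : ℂ :=
  (∑ k ∈ range a, ZMod.stdAddChar ((k : ZMod q) * (-h))) / q

lemma fc_zero (q : ℕ) [NeZero q] (a : ℕ) : fc q a 0 = (a : ℂ) / q := by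
  simp [fc]

lemma norm_fc_le (q : ℕ) [NeZero q] (a : ℕ) (h : ZMod q) (hh : h ≠ 0) : ‖fc q a h‖ ≤ rr q h := by
  have hq : (0 : ℝ) < q := by exact_mod_cast Nat.pos_of_ne_zero (NeZero.ne q)
  have h1 := geo_bound q h hh a
  have h2 : ∑ k ∈ range a, ZMod.stdAddChar ((k : ZMod q) * (-h)) =
      (starRingEnd ℂ) (∑ k ∈ range a, ZMod.stdAddChar ((k : ZMod q) * h)) := by
    rw [map_sum]
    refine Finset.sum_congr rfl fun k _ => ?_
    rw [mul_neg, AddChar.map_neg_eq_conj]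
  rw [fc, norm_div, h2, RCLike.norm_conj, Complex.norm_natCast, div_le_iff₀ hq, mul_comm]
  exact h1

lemma fc_expand (q : ℕ) [NeZero q] (a : ℕ) (ha : a ≤ q) (r : ZMod q) :
    ∑ h : ZMod q, fc q a h * ZMod.stdAddChar (h * r) = if r.val < a then 1 else 0 := by
  have hq : (q : ℂ) ≠ 0 := by exact_mod_cast NeZero.ne q
  have h1 : ∀ h : ZMod q, fc q a h * ZMod.stdAddChar (h * r) =
      (∑ k ∈ range a, ZMod.stdAddChar (h * (r - (k : ZMod q)))) / q := by
    intro h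
    rw [fc, div_mul_eq_mul_div, Finset.sum_mul]
    congr 1
    refine Finset.sum_congr rfl fun k _ => ?_
    rw [← AddChar.map_add_eq_mul]; congr 1; ring
  simp_rw [h1]
  rw [← Finset.sum_div, Finset.sum_comm]
  simp_rw [AddChar.sum_mulShift _ (ZMod.isPrimitive_stdAddChar q)]
  have h2 : ∀ k ∈ range a, ((if r - (k : ZMod q) = 0 then Fintype.card (ZMod q) else 0 : ℕ) : ℂ) =
      if r.val = k then (q : ℂ) else 0 := by
    intro k hk
    have hk' : k < q := (mem_range.1 hk).trans_le ha
    have : r - (k : ZMod q) = 0 ↔ r.val = k := by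
      rw [sub_eq_zero]
      constructor
      · rintro rfl; exact ZMod.val_cast_of_lt hk'
      · rintro rfl; simp
    simp only [this, ZMod.card]
    split_ifs <;> simp
  push_cast at h2 ⊢
  rw [Finset.sum_congr rfl h2, Finset.sum_ite_eq]
  simp only [mem_range]
  split_ifs <;> simp [hq]

/-- Bound for `∑_{n<N} ψ(n b)`. -/
noncomputable def gg (q N : ℕ) (b : ZMod q) : ℝ := if b = 0 then N else q * rr q b

lemma gg_nonneg (q N : ℕ) [NeZero q] (b : ZMod q) : 0 ≤ gg q N b := by
  unfold gg
  have := rr_nonneg q b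
  split_ifs <;> positivity

lemma norm_sum_le_gg (q N : ℕ) [NeZero q] (b : ZMod q) :
    ‖∑ n ∈ range N, ZMod.stdAddChar ((n : ZMod q) * b)‖ ≤ gg q N b := by
  unfold gg
  split_ifs with h
  · simp [h]
  · exact geo_bound q b h N

lemma char_sum (q : ℕ) [NeZero q] {ι : Type*} (S : Finset ι) (f : ι → ZMod q) :
    ZMod.stdAddChar (∑ j ∈ S, f j) = ∏ j ∈ S, ZMod.stdAddChar (f j) := by
  classical
  induction S using Finset.induction with
  | empty => simp
  | insert i S hi ih => rw [Finset.sum_insert hi, Finset.prod_insert hi, AddChar.map_add_eq_mul, ih]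

lemma count_bound (q N s : ℕ) [NeZero q] (z : Fin s → ZMod q) (a : Fin s → ℕ)
    (ha : ∀ j, a j ≤ q) :
    |((univ.filter fun n : Fin N => ∀ j, (((n : ℕ) : ZMod q) * z j).val < a j).card : ℝ)
      - N * ∏ j, ((a j : ℝ) / q)| ≤
    ∑ h ∈ univ.erase (0 : Fin s → ZMod q), (∏ j, ‖fc q (a j) (h j)‖) * gg q N (∑ j, h j * z j) := by
  have h1 : ((univ.filter fun n : Fin N => ∀ j, (((n : ℕ) : ZMod q) * z j).val < a j).card : ℂ)
      = ∑ n ∈ range N, ∏ j, ∑ h : ZMod q, fc q (a j) h * ZMod.stdAddChar (h * ((n : ZMod q) * z j)) := by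
    simp_rw [fun j => fc_expand q (a j) (ha j)]
    rw [← Fin.sum_univ_eq_sum_range
      (fun n => ∏ j, if (((n : ℕ) : ZMod q) * z j).val < a j then (1 : ℂ) else 0)]
    rw [Finset.card_filter]
    push_cast
    refine Finset.sum_congr rfl fun n _ => ?_
    rw [Finset.prod_ite_zero]
    simp
  have h2 : ∀ n : ℕ, ∏ j, ∑ h : ZMod q, fc q (a j) h * ZMod.stdAddChar (h * ((n : ZMod q) * z j))
      = ∑ h : Fin s → ZMod q, (∏ j, fc q (a j) (h j)) *
        ZMod.stdAddChar ((n : ZMod q) * ∑ j, h j * z j) := by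
    intro n
    rw [Fintype.prod_sum]
    refine Finset.sum_congr rfl fun h _ => ?_
    rw [Finset.prod_mul_distrib, Finset.mul_sum, char_sum]
    congr 1
    refine Finset.prod_congr rfl fun j _ => ?_
    congr 1; ring
  simp_rw [h2] at h1
  rw [Finset.sum_comm] at h1
  simp_rw [← Finset.mul_sum] at h1
  rw [← Finset.add_sum_erase univ _ (mem_univ (0 : Fin s → ZMod q))] at h1
  have h3 : (∏ j, fc q (a j) ((0 : Fin s → ZMod q) j)) *
      ∑ n ∈ range N, ZMod.stdAddChar ((n : ZMod q) * ∑ j, (0 : Fin s → ZMod q) j * z j)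
      = ((N * ∏ j, ((a j : ℝ) / q) : ℝ) : ℂ) := by
    simp [fc_zero, mul_comm]
  rw [h3] at h1
  have h4 : |((univ.filter fun n : Fin N => ∀ j, (((n : ℕ) : ZMod q) * z j).val < a j).card : ℝ)
      - N * ∏ j, ((a j : ℝ) / q)| =
      ‖((univ.filter fun n : Fin N => ∀ j, (((n : ℕ) : ZMod q) * z j).val < a j).card : ℂ)
        - ((N * ∏ j, ((a j : ℝ) / q) : ℝ) : ℂ)‖ := by
    rw [← Complex.ofReal_natCast, ← Complex.ofReal_sub, Complex.norm_real, Real.norm_eq_abs]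
  rw [h4, h1, add_sub_cancel_left]
  refine (norm_sum_le _ _).trans (Finset.sum_le_sum fun h _ => ?_)
  rw [norm_mul, norm_prod]
  exact mul_le_mul_of_nonneg_left (norm_sum_le_gg q N _) (by positivity)

lemma avg_lin (q s : ℕ) [Fact q.Prime] (h : Fin s → ZMod q) (hh : h ≠ 0) (G : ZMod q → ℝ) :
    (q : ℝ) * ∑ z : Fin s → ZMod q, G (∑ j, h j * z j) =
      Fintype.card (Fin s → ZMod q) * ∑ b, G b := by
  obtain ⟨i, hi⟩ := Function.ne_iff.1 hh
  simp only [Pi.zero_apply] at hi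
  have h1 : ∀ c : ZMod q, ∑ z : Fin s → ZMod q, G (∑ j, h j * z j) =
      ∑ z : Fin s → ZMod q, G ((∑ j, h j * z j) + c) := by
    intro c
    rw [← Equiv.sum_comp (Equiv.addRight (Pi.single i (c / h i) : Fin s → ZMod q))]
    refine Finset.sum_congr rfl fun z _ => ?_
    congr 1
    simp only [Equiv.coe_addRight, Pi.add_apply, mul_add, Finset.sum_add_distrib]
    congr 1
    rw [Finset.sum_eq_single i]
    · simp; field_simp
    · intro j _ hj; simp [hj]
    · simp
  have h2 : (q : ℝ) * ∑ z : Fin s → ZMod q, G (∑ j, h j * z j) =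
      ∑ c : ZMod q, ∑ z : Fin s → ZMod q, G ((∑ j, h j * z j) + c) := by
    rw [← Finset.sum_congr rfl (fun c _ => h1 c), Finset.sum_const, Finset.card_univ, ZMod.card,
      nsmul_eq_mul]
  rw [h2, Finset.sum_comm]
  have h3 : ∀ z : Fin s → ZMod q, ∑ c : ZMod q, G ((∑ j, h j * z j) + c) = ∑ b, G b := by
    intro z
    exact Equiv.sum_comp (Equiv.addLeft (∑ j, h j * z j)) G
  simp_rw [h3]
  rw [Finset.sum_const, Finset.card_univ, nsmul_eq_mul]

lemma exists_good (q s N : ℕ) [Fact q.Prime] (hN : N ≤ q) (ρ : Fin s → ZMod q → ℝ)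
    (hρ : ∀ j b, 0 ≤ ρ j b) :
    ∃ z : Fin s → ZMod q, ∑ h ∈ univ.erase (0 : Fin s → ZMod q),
      (∏ j, ρ j (h j)) * gg q N (∑ j, h j * z j) ≤ (2 + Real.log q) * ∏ j, ∑ b, ρ j b := by
  have hq : (0 : ℝ) < q := by exact_mod_cast (Fact.out (p := q.Prime)).pos
  have hG : ∑ b, gg q N b ≤ q * (2 + Real.log q) := by
    rw [← Finset.add_sum_erase univ _ (mem_univ (0 : ZMod q))]
    have e : ∑ b ∈ univ.erase (0 : ZMod q), gg q N b = q * ∑ b ∈ univ.erase (0 : ZMod q), rr q b := by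
      rw [Finset.mul_sum]
      refine Finset.sum_congr rfl fun b hb => ?_
      simp [gg, (mem_erase.1 hb).1]
    rw [e]
    have h1 := mul_le_mul_of_nonneg_left (sum_rr q) hq.le
    have h2 : gg q N 0 = N := by simp [gg]
    have h3 : (N : ℝ) ≤ q := by exact_mod_cast hN
    rw [h2]; linarith
  have hP : ∀ h : Fin s → ZMod q, 0 ≤ ∏ j, ρ j (h j) := fun h => Finset.prod_nonneg fun j _ => hρ _ _
  have key : ∑ z : Fin s → ZMod q, ∑ h ∈ univ.erase (0 : Fin s → ZMod q),
      (∏ j, ρ j (h j)) * gg q N (∑ j, h j * z j) ≤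
      ∑ z : Fin s → ZMod q, (2 + Real.log q) * ∏ j, ∑ b, ρ j b := by
    rw [Finset.sum_comm, Finset.sum_const, Finset.card_univ, nsmul_eq_mul, Fintype.prod_sum,
      Finset.mul_sum, Finset.mul_sum]
    have h0 : 0 ≤ 2 + Real.log q := by
      have := Real.log_natCast_nonneg q
      linarith
    refine le_trans (Finset.sum_le_sum fun h hh => ?_)
      (Finset.sum_le_sum_of_subset_of_nonneg (Finset.erase_subset (0 : Fin s → ZMod q) univ)
        fun h _ _ => mul_nonneg (Nat.cast_nonneg _) (mul_nonneg h0 (hP h)))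
    rw [← Finset.mul_sum]
    have h1 := avg_lin q s h (mem_erase.1 hh).1 (gg q N)
    have h2 : ∑ z : Fin s → ZMod q, gg q N (∑ j, h j * z j) ≤
        Fintype.card (Fin s → ZMod q) * (2 + Real.log q) := by
      have := mul_le_mul_of_nonneg_left hG (Nat.cast_nonneg (α := ℝ) (Fintype.card (Fin s → ZMod q)))
      rw [← h1] at this
      refine le_of_mul_le_mul_left (this.trans (le_of_eq ?_)) hq
      ring
    calc _ ≤ _ := mul_le_mul_of_nonneg_left h2 (hP h)
      _ = _ := by ring
  obtain ⟨z, _, hz⟩ := Finset.exists_le_of_sum_le univ_nonempty key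
  exact ⟨z, hz⟩

lemma abs_prod_diff {ι : Type*} (S : Finset ι) (a b : ι → ℝ) (ha : ∀ i, |a i| ≤ 1)
    (hb : ∀ i, |b i| ≤ 1) : |∏ i ∈ S, a i - ∏ i ∈ S, b i| ≤ ∑ i ∈ S, |a i - b i| := by
  classical
  induction S using Finset.induction with
  | empty => simp
  | insert i S hi ih =>
    rw [Finset.prod_insert hi, Finset.prod_insert hi, Finset.sum_insert hi]
    have e : a i * ∏ i ∈ S, a i - b i * ∏ i ∈ S, b i =
      (a i - b i) * ∏ i ∈ S, a i + b i * (∏ i ∈ S, a i - ∏ i ∈ S, b i) := by ring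
    rw [e]
    refine (abs_add_le _ _).trans ?_
    rw [abs_mul, abs_mul]
    have h1 : |∏ i ∈ S, a i| ≤ 1 := by
      rw [Finset.abs_prod]
      exact Finset.prod_le_one (fun _ _ => abs_nonneg _) fun i _ => ha i
    have h2 := mul_le_mul_of_nonneg_left h1 (abs_nonneg (a i - b i))
    have h3 := mul_le_mul_of_nonneg_right (hb i) (abs_nonneg (∏ i ∈ S, a i - ∏ i ∈ S, b i))
    linarith

lemma growth (g : ℕ → ℝ) (hg : ∀ j, 0 ≤ g j) (hs : Summable g) (δ : ℝ) (hδ : 0 < δ) :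
    ∃ C : ℝ, 0 < C ∧ ∀ (s : ℕ) (L : ℝ), 0 ≤ L →
      L * ∏ j ∈ range s, (1 + g j * L) ≤ C * Real.exp (δ * L) := by
  obtain ⟨J, hJ⟩ : ∃ J : ℕ, ∑' k, g (k + J) < δ / 2 :=
    ((tendsto_sum_nat_add g).eventually_lt_const (by positivity)).exists
  set ε : ℝ := δ / (2 * (J + 1)) with hε
  have hε0 : 0 < ε := by positivity
  refine ⟨(1 / ε) * ∏ j ∈ range J, (1 + g j / ε), ?_, ?_⟩
  · refine mul_pos (by positivity) (Finset.prod_pos fun j _ => ?_)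
    have := hg j; positivity
  intro s L hL
  have hex : ∀ x : ℝ, 0 ≤ x → 1 + x * L ≤ (1 + x / ε) * Real.exp (ε * L) := by
    intro x hx
    have h1 := Real.add_one_le_exp (ε * L)
    have h2 : 1 + x * L ≤ (1 + x / ε) * (ε * L + 1) := by
      have : (1 + x / ε) * (ε * L + 1) = 1 + x * L + (ε * L + x / ε) := by field_simp; ring
      rw [this]
      have : 0 ≤ ε * L + x / ε := by positivity
      linarith
    exact h2.trans (mul_le_mul_of_nonneg_left h1 (by positivity))
  have hL' : L ≤ 1 / ε * Real.exp (ε * L) := by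
    have h1 := Real.add_one_le_exp (ε * L)
    rw [one_div, inv_mul_eq_div, le_div_iff₀ hε0]; linarith
  have hpos : ∀ j, 0 ≤ 1 + g j * L := fun j => by have := hg j; positivity
  have h1 : ∏ j ∈ range s, (1 + g j * L) ≤ ∏ j ∈ range (J + s), (1 + g j * L) := by
    rw [add_comm J s, Finset.prod_range_add]
    refine le_mul_of_one_le_right (Finset.prod_nonneg fun j _ => hpos j) ?_
    refine (Finset.prod_const_one (s := range J) (M := ℝ)).symm.le.trans ?_
    refine Finset.prod_le_prod (fun _ _ => zero_le_one) fun j _ => ?_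
    have := mul_nonneg (hg (s + j)) hL
    linarith
  have h2 : ∏ j ∈ range J, (1 + g j * L) ≤
      (∏ j ∈ range J, (1 + g j / ε)) * Real.exp (J * (ε * L)) := by
    calc _ ≤ ∏ j ∈ range J, ((1 + g j / ε) * Real.exp (ε * L)) :=
          Finset.prod_le_prod (fun j _ => hpos j) fun j _ => hex _ (hg j)
      _ = _ := by
          rw [Finset.prod_mul_distrib, Finset.prod_const, Finset.card_range, ← Real.exp_nat_mul]
  have h3 : ∏ j ∈ range s, (1 + g (J + j) * L) ≤ Real.exp (δ / 2 * L) := by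
    calc _ ≤ ∏ j ∈ range s, Real.exp (g (J + j) * L) :=
          Finset.prod_le_prod (fun j _ => hpos _) fun j _ => by
            have := Real.add_one_le_exp (g (J + j) * L); linarith
      _ = Real.exp ((∑ j ∈ range s, g (j + J)) * L) := by
          rw [← Real.exp_sum, Finset.sum_mul]; simp_rw [add_comm J]
      _ ≤ _ := by
          refine Real.exp_le_exp.2 (mul_le_mul_of_nonneg_right ?_ hL)
          refine le_trans ?_ hJ.le
          exact ((summable_nat_add_iff J).2 hs).sum_le_tsum _ (fun j _ => hg _)
  rw [Finset.prod_range_add] at h1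
  have hP : 0 ≤ ∏ j ∈ range J, (1 + g j / ε) :=
    Finset.prod_nonneg fun j _ => by have := hg j; positivity
  calc _ ≤ (1 / ε * Real.exp (ε * L)) * (((∏ j ∈ range J, (1 + g j / ε)) *
        Real.exp (J * (ε * L))) * Real.exp (δ / 2 * L)) := by
        refine mul_le_mul hL' (h1.trans ?_) (Finset.prod_nonneg fun j _ => hpos j) (by positivity)
        exact mul_le_mul h2 h3 (Finset.prod_nonneg fun j _ => hpos _) (by positivity)
    _ = (1 / ε * ∏ j ∈ range J, (1 + g j / ε)) *
        (Real.exp (ε * L) * Real.exp (J * (ε * L)) * Real.exp (δ / 2 * L)) := by ring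
    _ = _ := by
        rw [← Real.exp_add, ← Real.exp_add]
        congr 2
        rw [hε]; field_simp; ring

lemma fc_full (q : ℕ) [NeZero q] (h : ZMod q) (hh : h ≠ 0) : fc q q h = 0 := by
  have e : ∀ n : ℕ, ZMod.stdAddChar ((n : ZMod q) * (-h)) = (ZMod.stdAddChar (-h)) ^ n := by
    intro n
    rw [← nsmul_eq_mul, AddChar.map_nsmul_eq_pow]
  have h1 := geom_sum_mul (ZMod.stdAddChar (-h)) q
  rw [← e q] at h1
  simp only [CharP.cast_eq_zero, zero_mul, AddChar.map_zero_eq_one, sub_self] at h1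
  have h2 : ZMod.stdAddChar (-h) - 1 ≠ 0 := by
    rw [sub_ne_zero, ← (ZMod.stdAddChar (N := q)).map_zero_eq_one]
    intro h3
    exact hh (neg_eq_zero.1 (ZMod.injective_stdAddChar h3))
  rw [fc]
  simp_rw [e]
  rw [(mul_eq_zero.1 h1).resolve_right h2, zero_div]

lemma card_mul_prod_le (γ : ℕ → ℝ) (hγ : ∀ j, 1 ≤ j → 0 ≤ γ j) (s : ℕ) (u : Finset (Fin s)) (L : ℝ)
    (hL : 2 ≤ L) : weightOf γ u * u.card ≤ ∏ j ∈ range s, (1 + γ (j + 1) * L) := by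
  have hg : ∀ j, 0 ≤ γ (j + 1) := fun j => hγ _ (by omega)
  have h1 : (u.card : ℝ) ≤ 2 ^ u.card := by exact_mod_cast (Nat.lt_two_pow_self).le
  have hw : 0 ≤ weightOf γ u := Finset.prod_nonneg fun j _ => hg _
  refine (mul_le_mul_of_nonneg_left h1 hw).trans ?_
  rw [weightOf, ← Finset.prod_const, ← Finset.prod_mul_distrib,
    ← Fin.prod_univ_eq_prod_range (fun j => 1 + γ (j + 1) * L), ← Finset.prod_ite_mem_eq u]
  refine Finset.prod_le_prod (fun j _ => ?_) fun j _ => ?_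
  · have := hg j
    split_ifs <;> positivity
  · have := hg j
    split_ifs <;> nlinarith

lemma main_bound (γ : ℕ → ℝ) (hγ : ∀ j, 1 ≤ j → 0 ≤ γ j) (N s q : ℕ) [Fact q.Prime]
    (hN : 0 < N) (hNq : N ≤ q) :
    ∃ x : Fin N → Fin s → ℝ, (∀ n j, x n j ∈ Set.Ico (0:ℝ) 1) ∧
      wStarDisc γ x ≤ 2 * ((2 + Real.log q) *
        ∏ j ∈ range s, (1 + γ (j + 1) * (2 + Real.log q))) / N := by
  have hg : ∀ j, 0 ≤ γ (j + 1) := fun j => hγ _ (by omega)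
  have hq : (0 : ℝ) < q := by exact_mod_cast (Fact.out (p := q.Prime)).pos
  have hN' : (0 : ℝ) < N := by exact_mod_cast hN
  have hNq' : (N : ℝ) ≤ q := by exact_mod_cast hNq
  have hlog := Real.log_natCast_nonneg q
  set L : ℝ := 2 + Real.log q with hLdef
  have hL : 2 ≤ L := by linarith
  set PP : ℝ := ∏ j ∈ range s, (1 + γ (j + 1) * L) with hPP
  have hPP0 : 0 ≤ PP := Finset.prod_nonneg fun j _ => by have := hg j; positivity
  let ρ : Fin s → ZMod q → ℝ := fun j b =>
    if b = 0 then 1 + γ (j.1 + 1) else γ (j.1 + 1) * rr q b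
  have hρ : ∀ j b, 0 ≤ ρ j b := by
    intro j b
    have := hg j
    have := rr_nonneg q b
    simp only [ρ]; split_ifs <;> positivity
  have hρsum : ∏ j, ∑ b, ρ j b ≤ PP := by
    rw [hPP, ← Fin.prod_univ_eq_prod_range (fun j => 1 + γ (j + 1) * L)]
    refine Finset.prod_le_prod (fun j _ => Finset.sum_nonneg fun b _ => hρ j b) fun j _ => ?_
    rw [← Finset.add_sum_erase univ _ (mem_univ (0 : ZMod q))]
    have e : ∑ b ∈ univ.erase (0 : ZMod q), ρ j b =
        γ (j.1 + 1) * ∑ b ∈ univ.erase (0 : ZMod q), rr q b := by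
      rw [Finset.mul_sum]
      refine Finset.sum_congr rfl fun b hb => ?_
      simp [ρ, (mem_erase.1 hb).1]
    have e0 : ρ j 0 = 1 + γ (j.1 + 1) := by simp [ρ]
    rw [e, e0]
    have := mul_le_mul_of_nonneg_left (sum_rr q) (hg j.1)
    rw [hLdef]; linarith
  obtain ⟨z, hz⟩ := exists_good q s N hNq ρ hρ
  have hz' := hz.trans (mul_le_mul_of_nonneg_left hρsum (by linarith : (0:ℝ) ≤ 2 + Real.log q))
  rw [← hLdef] at hz'
  refine ⟨fun n j => ((((n : ℕ) : ZMod q) * z j).val : ℝ) / q, ?_, ?_⟩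
  · intro n j
    refine ⟨by positivity, ?_⟩
    rw [div_lt_one hq]
    exact_mod_cast ZMod.val_lt _
  refine Real.sSup_le ?_ (by positivity)
  rintro d ⟨y, hy, u, -, rfl⟩
  set t := projPoint u y with ht
  have ht01 : ∀ j, 0 ≤ t j ∧ t j ≤ 1 := by
    intro j
    simp only [ht, projPoint]
    split_ifs
    · exact hy j
    · norm_num
  have ht1 : ∀ j, j ∉ u → t j = 1 := by
    intro j hj; simp [ht, projPoint, hj]
  let a : Fin s → ℕ := fun j => ⌈t j * q⌉₊
  have ha : ∀ j, a j ≤ q := by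
    intro j
    refine Nat.ceil_le.2 ?_
    nlinarith [ht01 j]
  have ha1 : ∀ j, j ∉ u → a j = q := by
    intro j hj; simp [a, ht1 j hj]
  have haq : ∀ j, (a j : ℝ) / q ≤ 1 := by
    intro j; rw [div_le_one hq]; exact_mod_cast ha j
  have hw : weightOf γ u = ∏ j, if j ∈ u then γ (j.1 + 1) else 1 := by
    rw [weightOf, Finset.prod_ite_mem_eq u]
  have hw0 : 0 ≤ weightOf γ u := Finset.prod_nonneg fun j _ => hg _
  have hset : (univ.filter fun n : Fin N => ∀ j, ((((n : ℕ) : ZMod q) * z j).val : ℝ) / q < t j)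
      = univ.filter fun n : Fin N => ∀ j, (((n : ℕ) : ZMod q) * z j).val < a j := by
    ext n
    simp only [mem_filter, mem_univ, true_and]
    refine forall_congr' fun j => ?_
    rw [div_lt_iff₀ hq, Nat.lt_ceil]
  have hA := count_bound q N s z a ha
  have hB : weightOf γ u * (∑ h ∈ univ.erase (0 : Fin s → ZMod q),
      (∏ j, ‖fc q (a j) (h j)‖) * gg q N (∑ j, h j * z j)) ≤ L * PP := by
    refine le_trans ?_ hz'
    rw [Finset.mul_sum]
    refine Finset.sum_le_sum fun h _ => ?_
    rw [← mul_assoc]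
    refine mul_le_mul_of_nonneg_right ?_ (gg_nonneg _ _ _)
    rw [hw, ← Finset.prod_mul_distrib]
    refine Finset.prod_le_prod (fun j _ => ?_) fun j _ => ?_
    · have := hg j
      split_ifs <;> positivity
    · have hgj := hg j
      by_cases h0 : h j = 0
      · have h5 : ‖fc q (a j) (h j)‖ ≤ 1 := by
          rw [h0, fc_zero, norm_div, Complex.norm_natCast, Complex.norm_natCast]
          exact haq j
        simp only [ρ, h0, if_true]
        rw [h0] at h5
        split_ifs <;> nlinarith
      · simp only [ρ, h0, if_false]
        split_ifs with hj
        · exact mul_le_mul_of_nonneg_left (norm_fc_le q _ _ h0) hgj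
        · rw [ha1 j hj, fc_full q _ h0]
          simp only [norm_zero, mul_zero]
          exact mul_nonneg hgj (rr_nonneg _ _)
  have hC : |∏ j, ((a j : ℝ) / q) - ∏ j, t j| ≤ u.card / N := by
    refine (abs_prod_diff univ _ _ (fun j => ?_) fun j => ?_).trans ?_
    · rw [abs_of_nonneg (by positivity)]; exact haq j
    · rw [abs_of_nonneg (ht01 j).1]; exact (ht01 j).2
    · have : ∀ j ∈ univ, |(a j : ℝ) / q - t j| ≤ if j ∈ u then 1 / (N : ℝ) else 0 := by
        intro j _
        split_ifs with hj
        · have h1 : t j * q ≤ a j := Nat.le_ceil _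
          have h2 : (a j : ℝ) < t j * q + 1 := Nat.ceil_lt_add_one (mul_nonneg (ht01 j).1 hq.le)
          have h3 : t j ≤ (a j : ℝ) / q := by rwa [le_div_iff₀ hq]
          rw [abs_of_nonneg (by linarith)]
          have h4 : (a j : ℝ) / q - t j ≤ 1 / q := by
            rw [sub_le_iff_le_add, div_le_iff₀ hq, add_mul, one_div, inv_mul_cancel₀ hq.ne']
            linarith
          exact h4.trans (one_div_le_one_div_of_le hN' hNq')
        · rw [ha1 j hj, ht1 j hj, div_self hq.ne']; simp
      refine (Finset.sum_le_sum this).trans (le_of_eq ?_)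
      rw [Finset.sum_ite_mem, Finset.univ_inter, Finset.sum_const, nsmul_eq_mul, mul_one_div]
  have hD := card_mul_prod_le γ hγ s u L hL
  rw [← hPP] at hD
  unfold localDisc
  rw [hset]
  set c : ℝ := ((univ.filter fun n : Fin N => ∀ j, (((n : ℕ) : ZMod q) * z j).val < a j).card : ℝ)
  set Q : ℝ := ∏ j, ((a j : ℝ) / q)
  set T : ℝ := ∏ j, t j
  have e : c / N - T = (c - N * Q) / N + (Q - T) := by field_simp; ring
  have hE : weightOf γ u * |c - N * Q| ≤ L * PP := (mul_le_mul_of_nonneg_left hA hw0).trans hB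
  calc weightOf γ u * |c / N - T| ≤ weightOf γ u * (|c - N * Q| / N + u.card / N) := by
        refine mul_le_mul_of_nonneg_left ?_ hw0
        rw [e]
        refine (abs_add_le _ _).trans (add_le_add (le_of_eq ?_) hC)
        rw [abs_div, abs_of_pos hN']
    _ = (weightOf γ u * |c - N * Q| + weightOf γ u * u.card) / N := by ring
    _ ≤ (L * PP + L * PP) / N := by
        refine div_le_div_of_nonneg_right (add_le_add hE ?_) hN'.le
        nlinarith
    _ = _ := by ring

/-- for summable nonnegative weights and any `δ > 0` there is `C > 0`
such that for every prime `p`, every `m ≥ 1` and every `s ≥ 1` there is a `p^m`-element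
point set in `[0,1)^s` with weighted star-discrepancy at most `C p^{-m(1-δ)}`. -/
theorem exists_point_set_wStarDisc_le (γ : ℕ → ℝ) (hγ : ∀ j, 1 ≤ j → 0 ≤ γ j)
    (hsum : Summable fun j => γ (j + 1)) (δ : ℝ) (hδ : 0 < δ) :
    ∃ C : ℝ, 0 < C ∧ ∀ p m s : ℕ, p.Prime → 1 ≤ m → 1 ≤ s →
      ∃ x : Fin (p ^ m) → Fin s → ℝ, (∀ n j, x n j ∈ Set.Ico (0:ℝ) 1) ∧
        wStarDisc γ x ≤ C * ((p : ℝ) ^ ((m : ℝ) * (1 - δ)))⁻¹ := by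
  obtain ⟨C, hC, hgr⟩ := growth (fun j => γ (j + 1)) (fun j => hγ _ (by omega)) hsum δ hδ
  refine ⟨2 * C * Real.exp (δ * 3), by positivity, ?_⟩
  intro p m s hp hm hs
  have hN : 0 < p ^ m := pow_pos hp.pos _
  obtain ⟨q, hq, hq1, hq2⟩ := Nat.exists_prime_lt_and_le_two_mul (p ^ m) hN.ne'
  have : Fact q.Prime := ⟨hq⟩
  obtain ⟨x, hx, hd⟩ := main_bound γ hγ (p ^ m) s q hN hq1.le
  refine ⟨x, hx, hd.trans ?_⟩
  have hq0 : (0 : ℝ) < q := by exact_mod_cast hq.pos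
  have hN' : (0 : ℝ) < ((p ^ m : ℕ) : ℝ) := by exact_mod_cast hN
  have hlog : Real.log q ≤ 1 + Real.log ((p ^ m : ℕ) : ℝ) := by
    have h1 : Real.log q ≤ Real.log (2 * ((p ^ m : ℕ) : ℝ)) :=
      Real.log_le_log hq0 (by exact_mod_cast hq2)
    rw [Real.log_mul (by norm_num) hN'.ne'] at h1
    have := Real.log_two_lt_d9
    linarith
  have hL0 : 0 ≤ 2 + Real.log q := by
    have := Real.log_natCast_nonneg q
    linarith
  have h1 := hgr s (2 + Real.log q) hL0
  have h2 : Real.exp (δ * (2 + Real.log q)) ≤ Real.exp (δ * 3) * ((p ^ m : ℕ) : ℝ) ^ δ := by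
    rw [Real.rpow_def_of_pos hN', ← Real.exp_add]
    refine Real.exp_le_exp.2 ?_
    nlinarith
  have h3 : ((p : ℝ) ^ ((m : ℝ) * (1 - δ)))⁻¹ = ((p ^ m : ℕ) : ℝ) ^ δ / ((p ^ m : ℕ) : ℝ) := by
    rw [Real.rpow_mul (Nat.cast_nonneg p), Real.rpow_natCast, ← Nat.cast_pow,
      Real.rpow_sub hN', Real.rpow_one, inv_div]
  rw [h3]
  calc _ ≤ 2 * (C * (Real.exp (δ * 3) * ((p ^ m : ℕ) : ℝ) ^ δ)) / ((p ^ m : ℕ) : ℝ) := by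
        refine div_le_div_of_nonneg_right (mul_le_mul_of_nonneg_left ?_ zero_le_two) hN'.le
        exact h1.trans (mul_le_mul_of_nonneg_left h2 hC.le)
    _ = _ := by ring
end

section
/- Let γ = (γ_j)_{j≥1} be positive weights such that ∑_{j≥1} exp(−c·γ_j^{−2}) < ∞ for some constant c > 0. Then there exists a constant C > 0 (depending only on γ) such that for all s, N ∈ ℕ one has disc_γ(N,s) ≤ C/√N. -/
open Finset

noncomputable def devi {Y : Type*} [Fintype Y] [DecidableEq Y] {N : ℕ} (ω : Fin N → Y) (A : Finset Y) : ℝ :=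
  ((univ.filter fun n => ω n ∈ A).card : ℝ) - N * ((A.card : ℝ) / Fintype.card Y)

lemma devi_sdiff {Y : Type*} [Fintype Y] [DecidableEq Y] {N : ℕ} (ω : Fin N → Y) (A B : Finset Y)
    (h : A ⊆ B) : devi ω (B \ A) = devi ω B - devi ω A := by
  unfold devi
  have h1 : (univ.filter fun n => ω n ∈ B \ A) =
      (univ.filter fun n => ω n ∈ B) \ (univ.filter fun n => ω n ∈ A) := by
    ext n; simp
  have h2 : (univ.filter fun n => ω n ∈ A) ⊆ (univ.filter fun n => ω n ∈ B) := by
    intro n; simp; exact fun hn => h hn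
  rw [h1, Finset.cast_card_sdiff h2, Finset.cast_card_sdiff h]
  ring

lemma mgf_one {Y : Type*} [Fintype Y] [DecidableEq Y] [Nonempty Y] (A : Finset Y) (l p : ℝ)
    (hl : |l| ≤ 1) (hp : (A.card : ℝ) / Fintype.card Y ≤ p) :
    ∑ y : Y, Real.exp (l * ((if y ∈ A then 1 else 0) - (A.card : ℝ) / Fintype.card Y))
      ≤ Fintype.card Y * Real.exp (p * l ^ 2) := by
  set q : ℝ := (A.card : ℝ) / Fintype.card Y with hq
  have hY : (0 : ℝ) < Fintype.card Y := by exact_mod_cast Fintype.card_pos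
  have hq0 : 0 ≤ q := by positivity
  have hA : (A.card : ℝ) = q * Fintype.card Y := by rw [hq]; field_simp
  have e1 : ∀ y : Y, Real.exp (l * ((if y ∈ A then 1 else 0) - q)) =
      Real.exp (-(l * q)) * (1 + if y ∈ A then (Real.exp l - 1) else 0) := by
    intro y
    split_ifs
    · rw [show l * (1 - q) = -(l * q) + l by ring, Real.exp_add]; ring
    · simp
  simp_rw [e1]
  rw [← Finset.mul_sum, Finset.sum_add_distrib]
  simp only [Finset.sum_const, Finset.sum_ite_mem, Finset.univ_inter, nsmul_eq_mul, Finset.card_univ, mul_one]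
  rw [hA]
  have h2 : 1 + q * (Real.exp l - 1) ≤ Real.exp (q * (Real.exp l - 1)) := by
    linarith [Real.add_one_le_exp (q * (Real.exp l - 1))]
  have h3 := (abs_le.mp (Real.abs_exp_sub_one_sub_id_le hl)).2
  calc Real.exp (-(l * q)) * (Fintype.card Y + q * Fintype.card Y * (Real.exp l - 1))
      = Fintype.card Y * (Real.exp (-(l * q)) * (1 + q * (Real.exp l - 1))) := by ring
    _ ≤ Fintype.card Y * (Real.exp (-(l * q)) * Real.exp (q * (Real.exp l - 1))) := by gcongr
    _ = Fintype.card Y * Real.exp (q * (Real.exp l - 1 - l)) := by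
        rw [← Real.exp_add]; congr 2; ring
    _ ≤ Fintype.card Y * Real.exp (p * l ^ 2) := by
        refine mul_le_mul_of_nonneg_left (Real.exp_le_exp.2 ?_) hY.le
        exact mul_le_mul hp h3 (by linarith [Real.add_one_le_exp l]) (hq0.trans hp)

lemma mgf_all {Y : Type*} [Fintype Y] [DecidableEq Y] [Nonempty Y] {N : ℕ} (A : Finset Y) (l p : ℝ)
    (hl : |l| ≤ 1) (hp : (A.card : ℝ) / Fintype.card Y ≤ p) :
    ∑ ω : Fin N → Y, Real.exp (l * devi ω A)
      ≤ Fintype.card (Fin N → Y) * Real.exp (N * p * l ^ 2) := by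
  have e1 : ∀ ω : Fin N → Y, Real.exp (l * devi ω A) =
      ∏ n, Real.exp (l * ((if ω n ∈ A then 1 else 0) - (A.card : ℝ) / Fintype.card Y)) := by
    intro ω
    rw [← Real.exp_sum, ← Finset.mul_sum, Finset.sum_sub_distrib]
    simp [devi]
  simp_rw [e1]
  have := Finset.prod_univ_sum (fun _ : Fin N => (univ : Finset Y)) (fun _ y =>
    Real.exp (l * ((if y ∈ A then 1 else 0) - (A.card : ℝ) / Fintype.card Y)))
  rw [Fintype.piFinset_univ] at this
  rw [← this]
  simp only [prod_const, card_univ, Fintype.card_fin]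
  refine (pow_le_pow_left₀ (Finset.sum_nonneg fun _ _ => (Real.exp_pos _).le)
    (mgf_one A l p hl hp) N).trans (le_of_eq ?_)
  rw [mul_pow, ← Real.exp_nat_mul]
  simp [mul_assoc]

lemma tail {Y : Type*} [Fintype Y] [DecidableEq Y] [Nonempty Y] {N : ℕ} (A : Finset Y) (l p τ : ℝ)
    (hl0 : 0 ≤ l) (hl : l ≤ 1) (hp : (A.card : ℝ) / Fintype.card Y ≤ p) :
    ((univ.filter fun ω : Fin N → Y => τ < |devi ω A|).card : ℝ)
      ≤ Fintype.card (Fin N → Y) * (2 * Real.exp (N * p * l ^ 2 - l * τ)) := by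
  have h1 := mgf_all (N := N) A l p (by rwa [abs_of_nonneg hl0]) hp
  have h2 := mgf_all (N := N) A (-l) p (by rwa [abs_neg, abs_of_nonneg hl0]) hp
  have h3 : ((univ.filter fun ω : Fin N → Y => τ < |devi ω A|).card : ℝ) ≤
      ∑ ω : Fin N → Y, (Real.exp (l * devi ω A) + Real.exp (-l * devi ω A)) * Real.exp (-(l * τ)) := by
    rw [Finset.card_filter]
    push_cast
    refine Finset.sum_le_sum fun ω _ => ?_
    split_ifs with h
    · rw [add_mul, ← Real.exp_add, ← Real.exp_add]
      rcases le_abs.mp (le_refl |devi ω A|) with h' | h'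
      · have : 1 ≤ Real.exp (l * devi ω A + -(l * τ)) := by
          apply Real.one_le_exp; nlinarith
        linarith [Real.exp_pos (-l * devi ω A + -(l * τ))]
      · have : 1 ≤ Real.exp (-l * devi ω A + -(l * τ)) := by
          apply Real.one_le_exp; nlinarith
        linarith [Real.exp_pos (l * devi ω A + -(l * τ))]
    · positivity
  refine h3.trans ?_
  rw [← Finset.sum_mul, Finset.sum_add_distrib, sub_eq_add_neg, Real.exp_add]
  rw [neg_sq] at h2
  have := Real.exp_pos (-(l * τ))
  nlinarith

lemma prod_sub_prod_le {ι : Type*} (S : Finset ι) (x y : ι → ℝ) (h0 : ∀ j ∈ S, 0 ≤ x j)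
    (h1 : ∀ j ∈ S, x j ≤ y j) (h2 : ∀ j ∈ S, y j ≤ 1) :
    ∏ j ∈ S, y j - ∏ j ∈ S, x j ≤ ∑ j ∈ S, (y j - x j) := by
  classical
  induction S using Finset.induction_on with
  | empty => simp
  | insert a S ha ih =>
    rw [prod_insert ha, prod_insert ha, sum_insert ha]
    simp only [mem_insert, forall_eq_or_imp] at h0 h1 h2
    have i := ih h0.2 h1.2 h2.2
    have p1 : ∏ j ∈ S, y j ≤ 1 := prod_le_one (fun j hj => (h0.2 j hj).trans (h1.2 j hj)) h2.2
    have p2 : ∏ j ∈ S, x j ≤ ∏ j ∈ S, y j := prod_le_prod h0.2 h1.2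
    nlinarith [mul_nonneg (sub_nonneg.2 h1.1) (sub_nonneg.2 p1),
      mul_nonneg (sub_nonneg.2 p2) (sub_nonneg.2 (h1.1.trans h2.1))]

/-- level `k` grid indices -/
def Gk {s : ℕ} (u : Finset (Fin s)) (k : ℕ) : Finset (Fin s → ℕ) :=
  Fintype.piFinset fun j => if j ∈ u then range (2 ^ k + 1) else {2 ^ k}

def Bx {s : ℕ} (K k : ℕ) (b : Fin s → ℕ) : Finset (Fin s → Fin (2 ^ K)) :=
  univ.filter fun y => ∀ j, (y j).1 < b j * 2 ^ (K - k)

lemma mem_Gk {s : ℕ} {u : Finset (Fin s)} {k : ℕ} {b : Fin s → ℕ} :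
    b ∈ Gk u k ↔ (∀ j, b j ≤ 2 ^ k) ∧ ∀ j, j ∉ u → b j = 2 ^ k := by
  unfold Gk
  rw [Fintype.mem_piFinset]
  constructor
  · intro h
    refine ⟨fun j => ?_, fun j hj => ?_⟩
    · have := h j
      split_ifs at this
      · simp at this; omega
      · simp at this; omega
    · have := h j
      simpa [hj] using this
  · rintro ⟨h1, h2⟩ j
    split_ifs with hj
    · have := h1 j; simp; omega
    · simp [h2 j hj]

lemma card_Gk {s : ℕ} (u : Finset (Fin s)) (k : ℕ) : (Gk u k).card = (2 ^ k + 1) ^ u.card := by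
  unfold Gk
  rw [Fintype.card_piFinset]
  have : ∀ j : Fin s, (if j ∈ u then range (2 ^ k + 1) else {2 ^ k}).card =
      if j ∈ u then (2 ^ k + 1) else 1 := by
    intro j; split_ifs <;> simp
  simp [this, Finset.prod_ite_mem]

lemma vol_Bx {s : ℕ} {K k : ℕ} (hk : k ≤ K) {b : Fin s → ℕ} (hb : ∀ j, b j ≤ 2 ^ k) :
    ((Bx K k b).card : ℝ) / Fintype.card (Fin s → Fin (2 ^ K)) = ∏ j, (b j : ℝ) / 2 ^ k := by
  have e : Bx K k b = Fintype.piFinset fun j => univ.filter fun i : Fin (2 ^ K) =>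
      i.1 < b j * 2 ^ (K - k) := by
    ext y; simp [Bx]
  have hle : ∀ j, b j * 2 ^ (K - k) ≤ 2 ^ K := by
    intro j
    calc b j * 2 ^ (K - k) ≤ 2 ^ k * 2 ^ (K - k) := Nat.mul_le_mul_right _ (hb j)
      _ = 2 ^ K := by rw [← pow_add]; congr 1; omega
  rw [e, Fintype.card_piFinset]
  have c : ∀ j, (univ.filter fun i : Fin (2 ^ K) => i.1 < b j * 2 ^ (K - k)).card =
      b j * 2 ^ (K - k) := by
    intro j
    rw [Fin.card_filter_val_lt]
    exact min_eq_right (hle j)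
  simp only [c, Fintype.card_pi, Fintype.card_fin]
  push_cast
  rw [← Finset.prod_div_distrib]
  refine Finset.prod_congr rfl fun j _ => ?_
  have : (2 : ℝ) ^ K = 2 ^ k * 2 ^ (K - k) := by rw [← pow_add]; congr 1; omega
  rw [this]
  field_simp

lemma half_mem {s : ℕ} {u : Finset (Fin s)} {k : ℕ} {b : Fin s → ℕ} (hb : b ∈ Gk u (k + 1)) :
    (fun j => b j / 2) ∈ Gk u k := by
  rw [mem_Gk] at hb ⊢
  refine ⟨fun j => ?_, fun j hj => ?_⟩
  · have := hb.1 j; rw [pow_succ] at this; show b j / 2 ≤ _; omega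
  · have := hb.2 j hj; rw [pow_succ] at this; show b j / 2 = _; omega

lemma halfBx_subset {s : ℕ} {K k : ℕ} (hk : k + 1 ≤ K) (b : Fin s → ℕ) :
    Bx K k (fun j => b j / 2) ⊆ Bx K (k + 1) b := by
  intro y
  simp only [Bx, mem_filter, mem_univ, true_and]
  intro h j
  refine (h j).trans_le ?_
  rw [show K - k = (K - (k + 1)) + 1 by omega, pow_succ, mul_comm _ 2, ← mul_assoc]
  exact Nat.mul_le_mul_right _ (Nat.div_mul_le_self _ _)

lemma half_vol {s : ℕ} {u : Finset (Fin s)} {K k : ℕ} (hk : k + 1 ≤ K) {b : Fin s → ℕ}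
    (hb : b ∈ Gk u (k + 1)) :
    (((Bx K (k + 1) b \ Bx K k (fun j => b j / 2)).card : ℝ)) / Fintype.card (Fin s → Fin (2 ^ K))
      ≤ u.card / 2 ^ (k + 1) := by
  have hb' := half_mem hb
  rw [Finset.cast_card_sdiff (halfBx_subset hk b), sub_div, vol_Bx hk (mem_Gk.1 hb).1,
    vol_Bx (by omega) (mem_Gk.1 hb').1]
  refine (prod_sub_prod_le univ _ _ (fun j _ => by positivity) (fun j _ => ?_) (fun j _ => ?_)).trans ?_
  · rw [pow_succ, mul_comm, ← div_div]
    gcongr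
    exact Nat.cast_div_le
  · rw [div_le_one (by positivity)]
    exact_mod_cast (mem_Gk.1 hb).1 j
  · have : ∀ j : Fin s, ((b j : ℝ) / 2 ^ (k + 1) - ((b j / 2 : ℕ) : ℝ) / 2 ^ k) ≤
        if j ∈ u then 1 / 2 ^ (k + 1) else 0 := by
      intro j
      split_ifs with hj
      · have : (b j : ℝ) ≤ 2 * (b j / 2 : ℕ) + 1 := by
          exact_mod_cast (by omega : b j ≤ 2 * (b j / 2) + 1)
        rw [pow_succ, mul_comm, ← div_div, div_sub_div_same, ← div_div]
        gcongr
        linarith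
      · have h1 := (mem_Gk.1 hb).2 j hj
        have h2 := (mem_Gk.1 hb').2 j hj
        rw [show b j / 2 = 2 ^ k from h2, h1]; simp
    refine (Finset.sum_le_sum fun j _ => this j).trans (le_of_eq ?_)
    simp [Finset.sum_ite_mem, div_eq_mul_inv]

lemma dev_zero {s N : ℕ} {u : Finset (Fin s)} {K : ℕ} (ω : Fin N → Fin s → Fin (2 ^ K))
    {b : Fin s → ℕ} (hb : b ∈ Gk u 0) : devi ω (Bx K 0 b) = 0 := by
  unfold devi
  rw [vol_Bx (Nat.zero_le _) (mem_Gk.1 hb).1]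
  by_cases h : ∃ j, b j = 0
  · obtain ⟨j, hj⟩ := h
    have : ∏ j, (b j : ℝ) / 2 ^ 0 = 0 := Finset.prod_eq_zero (mem_univ j) (by simp [hj])
    rw [this]
    have : (univ.filter fun n => ω n ∈ Bx K 0 b) = ∅ := by
      ext n
      simp only [Bx, mem_filter, mem_univ, true_and, notMem_empty, iff_false]
      intro h; have := h j; simp [hj] at this
    simp [this]
  · push Not at h
    have h1 : ∀ j, b j = 1 := by
      intro j; have := h j; have := (mem_Gk.1 hb).1 j; simp at this; omega
    have : (univ.filter fun n => ω n ∈ Bx K 0 b) = univ := by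
      ext n
      simp [Bx, h1]
    simp [this, h1]

lemma chain {s N : ℕ} {u : Finset (Fin s)} {K L : ℕ} (hL : L ≤ K) (ω : Fin N → Fin s → Fin (2 ^ K))
    (τ : ℝ) (h : ∀ k < L, ∀ b ∈ Gk u (k + 1),
      |devi ω (Bx K (k + 1) b \ Bx K k (fun j => b j / 2))| ≤ τ * (3 / 4) ^ (k + 1)) :
    ∀ k ≤ L, ∀ b ∈ Gk u k, |devi ω (Bx K k b)| ≤ 3 * τ * (1 - (3 / 4) ^ k) := by
  intro k
  induction k with
  | zero => intro _ b hb; simp [dev_zero ω hb]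
  | succ k ih =>
    intro hk b hb
    have h1 := ih (by omega) _ (half_mem hb)
    have h2 := h k (by omega) b hb
    rw [devi_sdiff _ _ _ (halfBx_subset (by omega) b)] at h2
    rw [abs_le] at *
    rw [pow_succ] at *
    constructor <;> linarith

/-- bad set -/
def badSet {s : ℕ} (N K L : ℕ) (u : Finset (Fin s)) (τ : ℝ) : Set (Fin N → Fin s → Fin (2 ^ K)) :=
  {ω | ∃ k < L, ∃ b ∈ Gk u (k + 1),
    τ * (3 / 4) ^ (k + 1) < |devi ω (Bx K (k + 1) b \ Bx K k (fun j => b j / 2))|}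

lemma exp_num (d k : ℕ) (q : ℝ) (hd : 1 ≤ d) (hq : 16 * d + 8 ≤ q) :
    ((2 ^ (k + 1) + 1 : ℕ) : ℝ) ^ d * (2 * Real.exp (- (q * (9 / 8) ^ (k + 1)))) ≤
      Real.exp (-q) * (2 * (1 / 2) ^ (k + 1)) := by
  have h2e : (2 : ℝ) ≤ Real.exp 1 := by linarith [Real.add_one_le_exp (1 : ℝ)]
  have h1 : ((2 ^ (k + 1) + 1 : ℕ) : ℝ) ≤ Real.exp (2 * (k + 1)) := by
    have : (2 ^ (k + 1) + 1 : ℕ) ≤ 2 ^ (2 * (k + 1)) := by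
      have : 2 ^ (k + 2) ≤ 2 ^ (2 * (k + 1)) := Nat.pow_le_pow_right (by norm_num) (by omega)
      have h3 : 2 ^ (k + 2) = 2 ^ (k + 1) + 2 ^ (k + 1) := by ring
      have h4 : 1 ≤ 2 ^ (k + 1) := Nat.one_le_two_pow
      omega
    calc ((2 ^ (k + 1) + 1 : ℕ) : ℝ) ≤ ((2 ^ (2 * (k + 1)) : ℕ) : ℝ) := by exact_mod_cast this
      _ = 2 ^ (2 * (k + 1)) := by push_cast; ring
      _ ≤ (Real.exp 1) ^ (2 * (k + 1)) := by gcongr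
      _ = _ := by rw [← Real.exp_nat_mul]; push_cast; ring_nf
  have h5 : Real.exp (-((k : ℝ) + 1)) ≤ (1 / 2) ^ (k + 1) := by
    rw [one_div, inv_pow, Real.exp_neg]
    gcongr
    calc (2 : ℝ) ^ (k + 1) ≤ Real.exp 1 ^ (k + 1) := by gcongr
      _ = _ := by rw [← Real.exp_nat_mul]; push_cast; ring_nf
  have h6 : 1 + ((k : ℝ) + 1) * (1 / 8) ≤ (9 / 8) ^ (k + 1) := by
    have := one_add_mul_le_pow (a := (1 / 8 : ℝ)) (by norm_num) (k + 1)
    push_cast at this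
    refine this.trans (le_of_eq (by norm_num))
  have hd' : (1 : ℝ) ≤ d := by exact_mod_cast hd
  calc _ ≤ (Real.exp (2 * (k + 1))) ^ d * (2 * Real.exp (- (q * (1 + ((k : ℝ) + 1) * (1 / 8))))) := by
        gcongr
        linarith
    _ = 2 * Real.exp (d * (2 * (k + 1)) + (- (q * (1 + ((k : ℝ) + 1) * (1 / 8))))) := by
        rw [← Real.exp_nat_mul, Real.exp_add]; ring
    _ ≤ 2 * Real.exp (-q + -((k : ℝ) + 1)) := by
        refine mul_le_mul_of_nonneg_left (Real.exp_le_exp.2 ?_) (by norm_num)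
        have : (0 : ℝ) ≤ k := by positivity
        nlinarith
    _ = Real.exp (-q) * (2 * Real.exp (-((k : ℝ) + 1))) := by rw [Real.exp_add]; ring
    _ ≤ _ := by gcongr

open Classical in
lemma bad_card {s : ℕ} (N K L : ℕ) (hN : 1 ≤ N) (hL : L ≤ K) (u : Finset (Fin s)) (hu : u.Nonempty) (t : ℝ)
    (ht : 0 ≤ t) (ht2 : 96 * (u.card : ℝ) ^ 2 ≤ t ^ 2) (hLt : t * 2 ^ L ≤ Real.sqrt N) :
    (((univ : Finset (Fin N → Fin s → Fin (2 ^ K))).filter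
      fun ω => ω ∈ badSet N K L u (t * Real.sqrt N)).card : ℝ) ≤
    Fintype.card (Fin N → Fin s → Fin (2 ^ K)) * (2 * Real.exp (- (t ^ 2 / (4 * u.card)))) := by
  have hd : 1 ≤ u.card := hu.card_pos
  have hd' : (1 : ℝ) ≤ u.card := by exact_mod_cast hd
  have hN' : (0 : ℝ) < Real.sqrt N := Real.sqrt_pos.2 (by exact_mod_cast hN)
  set d := u.card with hdd
  set q := t ^ 2 / (4 * (d : ℝ)) with hq
  have hq' : 16 * (d : ℝ) + 8 ≤ q := by
    rw [hq, le_div_iff₀ (by positivity)]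
    nlinarith
  set M : ℝ := ((Fintype.card (Fin N → Fin s → Fin (2 ^ K)) : ℕ) : ℝ) with hM
  have hM0 : 0 ≤ M := by positivity
  have hsub : ((univ : Finset (Fin N → Fin s → Fin (2 ^ K))).filter
      fun ω => ω ∈ badSet N K L u (t * Real.sqrt N)) ⊆
      (range L).biUnion fun k => (Gk u (k + 1)).biUnion fun b =>
        univ.filter fun ω => t * Real.sqrt N * (3 / 4) ^ (k + 1) <
          |devi ω (Bx K (k + 1) b \ Bx K k (fun j => b j / 2))| := by
    intro ω
    simp only [mem_filter, mem_univ, true_and, mem_biUnion, mem_range]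
    rintro ⟨k, hk, b, hb, h⟩
    exact ⟨k, hk, b, hb, h⟩
  have h1 : ∀ k < L, ∀ b ∈ Gk u (k + 1), ((univ.filter fun ω : Fin N → Fin s → Fin (2 ^ K) =>
      t * Real.sqrt N * (3 / 4) ^ (k + 1) <
          |devi ω (Bx K (k + 1) b \ Bx K k (fun j => b j / 2))|).card : ℝ) ≤
      M * (2 * Real.exp (- (q * (9 / 8) ^ (k + 1)))) := by
    intro k hk b hb
    set l : ℝ := t * (3 / 4) ^ (k + 1) * 2 ^ (k + 1) / (2 * d * Real.sqrt N) with hl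
    have hl1 : l ≤ 1 := by
      rw [hl, div_le_one (by positivity)]
      have a1 : ((3 : ℝ) / 4) ^ (k + 1) ≤ 1 := pow_le_one₀ (by norm_num) (by norm_num)
      have a2 : (2 : ℝ) ^ (k + 1) ≤ 2 ^ L := pow_le_pow_right₀ (by norm_num) (by omega)
      calc t * (3 / 4) ^ (k + 1) * 2 ^ (k + 1) ≤ t * 1 * 2 ^ L := by gcongr
        _ ≤ Real.sqrt N := by linarith
        _ ≤ _ := by nlinarith
    refine (tail _ l _ _ (by positivity) hl1 (half_vol (by omega) hb)).trans (le_of_eq ?_)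
    congr 3
    rw [hl, hq, show (9 / 8 : ℝ) = (3 / 4) * (3 / 4) * 2 by norm_num, mul_pow, mul_pow]
    have hs : (N : ℝ) = Real.sqrt N ^ 2 := (Real.sq_sqrt (by positivity)).symm
    set r := Real.sqrt N
    rw [hs]
    generalize ((3 : ℝ) / 4) ^ (k + 1) = w
    have h2 : (2 : ℝ) ^ (k + 1) ≠ 0 := by positivity
    generalize (2 : ℝ) ^ (k + 1) = v at *
    field_simp
    ring
  calc _ ≤ (((range L).biUnion fun k => (Gk u (k + 1)).biUnion fun b =>
        univ.filter fun ω : Fin N → Fin s → Fin (2 ^ K) => t * Real.sqrt N * (3 / 4) ^ (k + 1) <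
          |devi ω (Bx K (k + 1) b \ Bx K k (fun j => b j / 2))|).card : ℝ) := by
        exact_mod_cast card_le_card hsub
    _ ≤ ∑ k ∈ range L, ∑ b ∈ Gk u (k + 1), M * (2 * Real.exp (- (q * (9 / 8) ^ (k + 1)))) := by
        refine (Nat.cast_le.2 card_biUnion_le).trans ?_
        push_cast
        refine Finset.sum_le_sum fun k hk => ?_
        refine (Nat.cast_le.2 card_biUnion_le).trans ?_
        push_cast
        exact Finset.sum_le_sum fun b hb => h1 k (by simpa using hk) b hb
    _ ≤ ∑ k ∈ range L, M * (Real.exp (-q) * (2 * (1 / 2) ^ (k + 1))) := by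
        refine Finset.sum_le_sum fun k hk => ?_
        rw [sum_const, card_Gk, nsmul_eq_mul]
        have := exp_num d k q hd hq'
        calc _ = M * (((2 ^ (k + 1) + 1 : ℕ) : ℝ) ^ d * (2 * Real.exp (- (q * (9 / 8) ^ (k + 1))))) := by
              push_cast; ring
          _ ≤ _ := by gcongr
    _ = M * (Real.exp (-q) * ∑ k ∈ range L, (1 / 2 : ℝ) ^ k) := by
        rw [Finset.mul_sum, Finset.mul_sum]
        refine Finset.sum_congr rfl fun k _ => ?_
        rw [pow_succ]; ring
    _ ≤ M * (2 * Real.exp (-q)) := by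
        rw [mul_comm 2]
        gcongr
        exact sum_geometric_two_le L

lemma disc_of_good {s N K L : ℕ} (hN : 1 ≤ N) (hL : L ≤ K) (u : Finset (Fin s)) (hu : u.Nonempty)
    (t : ℝ) (ht : 0 ≤ t) (hLt : Real.sqrt N ≤ t * 2 ^ (L + 1)) (ω : Fin N → Fin s → Fin (2 ^ K))
    (hω : ω ∉ badSet N K L u (t * Real.sqrt N)) (z : Fin s → ℝ) (hz : ∀ j, z j ∈ Set.Icc (0:ℝ) 1) :
    |localDisc (fun n j => ((ω n j).1 : ℝ) / 2 ^ K) (projPoint u z)| ≤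
      5 * u.card * t / Real.sqrt N := by
  have hd' : (1 : ℝ) ≤ u.card := by exact_mod_cast hu.card_pos
  have hN0 : (0 : ℝ) < N := by exact_mod_cast hN
  have hN' : (0 : ℝ) < Real.sqrt N := Real.sqrt_pos.2 hN0
  set x : Fin N → Fin s → ℝ := fun n j => ((ω n j).1 : ℝ) / 2 ^ K with hx
  set w := projPoint u z with hw
  have hw01 : ∀ j, 0 ≤ w j ∧ w j ≤ 1 := by
    intro j; simp only [hw, projPoint]
    split_ifs
    · exact hz j
    · norm_num
  have hw1 : ∀ j, j ∉ u → w j = 1 := by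
    intro j hj; simp [hw, projPoint, hj]
  have h2L : (0 : ℝ) < 2 ^ L := by positivity
  set lo : Fin s → ℕ := fun j => ⌊2 ^ L * w j⌋₊ with hlo
  set hi : Fin s → ℕ := fun j => ⌈2 ^ L * w j⌉₊ with hhi
  have hhiG : hi ∈ Gk u L := by
    rw [mem_Gk]
    refine ⟨fun j => ?_, fun j hj => ?_⟩
    · simp only [hhi]
      rw [Nat.ceil_le]
      push_cast
      nlinarith [(hw01 j).2]
    · simp only [hhi, hw1 j hj, mul_one]
      exact_mod_cast Nat.ceil_natCast (R := ℝ) (2 ^ L)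
  have hloG : lo ∈ Gk u L := by
    rw [mem_Gk]
    refine ⟨fun j => ?_, fun j hj => ?_⟩
    · exact (Nat.floor_le_ceil _).trans ((mem_Gk.1 hhiG).1 j)
    · simp only [hlo, hw1 j hj, mul_one]
      exact_mod_cast Nat.floor_natCast (R := ℝ) (2 ^ L)
  have lo_le : ∀ j, (lo j : ℝ) / 2 ^ L ≤ w j := by
    intro j
    rw [div_le_iff₀ h2L, mul_comm]
    exact Nat.floor_le (mul_nonneg h2L.le (hw01 j).1)
  have le_hi : ∀ j, w j ≤ (hi j : ℝ) / 2 ^ L := by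
    intro j
    rw [le_div_iff₀ h2L, mul_comm]
    exact Nat.le_ceil _
  have key : ∀ k ≤ L, ∀ b ∈ Gk u k, |devi ω (Bx K k b)| ≤ 3 * (t * Real.sqrt N) := by
    intro k hk b hb
    refine (chain hL ω (t * Real.sqrt N) ?_ k hk b hb).trans ?_
    · intro k hk b hb
      by_contra hcon
      exact hω ⟨k, hk, b, hb, not_le.1 hcon⟩
    · have : (0 : ℝ) ≤ (3 / 4) ^ k := by positivity
      nlinarith [mul_nonneg (mul_nonneg ht hN'.le) this]
  have hpK : (2 : ℝ) ^ K = 2 ^ L * 2 ^ (K - L) := by rw [← pow_add]; congr 1; omega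
  have iffb : ∀ (n : Fin N) (j : Fin s) (m : ℕ), (ω n j).1 < m * 2 ^ (K - L) ↔ x n j < (m : ℝ) / 2 ^ L := by
    intro n j m
    simp only [hx]
    rw [hpK, mul_comm ((2 : ℝ) ^ L), ← div_div, div_lt_div_iff_of_pos_right h2L, div_lt_iff₀ (by positivity)]
    exact_mod_cast Iff.rfl
  have c1 : (univ.filter fun n => ω n ∈ Bx K L lo).card ≤ (univ.filter fun n => ∀ j, x n j < w j).card := by
    apply card_le_card
    intro n
    simp only [Bx, mem_filter, mem_univ, true_and]
    exact fun h j => ((iffb n j _).1 (h j)).trans_le (lo_le j)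
  have c2 : (univ.filter fun n => ∀ j, x n j < w j).card ≤ (univ.filter fun n => ω n ∈ Bx K L hi).card := by
    apply card_le_card
    intro n
    simp only [Bx, mem_filter, mem_univ, true_and]
    exact fun h j => (iffb n j _).2 ((h j).trans_le (le_hi j))
  have v1 : ∏ j, (lo j : ℝ) / 2 ^ L ≤ ∏ j, w j :=
    prod_le_prod (fun j _ => by positivity) (fun j _ => lo_le j)
  have v2 : ∏ j, w j ≤ ∏ j, (hi j : ℝ) / 2 ^ L :=
    prod_le_prod (fun j _ => (hw01 j).1) (fun j _ => le_hi j)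
  have v3 : ∏ j, (hi j : ℝ) / 2 ^ L - ∏ j, (lo j : ℝ) / 2 ^ L ≤ u.card / 2 ^ L := by
    refine (prod_sub_prod_le univ _ _ (fun j _ => by positivity)
      (fun j _ => (lo_le j).trans (le_hi j)) (fun j _ => ?_)).trans ?_
    · rw [div_le_one h2L]
      exact_mod_cast (mem_Gk.1 hhiG).1 j
    · have : ∀ j : Fin s, ((hi j : ℝ) / 2 ^ L - (lo j : ℝ) / 2 ^ L) ≤
          if j ∈ u then 1 / 2 ^ L else 0 := by
        intro j
        split_ifs with hj
        · rw [div_sub_div_same]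
          gcongr
          have : (hi j : ℝ) ≤ lo j + 1 := by
            have := Nat.ceil_le_floor_add_one (2 ^ L * w j)
            simp only [hhi, hlo]
            exact_mod_cast this
          linarith
        · rw [(mem_Gk.1 hhiG).2 j hj, (mem_Gk.1 hloG).2 j hj]; simp
      refine (Finset.sum_le_sum fun j _ => this j).trans (le_of_eq ?_)
      simp [Finset.sum_ite_mem, div_eq_mul_inv]
  have k1 := abs_le.1 (key L le_rfl lo hloG)
  have k2 := abs_le.1 (key L le_rfl hi hhiG)
  unfold devi at k1 k2
  rw [vol_Bx hL (mem_Gk.1 hloG).1] at k1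
  rw [vol_Bx hL (mem_Gk.1 hhiG).1] at k2
  have c1' : ((univ.filter fun n => ω n ∈ Bx K L lo).card : ℝ) ≤ (univ.filter fun n => ∀ j, x n j < w j).card := by
    exact_mod_cast c1
  have c2' : ((univ.filter fun n => ∀ j, x n j < w j).card : ℝ) ≤ (univ.filter fun n => ω n ∈ Bx K L hi).card := by
    exact_mod_cast c2
  have hs : Real.sqrt N * Real.sqrt N = N := Real.mul_self_sqrt hN0.le
  have e1 : (N : ℝ) * (u.card / 2 ^ L) ≤ 2 * u.card * (t * Real.sqrt N) := by
    rw [← mul_div_assoc, div_le_iff₀ h2L]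
    rw [pow_succ] at hLt
    have := mul_le_mul_of_nonneg_left hLt (mul_nonneg (by positivity : (0 : ℝ) ≤ u.card) hN'.le)
    rw [mul_assoc, hs] at this
    linarith
  have e2 : (3 : ℝ) * (t * Real.sqrt N) ≤ 3 * u.card * (t * Real.sqrt N) := by
    nlinarith [mul_nonneg ht hN'.le]
  have w1 := mul_le_mul_of_nonneg_left v1 hN0.le
  have w2 := mul_le_mul_of_nonneg_left v2 hN0.le
  have w3 := mul_le_mul_of_nonneg_left v3 hN0.le
  have fin : |((univ.filter fun n => ∀ j, x n j < w j).card : ℝ) - N * ∏ j, w j| ≤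
      5 * u.card * (t * Real.sqrt N) := by
    rw [abs_le]; constructor <;> nlinarith
  unfold localDisc
  have e3 : ((univ.filter fun n => ∀ j, x n j < w j).card : ℝ) / N - ∏ j, w j =
      (((univ.filter fun n => ∀ j, x n j < w j).card : ℝ) - N * ∏ j, w j) / N := by
    field_simp
  rw [e3, abs_div, abs_of_pos hN0, div_le_iff₀ hN0]
  refine fin.trans (le_of_eq ?_)
  rw [div_mul_eq_mul_div, eq_div_iff hN'.ne']
  linear_combination (5 * (u.card : ℝ) * t) * hs

lemma localDisc_le_one {s N : ℕ} (hN : 1 ≤ N) (x : Fin N → Fin s → ℝ) (w : Fin s → ℝ)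
    (hw : ∀ j, 0 ≤ w j ∧ w j ≤ 1) : |localDisc x w| ≤ 1 := by
  unfold localDisc
  have hN0 : (0 : ℝ) < N := by exact_mod_cast hN
  have h1 : 0 ≤ ∏ j, w j := prod_nonneg fun j _ => (hw j).1
  have h2 : ∏ j, w j ≤ 1 := prod_le_one (fun j _ => (hw j).1) fun j _ => (hw j).2
  have h3 : ((univ.filter fun n => ∀ j, x n j < w j).card : ℝ) / N ≤ 1 := by
    rw [div_le_one hN0]
    have := card_le_univ (univ.filter fun n => ∀ j, x n j < w j)
    simp only [Fintype.card_fin] at this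
    exact_mod_cast this
  have h4 : 0 ≤ ((univ.filter fun n => ∀ j, x n j < w j).card : ℝ) / N := by positivity
  rw [abs_le]; constructor <;> linarith

lemma exists_kappa (h : ℕ → ℝ) (h0 : ∀ j, 0 < h j) (J : ℕ) (hJ : ∀ j, J ≤ j → 2 ≤ h j) :
    ∃ κ : ℝ, 0 < κ ∧ ∀ u : Finset ℕ, κ * ∏ j ∈ u, max (h j) 2 ≤ ∏ j ∈ u, h j := by
  have hm : ∀ j, 0 < min 1 (h j / 2) := fun j => lt_min one_pos (half_pos (h0 j))
  refine ⟨∏ j ∈ range J, min 1 (h j / 2), prod_pos fun j _ => hm j, fun u => ?_⟩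
  have e : ∀ j, h j = min 1 (h j / 2) * max (h j) 2 := by
    intro j
    rcases le_total (h j) 2 with h' | h'
    · rw [max_eq_right h', min_eq_right (by linarith)]; ring
    · rw [max_eq_left h', min_eq_left (by linarith)]; ring
  have e2 : ∏ j ∈ u, h j = (∏ j ∈ u, min 1 (h j / 2)) * ∏ j ∈ u, max (h j) 2 := by
    rw [← prod_mul_distrib]; exact prod_congr rfl fun j _ => e j
  rw [e2]
  refine mul_le_mul_of_nonneg_right ?_ (prod_nonneg fun j _ => by positivity)
  calc ∏ j ∈ range J, min 1 (h j / 2) ≤ ∏ j ∈ u.filter (· < J), min 1 (h j / 2) := by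
        apply prod_le_prod_of_subset_of_le_one
        · intro j; simp
        · exact fun j _ => (hm j).le
        · exact fun j _ _ => min_le_left _ _
    _ = ∏ j ∈ u, min 1 (h j / 2) := by
        apply prod_subset (filter_subset _ _)
        intro j hj hj'
        have : J ≤ j := by simpa [hj] using hj'
        exact min_eq_left (by linarith [hJ j this])

lemma sum_le_prod_two {ι : Type*} (u : Finset ι) (hu : u.Nonempty) (g : ι → ℝ) (h : ∀ j ∈ u, 2 ≤ g j) :
    ∑ j ∈ u, g j ≤ ∏ j ∈ u, g j := by
  classical
  have : ∑ j ∈ u, g j ≤ ∏ j ∈ u, g j ∧ 2 ≤ ∏ j ∈ u, g j := by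
    induction hu using Finset.Nonempty.cons_induction with
    | singleton a => simpa using h
    | cons a S ha hS ih =>
      rw [prod_cons, sum_cons]
      simp only [mem_cons, forall_eq_or_imp] at h
      obtain ⟨i1, i2⟩ := ih h.2
      constructor <;> nlinarith [h.1]
  exact this.1

lemma weights (γ : ℕ → ℝ) (hγ : ∀ j, 1 ≤ j → 0 < γ j)
    (hsum : ∃ c : ℝ, 0 < c ∧ Summable fun j => Real.exp (-c * ((γ (j + 1))⁻¹) ^ 2)) :
    ∃ T : ℝ, 0 < T ∧ ∀ s : ℕ,
      (∀ u : Finset (Fin s), u.Nonempty →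
        96 * (u.card : ℝ) ^ 2 ≤ (T * ∏ j ∈ u, (γ (j.1 + 1))⁻¹ / 2) ^ 2) ∧
      ∑ u ∈ (univ : Finset (Finset (Fin s))).erase ∅,
        2 * Real.exp (-((T * ∏ j ∈ u, (γ (j.1 + 1))⁻¹ / 2) ^ 2 / (4 * u.card))) < 1 := by
  obtain ⟨c, hc, hS⟩ := hsum
  set a : ℕ → ℝ := fun j => ((γ (j + 1))⁻¹) ^ 2 with ha
  have ha0 : ∀ j, 0 < a j := fun j => pow_pos (inv_pos.2 (hγ _ (by omega))) 2
  obtain ⟨J, hJ⟩ : ∃ J, ∀ j, J ≤ j → 2 ≤ a j / 8 := by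
    have h1 := hS.tendsto_atTop_zero.eventually (gt_mem_nhds (Real.exp_pos (-c * 16)))
    obtain ⟨J, hJ⟩ := Filter.eventually_atTop.1 h1
    refine ⟨J, fun j hj => ?_⟩
    have := Real.exp_lt_exp.1 (hJ j hj)
    have : 16 < a j := by simp only [ha]; nlinarith
    linarith
  obtain ⟨κ, hκ, hκu⟩ := exists_kappa (fun j => a j / 8) (fun j => by have := ha0 j; positivity) J hJ
  set S := ∑' j, Real.exp (-c * a j) with hSdef
  have hS0 : 0 ≤ S := tsum_nonneg fun j => (Real.exp_pos _).le
  set m : ℝ := 3 * S + 24 with hm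
  -- T ^ 2 * κ / 4 = 8 * c + m
  set T := Real.sqrt (4 * (8 * c + m) / κ) with hT
  have hT2 : T ^ 2 = 4 * (8 * c + m) / κ := Real.sq_sqrt (by positivity)
  have hTκ : T ^ 2 * κ = 4 * (8 * c + m) := by rw [hT2]; field_simp
  refine ⟨T, Real.sqrt_pos.2 (by positivity), fun s => ?_⟩
  have hκs : ∀ u : Finset (Fin s), κ * ∏ j ∈ u, max (a j.1 / 8) 2 ≤ ∏ j ∈ u, a j.1 / 8 := by
    intro u
    have := hκu (u.map Fin.valEmbedding)
    simpa [prod_map] using this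
  have ht : ∀ u : Finset (Fin s), (T * ∏ j ∈ u, (γ (j.1 + 1))⁻¹ / 2) ^ 2 =
      T ^ 2 * (2 ^ u.card * ∏ j ∈ u, a j.1 / 8) := by
    intro u
    rw [mul_pow, ← prod_pow, ← prod_const, ← prod_mul_distrib]
    congr 1
    refine prod_congr rfl fun j _ => ?_
    simp only [ha]; ring
  have hd2 : ∀ d : ℕ, (d : ℝ) ≤ 2 ^ d := fun d => by exact_mod_cast Nat.lt_two_pow_self.le
  refine ⟨fun u hu => ?_, ?_⟩
  · rw [ht]
    have h1 : (2 : ℝ) ^ u.card ≤ ∏ j ∈ u, max (a j.1 / 8) 2 := by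
      rw [← prod_const]
      exact prod_le_prod (fun _ _ => by norm_num) fun _ _ => le_max_right _ _
    calc 96 * (u.card : ℝ) ^ 2 ≤ (T ^ 2 * κ) * (2 ^ u.card * 2 ^ u.card) := by
          rw [hTκ, ← sq]
          have := hd2 u.card
          gcongr
          linarith
      _ = T ^ 2 * (2 ^ u.card * (κ * 2 ^ u.card)) := by ring
      _ ≤ T ^ 2 * (2 ^ u.card * (κ * ∏ j ∈ u, max (a j.1 / 8) 2)) := by gcongr
      _ ≤ _ := by gcongr; exact hκs u
  · set e : Fin s → ℝ := fun j => Real.exp (-((8 * c + m) * max (a j.1 / 8) 2)) with he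
    have hb : ∀ u ∈ (univ : Finset (Finset (Fin s))).erase ∅,
        2 * Real.exp (-((T * ∏ j ∈ u, (γ (j.1 + 1))⁻¹ / 2) ^ 2 / (4 * u.card))) ≤ 2 * ∏ j ∈ u, e j := by
      intro u hu
      have hu : u.Nonempty := nonempty_iff_ne_empty.2 (by simpa using hu)
      have hd' : (0 : ℝ) < u.card := by exact_mod_cast hu.card_pos
      simp only [he]
      rw [← Real.exp_sum, sum_neg_distrib, ← mul_sum]
      refine mul_le_mul_of_nonneg_left (Real.exp_le_exp.2 (neg_le_neg ?_)) (by norm_num)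
      rw [ht, le_div_iff₀ (by positivity)]
      have h1 := sum_le_prod_two u hu (fun j => max (a j.1 / 8) 2) (fun j _ => le_max_right _ _)
      have h0 : 0 ≤ ∑ j ∈ u, max (a j.1 / 8) 2 := sum_nonneg fun _ _ => by positivity
      calc (8 * c + m) * (∑ j ∈ u, max (a j.1 / 8) 2) * (4 * u.card)
          = (T ^ 2 * κ) * (u.card * ∑ j ∈ u, max (a j.1 / 8) 2) := by rw [hTκ]; ring
        _ ≤ (T ^ 2 * κ) * (2 ^ u.card * ∏ j ∈ u, max (a j.1 / 8) 2) := by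
            have := hd2 u.card
            gcongr
        _ = T ^ 2 * (2 ^ u.card * (κ * ∏ j ∈ u, max (a j.1 / 8) 2)) := by ring
        _ ≤ _ := by gcongr; exact hκs u
    refine (sum_le_sum hb).trans_lt ?_
    have hprod : ∑ u ∈ (univ : Finset (Finset (Fin s))).erase ∅, ∏ j ∈ u, e j = ∏ j, (1 + e j) - 1 := by
      rw [prod_one_add, ← powerset_univ, ← add_sum_erase _ _ (empty_mem_powerset univ)]
      simp
    rw [← mul_sum, hprod]
    have he1 : ∑ j, e j ≤ 1 / 3 := by
      calc ∑ j, e j ≤ ∑ j : Fin s, Real.exp (-m) * Real.exp (-c * a j.1) := by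
            refine sum_le_sum fun j _ => ?_
            simp only [he]
            rw [← Real.exp_add]
            refine Real.exp_le_exp.2 ?_
            have h1 := le_max_left (a j.1 / 8) 2
            have h2 := le_max_right (a j.1 / 8) 2
            nlinarith
        _ = Real.exp (-m) * ∑ j ∈ range s, Real.exp (-c * a j) := by
            rw [← mul_sum, Finset.sum_range]
        _ ≤ Real.exp (-m) * S := by
            gcongr
            exact hS.sum_le_tsum _ fun j _ => (Real.exp_pos _).le
        _ ≤ 1 / 3 := by
            rw [Real.exp_neg, inv_mul_le_iff₀ (Real.exp_pos _)]
            linarith [Real.add_one_le_exp m]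
    have h1 : ∏ j, (1 + e j) ≤ Real.exp (1 / 3) := by
      calc ∏ j, (1 + e j) ≤ ∏ j, Real.exp (e j) :=
            prod_le_prod (fun j _ => by positivity) fun j _ => by linarith [Real.add_one_le_exp (e j)]
        _ = Real.exp (∑ j, e j) := (Real.exp_sum _ _).symm
        _ ≤ _ := Real.exp_le_exp.2 he1
    have h2 : Real.exp (1 / 3) < 3 / 2 := by
      have h3 : Real.exp (1 / 3) ^ 3 = Real.exp 1 := by rw [← Real.exp_nat_mul]; norm_num
      have h4 := Real.exp_one_lt_d9
      by_contra hcon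
      have : (3 / 2 : ℝ) ^ 3 ≤ Real.exp (1 / 3) ^ 3 := pow_le_pow_left₀ (by norm_num) (not_lt.1 hcon) 3
      rw [h3] at this
      norm_num at this
      linarith
    linarith

/-- if the positive weights `γ` satisfy `∑_j exp(−c γ_j⁻²) < ∞` for some
`c > 0`, then `disc_γ(N,s) ≤ C/√N` for a constant `C` depending only on `γ`. -/
theorem wMinDisc_le_inv_sqrt (γ : ℕ → ℝ) (hγ : ∀ j, 1 ≤ j → 0 < γ j)
    (hsum : ∃ c : ℝ, 0 < c ∧ Summable fun j => Real.exp (-c * ((γ (j + 1))⁻¹) ^ 2)) :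
    ∃ C : ℝ, 0 < C ∧ ∀ s N : ℕ, 1 ≤ s → 1 ≤ N →
      wMinDisc γ N s ≤ C / Real.sqrt N := by
  classical
  obtain ⟨T, hT, hTs⟩ := weights γ hγ hsum
  refine ⟨5 * T, by positivity, fun s N _ hN => ?_⟩
  obtain ⟨hA, hB⟩ := hTs s
  have hN0 : (0 : ℝ) < N := by exact_mod_cast hN
  have hN' : (0 : ℝ) < Real.sqrt N := Real.sqrt_pos.2 hN0
  set t : Finset (Fin s) → ℝ := fun u => T * ∏ j ∈ u, (γ (j.1 + 1))⁻¹ / 2 with ht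
  have hg : ∀ j : Fin s, 0 < γ (j.1 + 1) := fun j => hγ _ (by omega)
  have ht0 : ∀ u, 0 < t u := fun u => mul_pos hT (prod_pos fun j _ => half_pos (inv_pos.2 (hg j)))
  have hwpos : ∀ u : Finset (Fin s), 0 < weightOf γ u := fun u => prod_pos fun j _ => hg j
  have hwt : ∀ u : Finset (Fin s), weightOf γ u * (u.card * t u) ≤ T := by
    intro u
    have : weightOf γ u * t u = T * (1 / 2) ^ u.card := by
      simp only [weightOf, ht]
      rw [mul_left_comm, ← prod_mul_distrib, ← prod_const]
      congr 1
      refine prod_congr rfl fun j _ => ?_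
      have := (hg j).ne'
      field_simp
    calc weightOf γ u * (u.card * t u) = T * (u.card * (1 / 2) ^ u.card) := by
          rw [mul_left_comm, this]; ring
      _ ≤ T * 1 := by
          gcongr
          rw [one_div, inv_pow, ← div_eq_mul_inv, div_le_one (by positivity)]
          exact_mod_cast Nat.lt_two_pow_self.le
      _ = T := mul_one T
  -- level
  have hLex : ∀ u : Finset (Fin s), ∃ L : ℕ, t u ≤ Real.sqrt N → u.Nonempty →
      L ≤ N ∧ t u * 2 ^ L ≤ Real.sqrt N ∧ Real.sqrt N ≤ t u * 2 ^ (L + 1) := by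
    intro u
    by_cases h : t u ≤ Real.sqrt N ∧ u.Nonempty
    · obtain ⟨L, h1, h2⟩ := exists_nat_pow_near (x := Real.sqrt N / t u) (y := 2)
        (by rw [le_div_iff₀ (ht0 u)]; linarith [h.1]) (by norm_num)
      rw [le_div_iff₀ (ht0 u)] at h1
      rw [div_lt_iff₀ (ht0 u)] at h2
      refine ⟨L, fun _ _ => ⟨?_, by linarith, by linarith⟩⟩
      have hd' : (1 : ℝ) ≤ u.card := by exact_mod_cast h.2.card_pos
      have h3 := hA u h.2
      have h4 : 1 ≤ t u := by
        by_contra hcon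
        have := ht0 u
        have h5 : (t u) ^ 2 ≤ 1 := by nlinarith
        change 96 * (u.card : ℝ) ^ 2 ≤ (t u) ^ 2 at h3
        nlinarith
      have h5 : (2 : ℝ) ^ L ≤ N := by
        have : Real.sqrt N ≤ N := by
          rw [Real.sqrt_le_left hN0.le]
          have : (1 : ℝ) ≤ N := by exact_mod_cast hN
          nlinarith
        have h6 : (0 : ℝ) < 2 ^ L := by positivity
        nlinarith
      have h6 : 2 ^ L ≤ N := by exact_mod_cast h5
      exact (Nat.lt_two_pow_self.trans_le h6).le
    · exact ⟨0, fun h1 h2 => absurd ⟨h1, h2⟩ h⟩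
  choose L hL using hLex
  obtain ⟨ω, hω⟩ : ∃ ω : Fin N → Fin s → Fin (2 ^ N), ∀ u : Finset (Fin s), u.Nonempty →
      t u ≤ Real.sqrt N → ω ∉ badSet N N (L u) u (t u * Real.sqrt N) := by
    by_contra hcon
    push Not at hcon
    set M : ℝ := ((Fintype.card (Fin N → Fin s → Fin (2 ^ N)) : ℕ) : ℝ) with hM
    have hM0 : 0 < M := by
      rw [hM]; exact_mod_cast Fintype.card_pos
    have hcov : (univ : Finset (Fin N → Fin s → Fin (2 ^ N))) ⊆
        ((univ : Finset (Finset (Fin s))).erase ∅).biUnion fun u =>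
          univ.filter fun ω => t u ≤ Real.sqrt N ∧ ω ∈ badSet N N (L u) u (t u * Real.sqrt N) := by
      intro ω _
      obtain ⟨u, hu, h1, h2⟩ := hcon ω
      simp only [mem_biUnion, mem_erase, mem_univ, and_true, mem_filter, true_and]
      exact ⟨u, hu.ne_empty, h1, h2⟩
    have h1 : M ≤ ∑ u ∈ (univ : Finset (Finset (Fin s))).erase ∅,
        M * (2 * Real.exp (-((t u) ^ 2 / (4 * u.card)))) := by
      have h2 := (card_le_card hcov).trans card_biUnion_le
      rw [card_univ] at h2
      have h3 : M ≤ ((∑ u ∈ (univ : Finset (Finset (Fin s))).erase ∅, (univ.filter fun ω :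
          Fin N → Fin s → Fin (2 ^ N) => t u ≤ Real.sqrt N ∧
            ω ∈ badSet N N (L u) u (t u * Real.sqrt N)).card : ℕ) : ℝ) := Nat.cast_le.2 h2
      refine h3.trans ?_
      push_cast
      refine sum_le_sum fun u hu => ?_
      have hu : u.Nonempty := nonempty_iff_ne_empty.2 (by simpa using hu)
      by_cases h : t u ≤ Real.sqrt N
      · simp only [h, true_and]
        obtain ⟨l1, l2, l3⟩ := hL u h hu
        have := bad_card N N (L u) hN l1 u hu (t u) (ht0 u).le (hA u hu) l2
        convert this using 2
      · simp only [h, false_and, filter_false, card_empty]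
        have := (Real.exp_pos (-((t u) ^ 2 / (4 * u.card)))).le
        simpa using mul_nonneg hM0.le (mul_nonneg zero_le_two this)
    rw [← mul_sum] at h1
    have : M * ∑ u ∈ (univ : Finset (Finset (Fin s))).erase ∅,
        (2 * Real.exp (-((t u) ^ 2 / (4 * u.card)))) < M * 1 := mul_lt_mul_of_pos_left hB hM0
    linarith
  set x : Fin N → Fin s → ℝ := fun n j => ((ω n j).1 : ℝ) / 2 ^ N with hx
  have hxD : wStarDisc γ x ≤ 5 * T / Real.sqrt N := by
    apply Real.sSup_le _ (by positivity)
    rintro d ⟨z, hz, u, hu, rfl⟩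
    have hd' : (1 : ℝ) ≤ u.card := by exact_mod_cast hu.card_pos
    have main : |localDisc x (projPoint u z)| ≤ 5 * u.card * t u / Real.sqrt N := by
      by_cases h : t u ≤ Real.sqrt N
      · obtain ⟨l1, l2, l3⟩ := hL u h hu
        exact disc_of_good hN l1 u hu (t u) (ht0 u).le l3 ω (hω u hu h) z hz
      · refine (localDisc_le_one hN x _ ?_).trans ?_
        · intro j; simp only [projPoint]
          split_ifs
          · exact hz j
          · norm_num
        · rw [le_div_iff₀ hN']
          nlinarith [ht0 u]
    calc weightOf γ u * |localDisc x (projPoint u z)|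
        ≤ weightOf γ u * (5 * u.card * t u / Real.sqrt N) := by
          have := hwpos u
          gcongr
      _ = 5 * (weightOf γ u * (u.card * t u)) / Real.sqrt N := by ring
      _ ≤ _ := by have := hwt u; gcongr
  refine le_trans (csInf_le ?_ ?_) hxD
  · refine ⟨0, ?_⟩
    rintro d ⟨y, _, rfl⟩
    apply Real.sSup_nonneg
    rintro d ⟨z, hz, u, hu, rfl⟩
    exact mul_nonneg (hwpos u).le (abs_nonneg _)
  · refine ⟨x, fun n j => ⟨by positivity, ?_⟩, rfl⟩
    simp only [hx]
    rw [div_lt_one (by positivity)]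
    exact_mod_cast (ω n j).2
end

section
/- Let γ = (γ_j)_{j≥1} be non-increasing nonnegative weights with ∑_{j≥1} γ_j < ∞, and let δ > 0. Then there exists a constant C > 0 (depending only on γ and δ, independent of p and s) such that for every prime p and every s ∈ ℕ the Korobov point set P_{p,s} satisfies D*_γ(P_{p,s}) ≤ C·p^{−(1/2−δ)}. -/
open Finset

/-- Korobov's `p`-set `P_{p,s}`: the points `x_n = ({n/p}, {n²/p}, …, {n^s/p})`
for `n = 0, 1, …, p−1`. -/
noncomputable def korobovP (p s : ℕ) : Fin p → Fin s → ℝ :=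
  fun n j => Int.fract ((n.1 : ℝ) ^ (j.1 + 1) / p)

/-- Korobov's `p²`-set `Q_{p²,s}`: the points `x_n = ({n/p²}, {n²/p²}, …, {n^s/p²})`
for `n = 0, 1, …, p²−1`. -/
noncomputable def korobovQ (p s : ℕ) : Fin (p ^ 2) → Fin s → ℝ :=
  fun n j => Int.fract ((n.1 : ℝ) ^ (j.1 + 1) / ((p : ℝ) ^ 2))

/-- The Hua–Wang multi-set `R_{p²,s}`: the `p²` points
`x_{a,k} = ({k/p}, {ak/p}, …, {a^{s−1}k/p})` for `a, k = 0, …, p−1`, counted with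
multiplicity; here the index `n < p²` encodes `a = n / p` and `k = n % p`. -/
noncomputable def huaWangR (p s : ℕ) : Fin (p ^ 2) → Fin s → ℝ :=
  fun n j => Int.fract (((n.1 / p : ℕ) : ℝ) ^ j.1 * ((n.1 % p : ℕ) : ℝ) / p)

namespace KW

open Polynomial

section tr
variable {K : Type*} [Field K]

/-- coefficient of `1/X` at infinity of `N/g`. -/
noncomputable def res (N g : K[X]) : K := (N %ₘ g).coeff (g.natDegree - 1)

lemma res_add (N N' g : K[X]) : res (N + N') g = res N g + res N' g := by
  simp [res, add_modByMonic]

lemma res_mul_right (N : K[X]) {g h : K[X]} (hg : g.Monic) (hh : h.Monic) (hd : 0 < g.natDegree) :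
    res (N * h) (g * h) = res N g := by
  have h1 : (N * h) %ₘ (g * h) = (N %ₘ g) * h := by
    refine (div_modByMonic_unique (N /ₘ g) ((N %ₘ g) * h) (hg.mul hh) ⟨?_, ?_⟩).2
    · have := modByMonic_add_div N g
      linear_combination h * this
    · rw [hh.degree_mul, hh.degree_mul]
      have h2 := degree_modByMonic_lt N hg
      rw [degree_eq_natDegree hh.ne_zero]
      exact WithBot.add_lt_add_right (by simp) h2
  unfold res
  rw [h1, hg.natDegree_mul hh]
  have h3 : (N %ₘ g).natDegree ≤ g.natDegree - 1 := by
    have := natDegree_modByMonic_lt N hg (by rintro rfl; simp at hd)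
    omega
  have : g.natDegree + h.natDegree - 1 = (g.natDegree - 1) + h.natDegree := by omega
  rw [this, coeff_mul_add_eq_of_natDegree_le h3 le_rfl]
  simp [hh.coeff_natDegree]

/-- the sum of `f` over the roots of `g`. -/
noncomputable def tr (f g : K[X]) : K := res (f * derivative g) g

lemma tr_one (f : K[X]) : tr f 1 = 0 := by simp [tr, res]

lemma tr_mul (f : K[X]) {g h : K[X]} (hg : g.Monic) (hh : h.Monic) :
    tr f (g * h) = tr f g + tr f h := by
  rcases Nat.eq_zero_or_pos g.natDegree with h0 | h0
  · rw [hg.natDegree_eq_zero.1 h0]; simp [tr_one]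
  rcases Nat.eq_zero_or_pos h.natDegree with h1 | h1
  · rw [hh.natDegree_eq_zero.1 h1]; simp [tr_one]
  unfold tr
  rw [derivative_mul, mul_add, res_add, ← mul_assoc, res_mul_right _ hg hh h0]
  congr 1
  rw [← res_mul_right (f * derivative h) hh hg h1, mul_comm h g]
  congr 1; ring

lemma tr_pow (f : K[X]) {g : K[X]} (hg : g.Monic) (k : ℕ) : tr f (g ^ k) = k * tr f g := by
  induction k with
  | zero => simp [tr_one]
  | succ k ih => rw [pow_succ, tr_mul f (hg.pow k) hg, ih]; push_cast; ring

lemma tr_X_sub_C (f : K[X]) (a : K) : tr f (X - C a) = f.eval a := by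
  simp [tr, res, modByMonic_X_sub_C_eq_C_eval]

lemma tr_map {L : Type*} [Field L] (φ : K →+* L) (f : K[X]) {g : K[X]} (hg : g.Monic) :
    φ (tr f g) = tr (f.map φ) (g.map φ) := by
  simp only [tr, res]
  rw [derivative_map, ← Polynomial.map_mul, ← map_modByMonic _ hg, hg.natDegree_map, coeff_map]

lemma tr_prod (f : K[X]) (s : Multiset K) :
    tr f (s.map fun a => X - C a).prod = (s.map fun a => f.eval a).sum := by
  induction s using Multiset.induction with
  | empty => simp [tr_one]
  | cons a s ih =>
    simp only [Multiset.map_cons, Multiset.prod_cons, Multiset.sum_cons]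
    rw [tr_mul f (monic_X_sub_C a) (monic_multiset_prod_of_monic _ _ fun a _ => monic_X_sub_C a), ih,
      tr_X_sub_C]

lemma tr_splits (f : K[X]) {g : K[X]} (hg : g.Monic) (hs : g.Splits) :
    tr f g = (g.roots.map fun a => f.eval a).sum := by
  conv_lhs => rw [hs.eq_prod_roots_of_monic hg]
  exact tr_prod f _

/-- shifting the coefficient of `X^(m-d)` shifts `tr` linearly. -/
lemma tr_shift (f : K[X]) {g : K[X]} (hg : g.Monic) {d : ℕ} (hf : f.natDegree = d) (hd : 0 < d)
    (hm : d ≤ g.natDegree) (c : K) :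
    tr f (g + C c * X ^ (g.natDegree - d)) = tr f g - c * d * f.coeff d := by
  set m := g.natDegree with hmdef
  set h := g + C c * X ^ (m - d) with hh
  have hlt : (C c * X ^ (m - d)).degree < g.degree := by
    rw [degree_eq_natDegree hg.ne_zero]
    refine (degree_C_mul_X_pow_le _ _).trans_lt ?_
    exact_mod_cast (by omega : m - d < m)
  have hhm : h.Monic := hg.add_of_left hlt
  have hhd : h.natDegree = m := natDegree_add_eq_left_of_degree_lt hlt
  unfold tr res
  rw [hhd]
  set R := (f * derivative g) %ₘ g
  set R' := (f * derivative h) %ₘ h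
  set Q := (f * derivative g) /ₘ g
  set Q' := (f * derivative h) /ₘ h
  have e1 : R + g * Q = f * derivative g := modByMonic_add_div _ _
  have e2 : R' + h * Q' = f * derivative h := modByMonic_add_div _ _
  have hR : R.natDegree ≤ m - 1 := by
    have : R.natDegree < m := natDegree_modByMonic_lt (f * derivative g) hg (by rintro rfl; simp at hmdef; omega)
    omega
  have hR' : R'.natDegree ≤ m - 1 := by
    have : R'.natDegree < h.natDegree := natDegree_modByMonic_lt (f * derivative h) hhm (by intro h0; rw [h0] at hhd; simp at hhd; omega)
    omega
  set W := derivative h * g - derivative g * h with hW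
  have key : f * W = (Q' - Q) * (g * h) + (R' * g - R * h) := by
    rw [hW]; linear_combination (-g) * e2 + h * e1
  -- compute W
  have hW2 : W = C (c * ((m - d : ℕ) : K)) * (X ^ (m - d - 1) * g) - C c * (X ^ (m - d) * derivative g) := by
    rw [hW, hh]
    simp only [derivative_add, derivative_C_mul, derivative_X_pow, C_mul]
    simp
    ring
  have hdg : (derivative g).natDegree ≤ m - 1 := natDegree_derivative_le g
  have hWd : W.natDegree ≤ 2 * m - d - 1 := by
    rw [hW2]
    refine (natDegree_sub_le_of_le (m := 2 * m - d - 1) (n := 2 * m - d - 1) ?_ ?_).trans (by simp)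
    · rcases Nat.eq_zero_or_pos (m - d) with h0 | h0
      · rw [h0]; simp
      refine (natDegree_C_mul_le _ _).trans ?_
      refine natDegree_mul_le.trans ?_
      rw [natDegree_X_pow]; omega
    · refine (natDegree_C_mul_le _ _).trans ?_
      refine natDegree_mul_le.trans ?_
      rw [natDegree_X_pow]; omega
  have hWc : W.coeff (2 * m - d - 1) = - (c * d) := by
    rw [hW2, coeff_sub, coeff_C_mul, coeff_C_mul]
    have t2 : (X ^ (m - d) * derivative g).coeff (2 * m - d - 1) = (m : K) := by
      have : 2 * m - d - 1 = (m - 1) + (m - d) := by omega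
      rw [this, coeff_X_pow_mul, coeff_derivative]
      have : m - 1 + 1 = m := by omega
      rw [this, hg.coeff_natDegree]
      have : ((m - 1 : ℕ) : K) + 1 = ((m - 1 + 1 : ℕ) : K) := by push_cast; rfl
      rw [this, one_mul]; congr 1
    rw [t2]
    rcases Nat.eq_zero_or_pos (m - d) with h0 | h0
    · have : m = d := by omega
      rw [h0, this]; simp
    · have : 2 * m - d - 1 = m + (m - d - 1) := by omega
      rw [this, coeff_X_pow_mul, hg.coeff_natDegree, Nat.cast_sub hm]
      ring
  have hfW : (f * W).natDegree ≤ 2 * m - 1 := natDegree_mul_le.trans (by omega)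
  have hRR : (R' * g - R * h).natDegree ≤ 2 * m - 1 := by
    refine (natDegree_sub_le_of_le (m := 2 * m - 1) (n := 2 * m - 1) ?_ ?_).trans (by simp)
    · exact natDegree_mul_le.trans (by omega)
    · exact natDegree_mul_le.trans (by omega)
  have hQ : Q' - Q = 0 := by
    by_contra hne
    have h1 : ((Q' - Q) * (g * h)).natDegree = (Q' - Q).natDegree + 2 * m := by
      rw [mul_comm, (hg.mul hhm).natDegree_mul' hne, hg.natDegree_mul hhm, hhd]; omega
    have h2 : (Q' - Q) * (g * h) = f * W - (R' * g - R * h) := by rw [key]; ring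
    have h3 : (f * W - (R' * g - R * h)).natDegree ≤ 2 * m - 1 :=
      (natDegree_sub_le_of_le hfW hRR).trans (by simp)
    rw [← h2, h1] at h3
    omega
  rw [hQ, zero_mul, zero_add] at key
  have hc := congrArg (fun q => q.coeff (2 * m - 1)) key
  simp only [coeff_sub] at hc
  have s1 : 2 * m - 1 = d + (2 * m - d - 1) := by omega
  have s2 : 2 * m - 1 = (m - 1) + m := by omega
  rw [s1, coeff_mul_add_eq_of_natDegree_le hf.le hWd, ← s1, s2,
    coeff_mul_add_eq_of_natDegree_le hR' le_rfl,
    coeff_mul_add_eq_of_natDegree_le hR hhd.le, hWc, hg.coeff_natDegree] at hc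
  have : h.coeff m = 1 := by rw [← hhd]; exact hhm.coeff_natDegree
  rw [this] at hc
  linear_combination -hc
end tr

end KW

namespace KW

open Polynomial

section monic
variable {p : ℕ} [Fact p.Prime]

lemma monic_finite (p : ℕ) [Fact p.Prime] (m : ℕ) :
    {g : (ZMod p)[X] | g.Monic ∧ g.natDegree = m}.Finite := by
  have : Function.Injective (fun g : {g : (ZMod p)[X] | g.Monic ∧ g.natDegree = m} =>
      fun i : Fin (m+1) => g.1.coeff i) := by
    rintro ⟨g, hg, hgd⟩ ⟨h, hh, hhd⟩ he
    apply Subtype.ext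
    ext i
    by_cases hi : i ≤ m
    · exact congrFun he ⟨i, by omega⟩
    · simp only
      rw [coeff_eq_zero_of_natDegree_lt (by omega), coeff_eq_zero_of_natDegree_lt (by omega)]
  exact Set.finite_coe_iff.1 (Finite.of_injective _ this)

/-- monic polynomials of degree `m`. -/
noncomputable def Mon (p : ℕ) [Fact p.Prime] (m : ℕ) : Finset (ZMod p)[X] := (monic_finite p m).toFinset

lemma mem_Mon {m : ℕ} {g : (ZMod p)[X]} : g ∈ Mon p m ↔ g.Monic ∧ g.natDegree = m := by
  simp [Mon]

open Classical in
/-- monic irreducible polynomials of degree `m`. -/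
noncomputable def Irr (p : ℕ) [Fact p.Prime] (m : ℕ) : Finset (ZMod p)[X] :=
  (Mon p m).filter Irreducible

lemma mem_Irr {m : ℕ} {g : (ZMod p)[X]} :
    g ∈ Irr p m ↔ (g.Monic ∧ g.natDegree = m) ∧ Irreducible g := by
  simp [Irr, mem_Mon]

/-- coefficients of the L-function. -/
noncomputable def A (ψ : AddChar (ZMod p) ℂ) (f : (ZMod p)[X]) (m : ℕ) : ℂ :=
  ∑ g ∈ Mon p m, ψ (tr f g)

/-- combinatorial version of the exponential sums over extensions. -/
noncomputable def Sc (ψ : AddChar (ZMod p) ℂ) (f : (ZMod p)[X]) (j : ℕ) : ℂ :=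
  ∑ e ∈ j.divisors, ∑ P ∈ Irr p e, (e : ℂ) * ψ (tr f P) ^ (j / e)

lemma A_zero (ψ : AddChar (ZMod p) ℂ) (f : (ZMod p)[X]) : A ψ f 0 = 1 := by
  have : Mon p 0 = {1} := by
    ext g
    rw [mem_Mon, mem_singleton]
    constructor
    · rintro ⟨h, h'⟩; exact h.natDegree_eq_zero.1 h'
    · rintro rfl; simp
  simp [A, this, tr_one]

lemma A_eq_zero {ψ : AddChar (ZMod p) ℂ} (hψ : ψ ≠ 1) {f : (ZMod p)[X]} {d : ℕ}
    (hf : f.natDegree = d) (hd : 0 < d) (hdp : (d : ZMod p) ≠ 0) {m : ℕ} (hm : d ≤ m) :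
    A ψ f m = 0 := by
  obtain ⟨y, hy⟩ : ∃ y, ψ y ≠ 1 := by
    by_contra! h
    exact hψ (by ext y; simp [h y])
  have ha : f.coeff d ≠ 0 := by
    rw [← hf]
    have : f ≠ 0 := by rintro rfl; simp at hf; omega
    simpa using this
  set c : ZMod p := -y / (d * f.coeff d) with hc
  have hcy : -(c * d * f.coeff d) = y := by rw [hc]; field_simp
  have hdeg : ∀ (c : ZMod p), ∀ g ∈ Mon p m, g + C c * X ^ (m - d) ∈ Mon p m := by
    intro c g hg
    rw [mem_Mon] at hg ⊢
    have hlt : (C c * X ^ (m - d)).degree < g.degree := by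
      rw [degree_eq_natDegree hg.1.ne_zero]
      refine (degree_C_mul_X_pow_le _ _).trans_lt ?_
      rw [hg.2]
      exact_mod_cast (by omega : m - d < m)
    exact ⟨hg.1.add_of_left hlt, (natDegree_add_eq_left_of_degree_lt hlt).trans hg.2⟩
  have key : A ψ f m = ψ y * A ψ f m := by
    unfold A
    rw [mul_sum]
    symm
    refine Finset.sum_nbij' (fun g => g + C c * X ^ (m - d)) (fun g => g + C (-c) * X ^ (m - d))
      (hdeg c) (hdeg (-c)) ?_ ?_ ?_
    · intro g _; simp
    · intro g _; simp
    · intro g hg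
      rw [mem_Mon] at hg
      have := tr_shift f hg.1 hf hd (by rw [hg.2]; exact hm) c
      rw [hg.2] at this
      rw [this, sub_eq_add_neg, hcy, AddChar.map_add_eq_mul, mul_comm]
  have : (1 - ψ y) * A ψ f m = 0 := by linear_combination key
  rcases mul_eq_zero.1 this with h | h
  · exact absurd (by linear_combination -h) hy
  · exact h

open UniqueFactorizationMonoid in
open Classical in
lemma deg_sum {m : ℕ} {g : (ZMod p)[X]} (hg : g ∈ Mon p m) :
    ∑ e ∈ Icc 1 m, ∑ P ∈ Irr p e, ∑ k ∈ Icc 1 m, (if P ^ k ∣ g then e else 0) = m := by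
  rw [mem_Mon] at hg
  obtain ⟨hgm, hgd⟩ := hg
  set nf := normalizedFactors g with hnf
  have hmon : ∀ P ∈ nf, P.Monic := fun P hP => by
    have h1 := normalize_normalized_factor P hP
    have h2 : P ≠ 0 := (irreducible_of_normalized_factor P hP).ne_zero
    rw [← h1]; exact monic_normalize h2
  have hprod : nf.prod = g := by
    rw [prod_normalizedFactors_eq hgm.ne_zero, hgm.normalize_eq_self]
  have hsum : ∑ P ∈ nf.toFinset, nf.count P • P.natDegree = m := by
    rw [← Finset.sum_multiset_map_count, ← natDegree_multiset_prod_of_monic _ hmon, hprod, hgd]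
  have hdvd : ∀ P : (ZMod p)[X], P.Monic → Irreducible P → ∀ k, P ^ k ∣ g ↔ k ≤ nf.count P := by
    intro P hP hi k
    rw [pow_dvd_iff_le_emultiplicity, emultiplicity_eq_count_normalizedFactors hi hgm.ne_zero,
      hP.normalize_eq_self]
    exact_mod_cast Iff.rfl
  have hinner : ∀ e ∈ Icc 1 m, ∀ P ∈ Irr p e, ∑ k ∈ Icc 1 m, (if P ^ k ∣ g then e else 0)
      = nf.count P • P.natDegree := by
    intro e he P hP
    rw [mem_Irr] at hP
    obtain ⟨⟨hP, hPe⟩, hi⟩ := hP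
    have hle : nf.count P ≤ m := by
      have h1 := natDegree_le_of_dvd ((hdvd P hP hi _).2 le_rfl) hgm.ne_zero
      rw [natDegree_pow, hPe, hgd] at h1
      have := (mem_Icc.1 he).1
      nlinarith
    rw [← Finset.sum_filter, hPe]
    have : (Icc 1 m).filter (fun k => P ^ k ∣ g) = Icc 1 (nf.count P) := by
      ext k
      simp only [mem_filter, mem_Icc, hdvd P hP hi]
      omega
    rw [this]; simp
  rw [Finset.sum_congr rfl fun e he => Finset.sum_congr rfl (hinner e he)]
  rw [← Finset.sum_biUnion]
  · rw [← hsum]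
    symm
    apply Finset.sum_subset
    · intro P hP
      rw [Multiset.mem_toFinset] at hP
      have hi := irreducible_of_normalized_factor P hP
      rw [mem_biUnion]
      refine ⟨P.natDegree, ?_, mem_Irr.2 ⟨⟨hmon P hP, rfl⟩, hi⟩⟩
      rw [mem_Icc]
      refine ⟨hi.natDegree_pos, ?_⟩
      rw [hsum, ← hgd]
      exact natDegree_le_of_dvd (dvd_of_mem_normalizedFactors hP) hgm.ne_zero
    · intro P _ hP
      rw [Multiset.mem_toFinset] at hP
      rw [Multiset.count_eq_zero.2 hP, zero_smul]
  · intro e _ e' _ hne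
    rw [Function.onFun, Finset.disjoint_left]
    intro P hP hP'
    rw [mem_Irr] at hP hP'
    exact hne (hP.1.2.symm.trans hP'.1.2)

open Classical in
lemma sum_dvd (ψ : AddChar (ZMod p) ℂ) (f : (ZMod p)[X]) {m e k : ℕ} {P : (ZMod p)[X]}
    (hP : P.Monic) (he : P.natDegree = e) :
    ∑ g ∈ Mon p m, (if P ^ k ∣ g then ψ (tr f g) else 0) =
      if k * e ≤ m then ψ (tr f P) ^ k * A ψ f (m - k * e) else 0 := by
  rw [← Finset.sum_filter]
  split_ifs with h
  · unfold A
    rw [mul_sum]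
    symm
    refine Finset.sum_nbij' (fun g => P ^ k * g) (fun g => g /ₘ (P ^ k)) ?_ ?_ ?_ ?_ ?_
    · intro g hg
      rw [mem_Mon] at hg
      rw [mem_filter, mem_Mon]
      refine ⟨⟨(hP.pow k).mul hg.1, ?_⟩, dvd_mul_right _ _⟩
      rw [(hP.pow k).natDegree_mul hg.1, natDegree_pow, he, hg.2]; omega
    · intro g hg
      rw [mem_filter, mem_Mon] at hg
      obtain ⟨⟨h1, h2⟩, q, rfl⟩ := hg
      rw [mul_divByMonic_cancel_left _ (hP.pow k), mem_Mon]
      have hq : q.Monic := (hP.pow k).of_mul_monic_left h1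
      refine ⟨hq, ?_⟩
      rw [(hP.pow k).natDegree_mul hq, natDegree_pow, he] at h2
      omega
    · intro g _
      exact mul_divByMonic_cancel_left _ (hP.pow k)
    · intro g hg
      rw [mem_filter] at hg
      obtain ⟨_, q, rfl⟩ := hg
      rw [mul_divByMonic_cancel_left _ (hP.pow k)]
    · intro g hg
      rw [mem_Mon] at hg
      rw [tr_mul f (hP.pow k) hg.1, AddChar.map_add_eq_mul, tr_pow f hP, ← nsmul_eq_mul,
        AddChar.map_nsmul_eq_pow]
  · apply Finset.sum_eq_zero
    intro g hg
    rw [mem_filter, mem_Mon] at hg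
    exfalso
    have h1 := natDegree_le_of_dvd hg.2 hg.1.1.ne_zero
    rw [natDegree_pow, he, hg.1.2] at h1
    exact h h1

lemma newton (ψ : AddChar (ZMod p) ℂ) (f : (ZMod p)[X]) (m : ℕ) :
    (m : ℂ) * A ψ f m = ∑ j ∈ Icc 1 m, Sc ψ f j * A ψ f (m - j) := by
  classical
  have h1 : (m : ℂ) * A ψ f m = ∑ e ∈ Icc 1 m, ∑ P ∈ Irr p e, ∑ k ∈ Icc 1 m,
      (e : ℂ) * ∑ g ∈ Mon p m, (if P ^ k ∣ g then ψ (tr f g) else 0) := by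
    unfold A
    rw [mul_sum]
    have : ∀ g ∈ Mon p m, (m : ℂ) * ψ (tr f g) = ∑ e ∈ Icc 1 m, ∑ P ∈ Irr p e, ∑ k ∈ Icc 1 m,
        (e : ℂ) * (if P ^ k ∣ g then ψ (tr f g) else 0) := by
      intro g hg
      have h := congrArg (fun n : ℕ => (n : ℂ)) (deg_sum hg)
      conv_lhs => rw [← h]
      push_cast
      simp only [sum_mul]
      refine sum_congr rfl fun e _ => sum_congr rfl fun P _ => sum_congr rfl fun k _ => ?_
      split_ifs <;> simp
    rw [sum_congr rfl this, sum_comm]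
    refine sum_congr rfl fun e _ => ?_
    rw [sum_comm]
    refine sum_congr rfl fun P _ => ?_
    rw [sum_comm]
    refine sum_congr rfl fun k _ => ?_
    rw [mul_sum]
  rw [h1]
  have h2 : ∀ j ∈ Icc 1 m, Sc ψ f j * A ψ f (m - j) = ∑ e ∈ Icc 1 m, ∑ P ∈ Irr p e,
      if e ∣ j then (e : ℂ) * (ψ (tr f P) ^ (j / e) * A ψ f (m - j)) else 0 := by
    intro j hj
    rw [mem_Icc] at hj
    unfold Sc
    have : j.divisors = (Icc 1 m).filter (· ∣ j) := by
      ext e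
      rw [Nat.mem_divisors, mem_filter, mem_Icc]
      constructor
      · rintro ⟨h, h0⟩
        exact ⟨⟨Nat.pos_of_dvd_of_pos h (by omega), (Nat.le_of_dvd (by omega) h).trans hj.2⟩, h⟩
      · rintro ⟨_, h⟩; exact ⟨h, by omega⟩
    rw [this, sum_filter, sum_mul]
    refine sum_congr rfl fun e _ => ?_
    split_ifs with h
    · rw [sum_mul]; refine sum_congr rfl fun P _ => by ring
    · simp
  rw [sum_congr rfl h2, sum_comm]
  refine sum_congr rfl fun e he => ?_
  symm
  rw [sum_comm]
  symm
  refine sum_congr rfl fun P hP => ?_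
  rw [mem_Irr] at hP
  have h3 : ∀ k ∈ Icc 1 m, (e : ℂ) * ∑ g ∈ Mon p m, (if P ^ k ∣ g then ψ (tr f g) else 0) =
      if k * e ≤ m then (e : ℂ) * (ψ (tr f P) ^ k * A ψ f (m - k * e)) else 0 := by
    intro k _
    rw [sum_dvd ψ f hP.1.1 hP.1.2]
    split_ifs <;> simp
  rw [sum_congr rfl h3, ← sum_filter, ← sum_filter]
  have he1 := (mem_Icc.1 he).1
  refine sum_nbij' (fun k => k * e) (fun j => j / e) ?_ ?_ ?_ ?_ ?_
  · intro k hk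
    simp only [mem_filter, mem_Icc] at hk ⊢
    exact ⟨⟨Nat.mul_pos hk.1.1 he1, hk.2⟩, dvd_mul_left _ _⟩
  · intro j hj
    simp only [mem_filter, mem_Icc] at hj ⊢
    obtain ⟨⟨h1, h2⟩, k, rfl⟩ := hj
    rw [Nat.mul_div_cancel_left _ he1]
    refine ⟨⟨Nat.pos_of_mul_pos_left h1, ?_⟩, by rwa [mul_comm]⟩
    nlinarith
  · intro k _; exact Nat.mul_div_cancel _ he1
  · intro j hj
    simp only [mem_filter] at hj
    exact Nat.div_mul_cancel hj.2
  · intro k _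
    rw [Nat.mul_div_cancel _ he1]
end monic
end KW

namespace KW

open Polynomial

section ext
open IntermediateField
variable {p : ℕ} [Fact p.Prime]

lemma trace_gen {L : Type*} [Field L] [Algebra (ZMod p) L] [Finite L] (f : (ZMod p)[X])
    (pb : PowerBasis (ZMod p) L) :
    Algebra.trace (ZMod p) L (aeval pb.gen f) = tr f (minpoly (ZMod p) pb.gen) := by
  classical
  let E := AlgebraicClosure (ZMod p)
  apply (algebraMap (ZMod p) E).injective
  have hinteg : IsIntegral (ZMod p) pb.gen := .of_finite _ _
  have hsep : IsSeparable (ZMod p) pb.gen := Algebra.IsSeparable.isSeparable _ _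
  rw [trace_eq_sum_embeddings E, tr_map _ f (minpoly.monic hinteg),
    tr_splits _ ((minpoly.monic hinteg).map _) (IsAlgClosed.splits _)]
  rw [Fintype.sum_equiv pb.liftEquiv' _ (fun y => (f.map (algebraMap (ZMod p) E)).eval y.1)]
  · rw [Finset.sum_mem_multiset _ _ (fun a => (f.map (algebraMap (ZMod p) E)).eval a),
      Finset.sum_eq_multiset_sum, Multiset.toFinset_val, Multiset.dedup_eq_self.mpr]
    · exact nodup_roots ((separable_map _).mpr hsep)
    · intro x; rfl
  · intro σ
    rw [PowerBasis.liftEquiv'_apply_coe, eval_map, ← aeval_def, ← aeval_algHom_apply]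

lemma trace_elem {K : Type*} [Field K] [Algebra (ZMod p) K] [Finite K] (f : (ZMod p)[X]) (x : K) :
    Algebra.trace (ZMod p) K (aeval x f) =
      ((Module.finrank (ZMod p) K / (minpoly (ZMod p) x).natDegree : ℕ) : ZMod p) *
        tr f (minpoly (ZMod p) x) := by
  have hinteg : IsIntegral (ZMod p) x := .of_finite _ _
  let pb := adjoin.powerBasis hinteg
  have hgen : algebraMap (ZMod p)⟮x⟯ K pb.gen = x := by
    simp [pb, adjoin.powerBasis_gen]
  have h1 : aeval x f = algebraMap (ZMod p)⟮x⟯ K (aeval pb.gen f) := by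
    rw [← aeval_algebraMap_apply, hgen]
  have h2 : minpoly (ZMod p) pb.gen = minpoly (ZMod p) x := by
    rw [← minpoly.algebraMap_eq (algebraMap (ZMod p)⟮x⟯ K).injective, hgen]
  rw [h1, ← Algebra.trace_trace (S := (ZMod p)⟮x⟯), Algebra.trace_algebraMap,
    LinearMap.map_smul_of_tower, trace_gen, h2, nsmul_eq_mul]
  congr 2
  have h3 := Module.finrank_mul_finrank (ZMod p) (ZMod p)⟮x⟯ K
  rw [← h3, adjoin.finrank hinteg, Nat.mul_div_cancel_left _ (minpoly.natDegree_pos hinteg)]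

lemma card_fiber {K : Type*} [Field K] [Algebra (ZMod p) K] [Fintype K] [DecidableEq K] 
    [DecidableEq (ZMod p)[X]] {e : ℕ}
    (he : e ∣ Module.finrank (ZMod p) K) {P : (ZMod p)[X]} (hP : P ∈ Irr p e) :
    (univ.filter fun x : K => minpoly (ZMod p) x = P).card = e := by
  rw [mem_Irr] at hP
  obtain ⟨⟨hPm, hPe⟩, hi⟩ := hP
  have h1 : (univ.filter fun x : K => minpoly (ZMod p) x = P) = (P.aroots K).toFinset := by
    ext x
    rw [mem_filter, Multiset.mem_toFinset, mem_aroots]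
    constructor
    · rintro ⟨_, rfl⟩; exact ⟨hPm.ne_zero, minpoly.aeval _ _⟩
    · rintro ⟨_, h⟩
      exact ⟨mem_univ _, (minpoly.eq_of_irreducible_of_monic hi h hPm).symm⟩
  have hsep : P.Separable := PerfectField.separable_of_irreducible hi
  have hsp : (P.map (algebraMap (ZMod p) K)).Splits := by
    rw [← hPe, hi.natDegree_dvd_iff_dvd_X_pow_card_pow_sub_X] at he
    have hc : Nat.card (ZMod p) ^ Module.finrank (ZMod p) K = Nat.card K := 
      (Module.natCard_eq_pow_finrank (K := ZMod p) (V := K)).symm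
    rw [hc] at he
    have h2 := FiniteField.splits_X_pow_nat_card_sub_X (K := K) p
    refine h2.of_dvd ?_ (Polynomial.map_dvd _ he)
    rw [Polynomial.map_ne_zero_iff (algebraMap (ZMod p) K).injective]
    exact FiniteField.X_pow_card_sub_X_ne_zero _ Finite.one_lt_card
  rw [h1, Multiset.toFinset_card_of_nodup (nodup_roots hsep.map), 
    ← hsp.natDegree_eq_card_roots, natDegree_map, hPe]

lemma Sc_eq (ψ : AddChar (ZMod p) ℂ) (f : (ZMod p)[X]) (K : Type*) [Field K] [Algebra (ZMod p) K]
    [Fintype K] {n : ℕ} (hn : Module.finrank (ZMod p) K = n) :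
    Sc ψ f n = ∑ x : K, ψ (Algebra.trace (ZMod p) K (aeval x f)) := by
  classical
  have hn0 : n ≠ 0 := by rw [← hn]; exact Module.finrank_pos.ne'
  have hdis : (n.divisors : Set ℕ).PairwiseDisjoint (Irr p) := by
    intro e _ e' _ hne
    rw [Function.onFun, Finset.disjoint_left]
    intro P hP hP'
    rw [mem_Irr] at hP hP'
    exact hne (hP.1.2.symm.trans hP'.1.2)
  have hmaps : ∀ x ∈ (univ : Finset K), minpoly (ZMod p) x ∈ n.divisors.biUnion (Irr p) := by
    intro x _
    have hinteg : IsIntegral (ZMod p) x := .of_finite _ _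
    rw [mem_biUnion]
    refine ⟨(minpoly (ZMod p) x).natDegree, ?_, mem_Irr.2 ⟨⟨minpoly.monic hinteg, rfl⟩, minpoly.irreducible hinteg⟩⟩
    rw [Nat.mem_divisors]
    exact ⟨hn ▸ minpoly.degree_dvd hinteg, hn0⟩
  rw [← Finset.sum_fiberwise_of_maps_to hmaps, Finset.sum_biUnion hdis]
  unfold Sc
  refine sum_congr rfl fun e he => sum_congr rfl fun P hP => ?_
  have hc := card_fiber (K := K) (hn ▸ (Nat.mem_divisors.1 he).1) hP
  have : ∀ x ∈ univ.filter (fun x : K => minpoly (ZMod p) x = P), 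
      ψ (Algebra.trace (ZMod p) K (aeval x f)) = ψ (tr f P) ^ (n / e) := by
    intro x hx
    rw [mem_filter] at hx
    rw [trace_elem, hx.2, hn, ← nsmul_eq_mul, AddChar.map_nsmul_eq_pow, (mem_Irr.1 hP).1.2]
  rw [sum_congr rfl this, sum_const, hc, nsmul_eq_mul]
end ext
end KW

namespace KW

open Polynomial

section stepanov
variable {p : ℕ} [Fact p.Prime]

lemma stepanov {K : Type*} [Field K] [Algebra (ZMod p) K] [Fintype K] [DecidableEq K] {μ d : ℕ}
    (hK : Module.finrank (ZMod p) K = 2 * (μ + 1)) {f : (ZMod p)[X]} (hf : f.natDegree = d)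
    (hd : 0 < d) (hdp : ¬ p ∣ d) (b : ZMod p) (hμ : p ^ μ + d + 1 < p ^ (μ + 1)) :
    (univ.filter fun x : K => Algebra.trace (ZMod p) K (aeval x f) = b).card ≤
      p ^ (2 * μ + 1) + p ^ μ + (2 * d + 1) * p ^ (μ + 1) := by
  have hp : p.Prime := Fact.out
  have hp1 := hp.one_lt
  have : CharP K p := charP_of_injective_algebraMap (algebraMap (ZMod p) K).injective p
  have hcard : Fintype.card K = p ^ (2 * (μ + 1)) := by
    rw [Module.card_eq_pow_finrank (K := ZMod p), hK, ZMod.card]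
  set q := p ^ μ with hq
  have hq1 : p ^ (μ + 1) = p * q := by rw [pow_succ, mul_comm]
  have hq0 : 0 < q := pow_pos hp.pos _
  set fK := f.map (algebraMap (ZMod p) K) with hfK
  have hfKd : fK.natDegree = d := by rw [hfK, natDegree_map, hf]
  set g : K[X] := ∑ i ∈ range (μ + 1), fK ^ (p ^ i) with hg
  have hgd : g.natDegree = d * q := by
    rw [hg, sum_range_succ]
    rw [natDegree_add_eq_right_of_natDegree_lt]
    · rw [natDegree_pow, hfKd, mul_comm]
    · rw [natDegree_pow, hfKd, mul_comm (p ^ μ)]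
      have hle : (∑ i ∈ range μ, fK ^ (p ^ i)).natDegree ≤ d * p ^ (μ - 1) ∧ (μ = 0 → (∑ i ∈ range μ, fK ^ (p ^ i)).natDegree = 0) := by
        constructor
        · apply natDegree_sum_le_of_forall_le
          intro i hi
          rw [natDegree_pow, hfKd, mul_comm]
          exact Nat.mul_le_mul_left _ (Nat.pow_le_pow_right hp.pos (by have := mem_range.1 hi; omega))
        · rintro rfl; simp
      rcases Nat.eq_zero_or_pos μ with h0 | h0
      · rw [hle.2 h0]; positivity
      · refine hle.1.trans_lt (Nat.mul_lt_mul_of_pos_left (Nat.pow_lt_pow_right hp1 (by omega)) hd)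
  have hg0 : g ≠ 0 := by
    intro h; rw [h] at hgd; simp at hgd; omega
  set bK : K := algebraMap (ZMod p) K b with hbK
  set B := q + d + 1 with hB
  let ι := Fin q × Fin B × Fin p
  set D := q * (p * q) + B + d * (p * q) with hD
  let E : ι → K[X] := fun t => X ^ (t.1.1 * (p * q) + t.2.1.1) * (C bK - g) ^ t.2.2.1
  have hE : ∀ t, E t ∈ degreeLT K D := by
    intro t
    rw [mem_degreeLT]
    refine (degree_le_natDegree).trans_lt ?_
    have h1 : (E t).natDegree ≤ t.1.1 * (p * q) + t.2.1.1 + t.2.2.1 * (d * q) := by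
      refine natDegree_mul_le.trans ?_
      rw [natDegree_X_pow]
      gcongr
      refine natDegree_pow_le.trans ?_
      gcongr
      refine (natDegree_sub_le _ _).trans ?_
      simp [hgd]
    have h2 : t.1.1 * (p * q) ≤ q * (p * q) := Nat.mul_le_mul_right _ t.1.2.le
    have h3 : t.2.2.1 * (d * q) ≤ p * (d * q) := Nat.mul_le_mul_right _ t.2.2.2.le
    have h4 := t.2.1.2
    have : p * (d * q) = d * (p * q) := by ring
    exact_mod_cast (by omega : (E t).natDegree < D)
  obtain ⟨c, hc, t0, ht0⟩ : ∃ c : ι → K, ∑ t, c t • E t = 0 ∧ ∃ t, c t ≠ 0 := by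
    have hnli : ¬ LinearIndependent K (fun t => (⟨E t, hE t⟩ : degreeLT K D)) := by
      intro hli
      have : Module.Finite K (degreeLT K D) := Module.Finite.equiv (degreeLTEquiv K D).symm
      have h1 := hli.fintype_card_le_finrank
      rw [(degreeLTEquiv K D).finrank_eq] at h1
      simp only [ι, Fintype.card_prod, Fintype.card_fin, Module.finrank_fin_fun] at h1
      rw [hq1] at hμ
      have : q * (B * p) = q * (p * q) + d * (p * q) + p * q := by rw [hB]; ring
      omega
    rw [Fintype.not_linearIndependent_iff] at hnli
    obtain ⟨c, hc, t0, ht0⟩ := hnli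
    refine ⟨c, ?_, t0, ht0⟩
    have := congrArg (Submodule.subtype _) hc
    simpa using this
  let V : ι → K[X] := fun t => X ^ (t.1.1 + t.2.1.1 * (p * q)) * g ^ t.2.2.1
  have hV0 : ∀ t, V t ≠ 0 := fun t => mul_ne_zero (pow_ne_zero _ X_ne_zero) (pow_ne_zero _ hg0)
  have hVd : ∀ t, (V t).natDegree = t.1.1 + q * (t.2.1.1 * p + t.2.2.1 * d) := by
    intro t
    rw [natDegree_mul (pow_ne_zero _ X_ne_zero) (pow_ne_zero _ hg0), natDegree_X_pow,
      natDegree_pow, hgd]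
    ring
  have hVinj : Function.Injective fun t => (V t).natDegree := by
    rintro ⟨a, i, j⟩ ⟨a', i', j'⟩ h
    simp only [hVd] at h
    have ha : a.1 = a'.1 := by
      have := congrArg (· % q) h
      simpa [Nat.add_mul_mod_self_left, Nat.mod_eq_of_lt a.2, Nat.mod_eq_of_lt a'.2] using this
    have hij : i.1 * p + j.1 * d = i'.1 * p + j'.1 * d := by
      rw [ha] at h
      exact Nat.eq_of_mul_eq_mul_left hq0 (Nat.add_left_cancel h)
    have hj : j.1 = j'.1 := by
      have h1 : j.1 * d ≡ j'.1 * d [MOD p] := by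
        have := congrArg (· % p) hij
        simpa [Nat.ModEq, Nat.add_comm, Nat.add_mul_mod_self_right] using this
      have h2 : j.1 ≡ j'.1 [MOD p] :=
        Nat.ModEq.cancel_right_of_coprime ((Nat.Prime.coprime_iff_not_dvd hp).2 hdp) h1
      have := h2
      rwa [Nat.ModEq, Nat.mod_eq_of_lt j.2, Nat.mod_eq_of_lt j'.2] at this
    have hi : i.1 = i'.1 := by
      rw [hj] at hij
      exact Nat.eq_of_mul_eq_mul_right hp.pos (Nat.add_right_cancel hij)
    exact Prod.ext (Fin.ext ha) (Prod.ext (Fin.ext hi) (Fin.ext hj))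
  set H : K[X] := ∑ t, C (c t ^ (p * q)) * V t with hH
  have hterm : ∀ t, c t ≠ 0 → (C (c t ^ (p * q)) * V t).degree = (V t).degree := fun t ht =>
    degree_C_mul (pow_ne_zero _ ht)
  have hH0 : H ≠ 0 := by
    have h1 : H.degree = univ.sup fun t => (C (c t ^ (p * q)) * V t).degree := by
      apply degree_sum_eq_of_disjoint
      intro t ht t' ht' hne
      have hct : c t ≠ 0 := by
        rintro h; apply ht.2; simp [h, hp.ne_zero, hq0.ne']
      have hct' : c t' ≠ 0 := by
        rintro h; apply ht'.2; simp [h, hp.ne_zero, hq0.ne']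
      simp only [Function.onFun, Function.comp, hterm t hct, hterm t' hct']
      intro h
      exact hne (hVinj (natDegree_eq_of_degree_eq h))
    have h2 : (V t0).degree ≤ H.degree := by
      rw [h1, ← hterm t0 ht0]
      exact Finset.le_sup (f := fun t => (C (c t ^ (p * q)) * V t).degree) (mem_univ t0)
    intro h
    rw [h, degree_zero, le_bot_iff, degree_eq_bot] at h2
    exact hV0 t0 h2
  have hHd : H.natDegree ≤ q + (B + d) * (p * q) := by
    apply natDegree_sum_le_of_forall_le
    intro t _
    refine (natDegree_C_mul_le _ _).trans ?_
    rw [hVd]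
    have h1 : t.2.1.1 * p ≤ B * p := Nat.mul_le_mul_right _ t.2.1.2.le
    have h2 : t.2.2.1 * d ≤ p * d := Nat.mul_le_mul_right _ t.2.2.2.le
    have h3 := t.1.2.le
    calc t.1.1 + q * (t.2.1.1 * p + t.2.2.1 * d) ≤ q + q * (B * p + p * d) := by gcongr
      _ = q + (B + d) * (p * q) := by ring
  have hroot : ∀ x : K, Algebra.trace (ZMod p) K (aeval x f) = b → H.eval x = 0 := by
    intro x hx
    have hpq : p * q = p ^ (μ + 1) := hq1.symm
    have hfrob : ∀ y : K, y ^ ((p * q) * (p * q)) = y := by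
      intro y
      have : (p * q) * (p * q) = Fintype.card K := by rw [hcard, hpq]; ring
      rw [this, FiniteField.pow_card]
    have hgx : (g.eval x) ^ (p * q) = bK - g.eval x := by
      have h1 := FiniteField.algebraMap_trace_eq_sum_pow (ZMod p) K (aeval x f)
      rw [hx, hK, Nat.card_zmod, two_mul, sum_range_add] at h1
      have h2 : g.eval x = ∑ i ∈ range (μ + 1), (aeval x f) ^ p ^ i := by
        rw [hg, eval_finsetSum]
        refine sum_congr rfl fun i _ => ?_
        rw [eval_pow, hfK, eval_map, aeval_def]
      have h3 : (g.eval x) ^ (p * q) = ∑ i ∈ range (μ + 1), (aeval x f) ^ p ^ (μ + 1 + i) := by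
        rw [h2, hpq, sum_pow_char_pow]
        refine sum_congr rfl fun i _ => ?_
        rw [← pow_mul, ← pow_add]; congr 2; omega
      rw [h3, h2, hbK, h1]; ring
    have h0 : (H.eval x) ^ (p * q) = 0 := by
      have h1 : (H.eval x) ^ (p * q) = (∑ t, c t • E t).eval x := by
        rw [hH, eval_finsetSum, eval_finsetSum]
        have : ∀ s : ι → K, (∑ t, s t) ^ (p * q) = ∑ t, s t ^ (p * q) := by
          intro s; rw [hpq, sum_pow_char_pow]
        rw [this]
        refine sum_congr rfl fun t _ => ?_
        simp only [V, E, eval_mul, eval_C, eval_pow, eval_X, eval_smul, eval_sub, smul_eq_mul]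
        rw [← hgx, mul_pow, mul_pow, ← pow_mul, hfrob, ← pow_mul, add_mul, pow_add x, mul_assoc t.2.1.1,
          mul_comm t.2.1.1, pow_mul x (p * q * (p * q)), hfrob, ← pow_mul, ← pow_mul, pow_add x,
          mul_comm t.2.2.1]
      rw [h1, hc, eval_zero]
    exact pow_eq_zero_iff (by positivity) |>.1 h0
  have hfin : (univ.filter fun x : K => Algebra.trace (ZMod p) K (aeval x f) = b).card ≤ H.natDegree := by
    calc _ ≤ H.roots.toFinset.card := by
            apply card_le_card
            intro x hx
            rw [mem_filter] at hx
            rw [Multiset.mem_toFinset, mem_roots hH0]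
            exact hroot x hx.2
      _ ≤ Multiset.card H.roots := Multiset.toFinset_card_le _
      _ ≤ _ := card_roots' H
  refine (hfin.trans hHd).trans (le_of_eq ?_)
  have : p ^ (2 * μ + 1) = q * (p * q) := by rw [hq]; ring
  rw [this, hq1, hB]
  ring
end stepanov
end KW

namespace KW

open Polynomial

section growth

lemma growth (t : Multiset ℂ) {r Cc : ℝ} (hr : 0 < r) {n0 : ℕ}
    (h : ∀ n, n0 ≤ n → ‖(t.map fun β => β ^ n).sum‖ ≤ Cc * r ^ n) :
    ∀ β ∈ t, ‖β‖ ≤ r := by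
  classical
  intro β hβ
  set Q : ℂ[X] := ∏ γ ∈ t.toFinset.erase β, (X - C γ) with hQ
  have hQβ : Q.eval β ≠ 0 := by
    rw [hQ, eval_prod, prod_ne_zero_iff]
    intro γ hγ
    simp only [eval_sub, eval_X, eval_C]
    exact sub_ne_zero.2 (ne_of_mem_erase hγ).symm
  have hQγ : ∀ γ ∈ t, γ ≠ β → Q.eval γ = 0 := by
    intro γ hγ hne
    rw [hQ, eval_prod]
    apply prod_eq_zero (mem_erase.2 ⟨hne, Multiset.mem_toFinset.2 hγ⟩)
    simp
  have key : ∀ n, ∑ k ∈ range (Q.natDegree + 1), Q.coeff k * (t.map fun β => β ^ (n + k)).sum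
      = (t.count β : ℂ) * (β ^ n * Q.eval β) := by
    intro n
    have h1 : ∀ k ∈ range (Q.natDegree + 1), Q.coeff k * (t.map fun β => β ^ (n + k)).sum
        = ∑ γ ∈ t.toFinset, (t.count γ : ℂ) * (γ ^ n * (Q.coeff k * γ ^ k)) := by
      intro k _
      rw [Finset.sum_multiset_map_count, mul_sum]
      refine sum_congr rfl fun γ _ => ?_
      rw [nsmul_eq_mul]; ring
    rw [sum_congr rfl h1, sum_comm]
    rw [sum_eq_single β]
    · rw [← mul_sum, ← mul_sum, ← eval_eq_sum_range]
    · intro γ hγ hne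
      rw [← mul_sum, ← mul_sum, ← eval_eq_sum_range, hQγ γ (Multiset.mem_toFinset.1 hγ) hne]
      simp
    · intro hh; exact absurd (Multiset.mem_toFinset.2 hβ) hh
  set C2 : ℝ := ∑ k ∈ range (Q.natDegree + 1), ‖Q.coeff k‖ * (Cc * r ^ k) with hC2
  have hcnt : 0 < (t.count β : ℝ) := by exact_mod_cast Multiset.count_pos.2 hβ
  have hb : ∀ n, n0 ≤ n → (t.count β : ℝ) * ‖Q.eval β‖ * ‖β‖ ^ n ≤ C2 * r ^ n := by
    intro n hn
    have h1 : (t.count β : ℝ) * ‖Q.eval β‖ * ‖β‖ ^ n = ‖(t.count β : ℂ) * (β ^ n * Q.eval β)‖ := by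
      rw [norm_mul, norm_mul, norm_pow, Complex.norm_natCast]; ring
    rw [h1, ← key, hC2, sum_mul]
    refine norm_sum_le_of_le _ fun k _ => ?_
    rw [norm_mul]
    calc _ ≤ ‖Q.coeff k‖ * (Cc * r ^ (n + k)) := by gcongr; exact h (n + k) (by omega)
      _ = _ := by rw [pow_add]; ring
  by_contra! hlt
  have ha : 0 < (t.count β : ℝ) * ‖Q.eval β‖ := mul_pos hcnt (norm_pos_iff.2 hQβ)
  have hgt : 1 < ‖β‖ / r := (one_lt_div hr).2 hlt
  have htend := tendsto_pow_atTop_atTop_of_one_lt hgt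
  obtain ⟨n, hn, hn'⟩ := ((htend.eventually_gt_atTop (C2 / ((t.count β : ℝ) * ‖Q.eval β‖))).and
    (Filter.eventually_ge_atTop n0)).exists
  have h1 := hb n hn'
  rw [div_lt_iff₀ ha, div_pow, div_mul_eq_mul_div, lt_div_iff₀ (pow_pos hr n)] at hn
  linarith
end growth

section series
open PowerSeries

lemma logderiv (s : Multiset ℂ) :
    PowerSeries.derivative ℂ ((s.map fun ω => (1 - PowerSeries.C ω * PowerSeries.X)).prod) =
      - (PowerSeries.mk fun n => (s.map fun ω => ω ^ (n + 1)).sum) *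
        (s.map fun ω => (1 - PowerSeries.C ω * PowerSeries.X)).prod := by
  induction s using Multiset.induction with
  | empty => 
    have : (PowerSeries.mk fun _ => (0 : ℂ)) = 0 := by ext; simp
    simp [this]
  | cons a s ih =>
    simp only [Multiset.map_cons, Multiset.prod_cons, Multiset.sum_cons]
    rw [Derivation.leibniz, ih]
    have h1 : PowerSeries.derivative ℂ (1 - PowerSeries.C a * PowerSeries.X) = - PowerSeries.C a := by
      rw [map_sub, Derivation.leibniz]
      simp
    have h2 : (PowerSeries.mk fun n => a ^ (n + 1)) * (1 - PowerSeries.C a * PowerSeries.X) 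
        = PowerSeries.C a := by
      ext n
      rw [mul_sub, mul_one, map_sub, mul_left_comm, PowerSeries.coeff_C_mul]
      cases n with
      | zero => simp
      | succ n => 
        rw [PowerSeries.coeff_succ_mul_X, PowerSeries.coeff_mk, PowerSeries.coeff_mk, 
          PowerSeries.coeff_C]
        simp; ring
    have h3 : (PowerSeries.mk fun n => a ^ (n + 1) + (s.map fun ω => ω ^ (n + 1)).sum) =
      (PowerSeries.mk fun n => a ^ (n + 1)) + 
        (PowerSeries.mk fun n => (s.map fun ω => ω ^ (n + 1)).sum) := by
      ext n; simp
    rw [h1, h3, smul_eq_mul, smul_eq_mul]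
    linear_combination (s.map fun ω => (1 - PowerSeries.C ω * PowerSeries.X)).prod * h2
end series

lemma factor (P : ℂ[X]) (h0 : P.coeff 0 = 1) : ∃ s : Multiset ℂ, Multiset.card s ≤ P.natDegree ∧
    P = (s.map fun ω => (1 - C ω * X)).prod := by
  have hP0 : P ≠ 0 := by rintro rfl; simp at h0
  refine ⟨P.roots.map (·⁻¹), by simpa using card_roots' P, ?_⟩
  have h1 := (IsAlgClosed.splits P).eq_prod_roots
  have hr : ∀ r ∈ P.roots, r ≠ 0 := by
    rintro r hr rfl
    rw [mem_roots hP0, IsRoot, ← coeff_zero_eq_eval_zero, h0] at hr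
    exact one_ne_zero hr
  have h2 : (P.roots.map fun r => X - C r).prod = 
      C ((P.roots.map fun r => -r).prod) * (P.roots.map fun r => (1 - C r⁻¹ * X)).prod := by
    have h4 : C ((P.roots.map fun r => -r).prod) = (P.roots.map fun r => C (-r)).prod := by
      rw [map_multiset_prod, Multiset.map_map]; rfl
    rw [h4, ← Multiset.prod_map_mul]
    congr 1
    refine Multiset.map_congr rfl fun r h => ?_
    have : C r * C r⁻¹ = (1 : ℂ[X]) := by rw [← C_mul, mul_inv_cancel₀ (hr r h), C_1]
    rw [C_neg]
    linear_combination -X * this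
  rw [Multiset.map_map]
  set R := (P.roots.map fun r => (1 - C r⁻¹ * X)).prod with hR
  have hR0 : R.coeff 0 = 1 := by
    rw [coeff_zero_eq_eval_zero, hR, eval_multiset_prod, Multiset.map_map]
    simp
  rw [h2, ← mul_assoc, ← C_mul] at h1
  have h5 := congrArg (fun q => q.coeff 0) h1
  simp only [coeff_C_mul, hR0, h0, mul_one] at h5
  rw [← h5, C_1, one_mul] at h1
  exact h1

section weil
variable {p : ℕ} [Fact p.Prime]

lemma Sc_roots {ψ : AddChar (ZMod p) ℂ} (hψ : ψ ≠ 1) {f : (ZMod p)[X]} {d : ℕ}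
    (hf : f.natDegree = d) (hd : 0 < d) (hdp : (d : ZMod p) ≠ 0) :
    ∃ s : Multiset ℂ, Multiset.card s ≤ d - 1 ∧ 
      ∀ n, Sc ψ f (n + 1) = - (s.map fun ω => ω ^ (n + 1)).sum := by
  set P : ℂ[X] := ∑ m ∈ range d, C (A ψ f m) * X ^ m with hP
  have hc : ∀ m, P.coeff m = A ψ f m := by
    intro m
    rw [hP, finsetSum_coeff]
    simp only [coeff_C_mul_X_pow]
    rw [Finset.sum_ite_eq]
    split_ifs with h
    · rfl
    · exact (A_eq_zero hψ hf hd hdp (by simpa using h)).symm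
  have hPd : P.natDegree ≤ d - 1 := by
    apply natDegree_sum_le_of_forall_le
    intro m hm
    refine (natDegree_C_mul_X_pow_le _ _).trans ?_
    have := mem_range.1 hm; omega
  obtain ⟨s, hs, hPs⟩ := factor P (by rw [hc, A_zero])
  refine ⟨s, hs.trans hPd, ?_⟩
  have hser : (P : PowerSeries ℂ) = (s.map fun ω => (1 - PowerSeries.C ω * PowerSeries.X)).prod := by
    conv_lhs => rw [hPs]
    have := map_multiset_prod (Polynomial.coeToPowerSeries.ringHom (R := ℂ)) (s.map fun ω => (1 - C ω * X))
    rw [Polynomial.coeToPowerSeries.ringHom_apply] at this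
    rw [this, Multiset.map_map]
    congr 1
    refine Multiset.map_congr rfl fun ω _ => ?_
    simp
  have h1 := logderiv s
  rw [← hser] at h1
  have h2 : PowerSeries.derivative ℂ (P : PowerSeries ℂ) = 
      (PowerSeries.mk fun n => Sc ψ f (n + 1)) * (P : PowerSeries ℂ) := by
    ext n
    rw [PowerSeries.coeff_derivative, PowerSeries.coeff_mul, 
      Finset.Nat.sum_antidiagonal_eq_sum_range_succ_mk]
    simp only [PowerSeries.coeff_mk, Polynomial.coeff_coe, hc]
    have h3 := newton ψ f (n + 1)
    have h4 : ∑ j ∈ Icc 1 (n + 1), Sc ψ f j * A ψ f (n + 1 - j) =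
        ∑ k ∈ range (n + 1), Sc ψ f (k + 1) * A ψ f (n - k) := by
      rw [Finset.sum_bij (fun k _ => k - 1)]
      · intro k hk; rw [mem_Icc] at hk; rw [mem_range]; omega
      · intro a ha b hb hab; rw [mem_Icc] at ha hb; omega
      · intro k hk; rw [mem_range] at hk
        exact ⟨k + 1, by rw [mem_Icc]; omega, by omega⟩
      · intro k hk; rw [mem_Icc] at hk
        have e1 : k - 1 + 1 = k := by omega
        have e2 : n - (k - 1) = n + 1 - k := by omega
        rw [e1, e2]
    rw [h4] at h3
    rw [← h3]; push_cast; ring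
  have hP0 : (P : PowerSeries ℂ) ≠ 0 := by
    intro h
    have := congrArg (PowerSeries.coeff 0) h
    rw [Polynomial.coeff_coe, hc, A_zero] at this
    simp at this
  have h3 := mul_right_cancel₀ hP0 (h2.symm.trans h1)
  intro n
  have := congrArg (PowerSeries.coeff n) h3
  simpa using this

lemma Sc_bound {ψ : AddChar (ZMod p) ℂ} (hψ : ψ ≠ 1) {f : (ZMod p)[X]} {d : ℕ}
    (hf : f.natDegree = d) (hd : 0 < d) (hdp : ¬ p ∣ d) {μ : ℕ} 
    (hμ : p ^ μ + d + 1 < p ^ (μ + 1)) :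
    ‖Sc ψ f (2 * (μ + 1))‖ ≤ (2 * p * (2 * d + 2)) * (p : ℝ) ^ (μ + 1) := by
  classical
  have hp : p.Prime := Fact.out
  let K := GaloisField p (2 * (μ + 1))
  have hK : Module.finrank (ZMod p) K = 2 * (μ + 1) := GaloisField.finrank p (by omega)
  have : Fintype K := Fintype.ofFinite K
  have hcard : Fintype.card K = p ^ (2 * (μ + 1)) := by
    rw [Module.card_eq_pow_finrank (K := ZMod p), hK, ZMod.card]
  rw [Sc_eq ψ f K hK]
  set τ : K → ZMod p := fun x => Algebra.trace (ZMod p) K (aeval x f) with hτ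
  set N : ZMod p → ℕ := fun b => (univ.filter fun x : K => τ x = b).card with hN
  set T : ℝ := (2 * d + 2) * (p : ℝ) ^ (μ + 1) with hT
  have hT0 : 0 ≤ T := by positivity
  have hNle : ∀ b, (N b : ℝ) - (p : ℝ) ^ (2 * μ + 1) ≤ T := by
    intro b
    have h1 := stepanov hK hf hd hdp b hμ
    have h2 : (N b : ℝ) ≤ (p ^ (2 * μ + 1) + p ^ μ + (2 * d + 1) * p ^ (μ + 1) : ℕ) := by
      exact_mod_cast h1
    have h3 : (p : ℝ) ^ μ ≤ (p : ℝ) ^ (μ + 1) := 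
      pow_le_pow_right₀ (by exact_mod_cast hp.one_le) (by omega)
    push_cast at h2
    rw [hT]; linarith
  have hNsum : ∑ b, ((N b : ℝ) - (p : ℝ) ^ (2 * μ + 1)) = 0 := by
    have h1 : ∑ b, N b = Fintype.card K := by
      rw [hN, ← Finset.card_univ, Finset.card_eq_sum_card_fiberwise (f := τ) (t := univ)]
      intro x _; simp
    rw [sum_sub_distrib, ← Nat.cast_sum, h1, hcard]
    simp [ZMod.card]; ring
  have hS : ∑ x : K, ψ (τ x) = ∑ b, (((N b : ℝ) - (p : ℝ) ^ (2 * μ + 1) : ℝ) : ℂ) * ψ b := by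
    have h1 : ∑ x : K, ψ (τ x) = ∑ b, (N b : ℂ) * ψ b := by
      rw [← Finset.sum_fiberwise (s := univ) (g := τ)]
      refine sum_congr rfl fun b _ => ?_
      rw [sum_congr rfl (g := fun _ => ψ b)]
      · rw [sum_const, nsmul_eq_mul]
      · intro x hx; rw [(mem_filter.1 hx).2]
    have h2 : ∑ b, ((p : ℂ) ^ (2 * μ + 1)) * ψ b = 0 := by
      rw [← mul_sum, AddChar.sum_eq_zero_of_ne_one hψ, mul_zero]
    rw [h1]
    push_cast
    simp only [sub_mul, sum_sub_distrib, h2, sub_zero]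
  rw [hS]
  calc _ ≤ ∑ b : ZMod p, (2 * T - ((N b : ℝ) - (p : ℝ) ^ (2 * μ + 1))) := by
        refine norm_sum_le_of_le _ fun b _ => ?_
        rw [norm_mul, AddChar.norm_apply, mul_one, Complex.norm_real, Real.norm_eq_abs, abs_le]
        constructor <;> linarith [hNle b]
    _ = p * (2 * T) := by
        rw [sum_sub_distrib, hNsum]; simp [ZMod.card]
    _ = _ := by rw [hT]; ring

theorem weil {ψ : AddChar (ZMod p) ℂ} (hψ : ψ ≠ 1) {f : (ZMod p)[X]} {d : ℕ}
    (hf : f.natDegree = d) (hd : 0 < d) (hdp : ¬ p ∣ d) :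
    ‖∑ x : ZMod p, ψ (f.eval x)‖ ≤ d * √p := by
  have hp : p.Prime := Fact.out
  obtain ⟨s, hs, hS⟩ := Sc_roots hψ hf hd (by rwa [Ne, ZMod.natCast_eq_zero_iff])
  have hp0 : (0 : ℝ) < p := by exact_mod_cast hp.pos
  have hω : ∀ ω ∈ s, ‖ω‖ ≤ √p := by
    have hg := growth (s.map (· ^ 2)) (r := p) (Cc := 2 * p * (2 * d + 2)) hp0 (n0 := d + 3) ?_
    · intro ω hω
      have := hg _ (Multiset.mem_map_of_mem _ hω)
      rw [norm_pow] at this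
      exact Real.le_sqrt_of_sq_le this
    · intro n hn
      obtain ⟨μ, rfl⟩ : ∃ μ, n = μ + 1 := ⟨n - 1, by omega⟩
      have h1 : p ^ μ + d + 1 < p ^ (μ + 1) := by
        have h2 : μ < 2 ^ μ := Nat.lt_two_pow_self
        have h3 : 2 ^ μ ≤ p ^ μ := Nat.pow_le_pow_left hp.two_le _
        have h4 : p ^ (μ + 1) ≥ p ^ μ * 2 := by rw [pow_succ]; exact Nat.mul_le_mul_left _ hp.two_le
        omega
      have h2 := Sc_bound hψ hf hd hdp h1
      have h3 := hS (2 * μ + 1)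
      rw [show 2 * μ + 1 + 1 = 2 * (μ + 1) by ring] at h3
      rw [h3, norm_neg] at h2
      rw [Multiset.map_map]
      simpa [← pow_mul] using h2
  have h1 : Sc ψ f 1 = ∑ x : ZMod p, ψ (f.eval x) := by
    rw [Sc_eq ψ f (ZMod p) (Module.finrank_self _)]
    refine sum_congr rfl fun x _ => ?_
    rw [Algebra.trace_self_apply, coe_aeval_eq_eval]
  rw [← h1, hS 0, norm_neg]
  have h2 : ‖(s.map fun ω => ω ^ (0 + 1)).sum‖ ≤ (s.map fun ω => ‖ω‖).sum := by
    have := Multiset.le_sum_of_subadditive (fun z : ℂ => ‖z‖) norm_zero.le norm_add_le s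
    simpa using this
  refine h2.trans ?_
  have h3 : (s.map fun ω => ‖ω‖).sum ≤ Multiset.card s • √p := by
    have := Multiset.sum_le_card_nsmul (s.map fun ω => ‖ω‖) (√p) (by
      intro x hx
      obtain ⟨ω, h, rfl⟩ := Multiset.mem_map.1 hx
      exact hω ω h)
    simpa using this
  refine h3.trans ?_
  rw [nsmul_eq_mul]
  gcongr
  omega
end weil
end KW

namespace KW

open Polynomial

section fourier
variable {p : ℕ} [Fact p.Prime]

/-- Fourier coefficients of an initial segment. -/
noncomputable def chat (p : ℕ) [Fact p.Prime] (m : ℕ) (h : ZMod p) : ℂ :=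
  ∑ r ∈ range m, (ZMod.stdAddChar (N := p)) (-(h * (r : ZMod p)))

lemma chat_expand {m : ℕ} (hm : m ≤ p) (y : ZMod p) :
    ∑ h : ZMod p, chat p m h * ZMod.stdAddChar (h * y)
      = (p : ℂ) * (if y.val < m then 1 else 0) := by
  unfold chat
  simp_rw [Finset.sum_mul]
  rw [Finset.sum_comm]
  have h1 : ∀ r ∈ range m, ∑ h : ZMod p, (ZMod.stdAddChar (N := p)) (-(h * (r : ZMod p))) *
      ZMod.stdAddChar (h * y) = if r = y.val then (p : ℂ) else 0 := by
    intro r hr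
    have hr' : r < p := lt_of_lt_of_le (Finset.mem_range.1 hr) hm
    have : ∀ h : ZMod p, (ZMod.stdAddChar (N := p)) (-(h * (r : ZMod p))) *
      ZMod.stdAddChar (h * y) = ZMod.stdAddChar (h * (y - (r : ZMod p))) := by
      intro h
      rw [← AddChar.map_add_eq_mul]
      congr 1
      ring
    simp_rw [this]
    rw [AddChar.sum_mulShift _ (ZMod.isPrimitive_stdAddChar p)]
    have : y - (r : ZMod p) = 0 ↔ r = y.val := by
      rw [sub_eq_zero]
      constructor
      · intro h
        rw [h, ZMod.val_natCast, Nat.mod_eq_of_lt hr']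
      · intro h
        rw [h, ZMod.natCast_zmod_val]
    simp only [this, ZMod.card]
    split_ifs <;> simp
  rw [Finset.sum_congr rfl h1]
  simp [Finset.sum_ite_eq']

lemma chat_zero (m : ℕ) : chat p m 0 = m := by
  simp [chat]

lemma norm_std (x : ZMod p) : ‖(ZMod.stdAddChar (N := p)) x‖ = 1 := by
  exact AddChar.norm_apply _ _

lemma norm_std_sub_one {h : ZMod p} (hh : h ≠ 0) :
    1 / ‖(ZMod.stdAddChar (N := p)) (-h) - 1‖ ≤ p / 4 * (1 / h.val + 1 / ((p - h.val : ℕ) : ℝ)) := by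
  have hp : 0 < p := (Fact.out : p.Prime).pos
  have hp' : (0:ℝ) < p := by exact_mod_cast hp
  have hk0 : 0 < h.val := by
    rcases Nat.eq_zero_or_pos h.val with h0 | h0
    · exact absurd ((ZMod.val_eq_zero h).1 h0) hh
    · exact h0
  have hkp : h.val < p := ZMod.val_lt h
  set k := h.val with hk
  have hpk : 0 < p - k := by omega
  have hk0' : (0:ℝ) < k := by exact_mod_cast hk0
  have hpk' : (0:ℝ) < ((p - k : ℕ) : ℝ) := by exact_mod_cast hpk
  have hcast : ((p - k : ℕ) : ℝ) = p - k := by rw [Nat.cast_sub hkp.le]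
  have hnorm : ‖(ZMod.stdAddChar (N := p)) (-h) - 1‖ = ‖2 * Real.sin (Real.pi * k / p)‖ := by
    have e1 : ‖(ZMod.stdAddChar (N := p)) (-h) - 1‖ = ‖(ZMod.stdAddChar (N := p)) h - 1‖ := by
      have : (ZMod.stdAddChar (N := p)) (-h) - 1
          = - (ZMod.stdAddChar (N := p)) (-h) * ((ZMod.stdAddChar (N := p)) h - 1) := by
        have h2 : (ZMod.stdAddChar (N := p)) (-h) * (ZMod.stdAddChar (N := p)) h = 1 := by
          rw [← AddChar.map_add_eq_mul]; simp
        linear_combination h2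
      rw [this, norm_mul, norm_neg, norm_std, one_mul]
    rw [e1]
    have e2 : h = ((k : ℤ) : ZMod p) := by
      rw [hk]; push_cast; rw [ZMod.natCast_zmod_val]
    rw [e2, ZMod.stdAddChar_coe]
    have := Complex.norm_exp_I_mul_ofReal_sub_one (2 * Real.pi * k / p)
    rw [show 2 * Real.pi * k / p / 2 = Real.pi * k / p by ring] at this
    rw [← this]
    congr 3
    push_cast
    ring
  have hx0 : 0 < Real.pi * k / p := by positivity
  have hsin : 2 * (min (k:ℝ) ((p - k : ℕ) : ℝ)) / p ≤ Real.sin (Real.pi * k / p) := by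
    rcases le_total (2 * (k:ℝ)) p with hle | hle
    · have := Real.mul_le_sin hx0.le (by
        rw [div_le_div_iff₀ hp' two_pos]; nlinarith [Real.pi_pos])
      rw [show 2 / Real.pi * (Real.pi * k / p) = 2 * k / p by
        field_simp] at this
      refine le_trans ?_ this
      gcongr
      exact min_le_left _ _
    · have h3 : Real.pi - Real.pi * k / p = Real.pi * (p - k) / p := by
        field_simp
      have := Real.mul_le_sin (x := Real.pi - Real.pi * k / p) (by
        rw [h3]
        have : (0:ℝ) < p - k := by rw [← hcast]; exact hpk'
        positivity) (by
        rw [h3, div_le_div_iff₀ hp' two_pos]; nlinarith [Real.pi_pos])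
      rw [Real.sin_pi_sub, h3, show 2 / Real.pi * (Real.pi * (p - k) / p) = 2 * (p - k) / p by
        field_simp, ← hcast] at this
      refine le_trans ?_ this
      gcongr
      exact min_le_right _ _
  have hmin : (0:ℝ) < min (k:ℝ) ((p - k : ℕ) : ℝ) := lt_min hk0' hpk'
  have hpos : 0 < 2 * (min (k:ℝ) ((p - k : ℕ) : ℝ)) / p := by positivity
  rw [hnorm, Real.norm_of_nonneg (by linarith)]
  calc 1 / (2 * Real.sin (Real.pi * k / p)) ≤ 1 / (2 * (2 * (min (k:ℝ) ((p - k : ℕ) : ℝ)) / p)) := by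
        apply one_div_le_one_div_of_le <;> linarith
    _ = p / 4 * (1 / (min (k:ℝ) ((p - k : ℕ) : ℝ))) := by field_simp; ring
    _ ≤ _ := by
        gcongr
        have a1 : (0:ℝ) < 1 / (k:ℝ) := by positivity
        have a2 : (0:ℝ) < 1 / ((p - k : ℕ) : ℝ) := by positivity
        rcases min_choice (k:ℝ) ((p - k : ℕ) : ℝ) with h | h <;> rw [h] <;> linarith

lemma norm_chat_le (m : ℕ) {h : ZMod p} (hh : h ≠ 0) :
    ‖chat p m h‖ ≤ p / 2 * (1 / h.val + 1 / ((p - h.val : ℕ) : ℝ)) := by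
  have hb := norm_std_sub_one hh
  set w := (ZMod.stdAddChar (N := p)) (-h) with hw
  have hc : chat p m h = ∑ r ∈ range m, w ^ r := by
    unfold chat
    refine Finset.sum_congr rfl fun r _ => ?_
    rw [hw, ← AddChar.map_nsmul_eq_pow]
    congr 1
    rw [nsmul_eq_mul]; ring
  have hw1 : w - 1 ≠ 0 := by
    intro h0
    have : (ZMod.stdAddChar (N := p)) (-h) = (ZMod.stdAddChar (N := p)) 0 := by
      rw [AddChar.map_zero_eq_one, ← hw]; exact sub_eq_zero.1 h0
    have := ZMod.injective_stdAddChar this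
    exact hh (neg_eq_zero.1 this)
  have hpos : 0 < ‖w - 1‖ := norm_pos_iff.2 hw1
  have hg : chat p m h * (w - 1) = w ^ m - 1 := by rw [hc, geom_sum_mul]
  have h2 : ‖chat p m h‖ * ‖w - 1‖ ≤ 2 := by
    rw [← norm_mul, hg]
    refine (norm_sub_le _ _).trans ?_
    rw [norm_pow, hw, norm_std]; norm_num
  have : ‖chat p m h‖ ≤ 2 * (1 / ‖w - 1‖) := by
    rw [mul_one_div, le_div_iff₀ hpos]; exact h2
  linarith

lemma sum_zmod_val {M : Type*} [AddCommMonoid M] (g : ℕ → M) :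
    ∑ h : ZMod p, g h.val = ∑ k ∈ range p, g k := by
  refine Finset.sum_nbij' (fun h => h.val) (fun k => (k : ZMod p)) ?_ ?_ ?_ ?_ ?_
  · intro h _; exact Finset.mem_range.2 (ZMod.val_lt h)
  · intro _ _; exact Finset.mem_univ _
  · intro h _; exact ZMod.natCast_zmod_val h
  · intro k hk; exact ZMod.val_cast_of_lt (Finset.mem_range.1 hk)
  · intro _ _; rfl

lemma sum_norm_chat {m : ℕ} (hm : m ≤ p) :
    ∑ h : ZMod p, ‖chat p m h‖ ≤ p * (2 + Real.log p) := by
  have hp : 0 < p := (Fact.out : p.Prime).pos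
  have hp' : (0:ℝ) < p := by exact_mod_cast hp
  have h1 : ∀ h : ZMod p, ‖chat p m h‖ ≤
      (fun k : ℕ => if k = 0 then (p:ℝ) else p / 2 * (1 / k + 1 / ((p - k : ℕ) : ℝ))) h.val := by
    intro h
    by_cases h0 : h = 0
    · subst h0
      simp [chat_zero]
      exact hm
    · have : h.val ≠ 0 := fun h' => h0 ((ZMod.val_eq_zero h).1 h')
      simp only [this, if_false]
      exact norm_chat_le m h0
  refine (Finset.sum_le_sum fun h _ => h1 h).trans ?_
  rw [sum_zmod_val (p := p) (fun k : ℕ => if k = 0 then (p:ℝ) else p / 2 * (1 / k + 1 / ((p - k : ℕ) : ℝ)))]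
  obtain ⟨q, rfl⟩ : ∃ q, p = q + 1 := ⟨p - 1, by omega⟩
  rw [Finset.sum_range_succ']
  have h2 : ∑ k ∈ range q, (if k + 1 = 0 then ((q+1 : ℕ):ℝ) else
      ((q+1 : ℕ):ℝ) / 2 * (1 / ((k+1 : ℕ) : ℝ) + 1 / ((q + 1 - (k+1) : ℕ) : ℝ)))
      = ((q+1 : ℕ):ℝ) * harmonic q := by
    have e1 : ∑ k ∈ range q, (1:ℝ) / ((k+1 : ℕ) : ℝ) = harmonic q := by
      rw [harmonic]; push_cast; simp
    have e2 : ∑ k ∈ range q, (1:ℝ) / ((q + 1 - (k+1) : ℕ) : ℝ) = harmonic q := by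
      rw [← e1, ← Finset.sum_range_reflect]
      refine Finset.sum_congr rfl fun k hk => ?_
      have := Finset.mem_range.1 hk
      congr 2
      omega
    simp only [Nat.succ_ne_zero, if_false]
    rw [← Finset.mul_sum, Finset.sum_add_distrib, e1, e2]
    ring
  rw [h2]
  simp only [if_true]
  have h3 : (harmonic q : ℝ) ≤ 1 + Real.log q := harmonic_le_one_add_log q
  have h4 : Real.log q ≤ Real.log ((q+1 : ℕ) : ℝ) := by
    rcases Nat.eq_zero_or_pos q with h | h
    · subst h; simp
    · apply Real.log_le_log (by exact_mod_cast h); push_cast; linarith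
  nlinarith

end fourier

end KW

namespace KW

open Polynomial

section box
variable {p : ℕ} [Fact p.Prime] {ι : Type*} [Fintype ι] [DecidableEq ι]

lemma char_sum (ψ : AddChar (ZMod p) ℂ) (s : Finset ι) (g : ι → ZMod p) :
    ψ (∑ i ∈ s, g i) = ∏ i ∈ s, ψ (g i) := by
  induction s using Finset.induction_on with
  | empty => simp
  | insert a s ha ih => rw [Finset.sum_insert ha, Finset.prod_insert ha, AddChar.map_add_eq_mul, ih]

lemma weil_sum {e : ι → ℕ} (he : Function.Injective e) {M : ℕ} (he1 : ∀ i, 1 ≤ e i)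
    (heM : ∀ i, e i ≤ M) (hMp : M < p) {H : ι → ZMod p} (hH : H ≠ 0) :
    ‖∑ n : ZMod p, (ZMod.stdAddChar (N := p)) (∑ i, H i * n ^ e i)‖ ≤ M * √p := by
  classical
  set f : (ZMod p)[X] := ∑ i, C (H i) * X ^ e i with hf
  have hcoef : ∀ i, f.coeff (e i) = H i := by
    intro i
    rw [hf, finsetSum_coeff, Finset.sum_eq_single i]
    · simp
    · intro j _ hj
      rw [coeff_C_mul_X_pow, if_neg]
      exact fun h => hj (he h).symm
    · simp
  obtain ⟨i, hi⟩ := Function.ne_iff.1 hH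
  have hdeg1 : 1 ≤ f.natDegree :=
    (he1 i).trans (le_natDegree_of_ne_zero (by rw [hcoef]; exact hi))
  have hdegM : f.natDegree ≤ M := by
    refine natDegree_sum_le_of_forall_le _ _ fun j _ => ?_
    exact (natDegree_C_mul_X_pow_le _ _).trans (heM j)
  have hψ : (ZMod.stdAddChar (N := p)) ≠ 1 := by
    intro h
    have h1 : (ZMod.stdAddChar (N := p)) 1 = (ZMod.stdAddChar (N := p)) 0 := by rw [h]; simp
    exact one_ne_zero (ZMod.injective_stdAddChar h1)
  have hw := weil hψ (f := f) rfl (by omega) (Nat.not_dvd_of_pos_of_lt (by omega) (by omega))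
  have hev : ∀ n : ZMod p, f.eval n = ∑ i, H i * n ^ e i := by
    intro n
    rw [hf, eval_finsetSum]
    simp
  simp_rw [hev] at hw
  refine hw.trans ?_
  gcongr

lemma box_count {e : ι → ℕ} (he : Function.Injective e) {M : ℕ} (he1 : ∀ i, 1 ≤ e i)
    (heM : ∀ i, e i ≤ M) (hMp : M < p) {m : ι → ℕ} (hm : ∀ i, m i ≤ p) :
    |((univ.filter fun n : ZMod p => ∀ i, (n ^ e i).val < m i).card : ℝ) / p
      - ∏ i, (m i : ℝ) / p| ≤ M / √p * (2 + Real.log p) ^ Fintype.card ι := by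
  have hp : 0 < p := (Fact.out : p.Prime).pos
  have hp' : (0:ℝ) < p := by exact_mod_cast hp
  set A := (univ.filter fun n : ZMod p => ∀ i, (n ^ e i).val < m i).card with hA
  set k := Fintype.card ι with hk
  set c : (ι → ZMod p) → ℂ := fun H => ∏ i, chat p (m i) (H i) with hc
  set S : (ι → ZMod p) → ℂ := fun H => ∑ n : ZMod p,
    (ZMod.stdAddChar (N := p)) (∑ i, H i * n ^ e i) with hS
  have h1 : (p:ℂ) ^ k * A = ∑ H, c H * S H := by
    have e1 : ∀ n : ZMod p, (p:ℂ) ^ k * (if ∀ i, (n ^ e i).val < m i then 1 else 0)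
        = ∑ H : ι → ZMod p, c H * (ZMod.stdAddChar (N := p)) (∑ i, H i * n ^ e i) := by
      intro n
      have e2 : (p:ℂ) ^ k * (if ∀ i, (n ^ e i).val < m i then 1 else 0)
          = ∏ i, ((p : ℂ) * (if (n ^ e i).val < m i then 1 else 0)) := by
        rw [Finset.prod_mul_distrib, Finset.prod_const, Finset.card_univ]
        congr 1
        split_ifs with h
        · simp [h]
        · push Not at h
          obtain ⟨i, hi⟩ := h
          symm
          apply Finset.prod_eq_zero (Finset.mem_univ i)
          rw [if_neg (by omega)]
      rw [e2]
      simp_rw [← fun i => chat_expand (hm i) (n ^ e i)]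
      rw [Finset.prod_univ_sum, Fintype.piFinset_univ]
      refine Finset.sum_congr rfl fun H _ => ?_
      rw [Finset.prod_mul_distrib, char_sum]
    have e3 : (A : ℂ) = ∑ n : ZMod p, (if ∀ i, (n ^ e i).val < m i then 1 else 0) := by
      rw [hA]; simp
    rw [e3, Finset.mul_sum]
    simp_rw [e1]
    rw [Finset.sum_comm]
    simp_rw [hS, Finset.mul_sum]
  have h0 : c 0 * S 0 = p * ∏ i, (m i : ℂ) := by
    simp [hc, hS, chat_zero, mul_comm]
  have h2 : (p:ℂ) ^ k * A - p * ∏ i, (m i : ℂ) = ∑ H ∈ univ.erase 0, c H * S H := by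
    rw [h1, ← h0, ← Finset.add_sum_erase _ _ (Finset.mem_univ (0 : ι → ZMod p))]
    ring
  have h3 : ‖(p:ℂ) ^ k * A - p * ∏ i, (m i : ℂ)‖ ≤
      (p * (2 + Real.log p)) ^ k * (M * √p) := by
    rw [h2]
    calc ‖∑ H ∈ univ.erase 0, c H * S H‖ ≤ ∑ H ∈ univ.erase 0, ‖c H‖ * (M * √p) := by
          refine norm_sum_le_of_le _ fun H hH => ?_
          rw [norm_mul]
          gcongr
          exact weil_sum he he1 heM hMp (Finset.ne_of_mem_erase hH)
      _ ≤ ∑ H : ι → ZMod p, ‖c H‖ * (M * √p) := by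
          refine Finset.sum_le_sum_of_subset_of_nonneg (Finset.subset_univ _) fun _ _ _ => ?_
          positivity
      _ = (∏ i, ∑ h : ZMod p, ‖chat p (m i) h‖) * (M * √p) := by
          rw [← Finset.sum_mul, Finset.prod_univ_sum, Fintype.piFinset_univ]
          simp_rw [hc, norm_prod]
      _ ≤ (∏ i : ι, (p * (2 + Real.log p))) * (M * √p) := by
          gcongr with i
          exact sum_norm_chat (hm i)
      _ = _ := by rw [Finset.prod_const, Finset.card_univ]
  have h4 : ‖(p:ℂ) ^ k * A - p * ∏ i, (m i : ℂ)‖ = |(p:ℝ) ^ k * A - p * ∏ i, (m i : ℝ)| := by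
    rw [← Real.norm_eq_abs, ← Complex.norm_real]
    push_cast
    rfl
  rw [h4] at h3
  have h5 : (A : ℝ) / p - ∏ i, (m i : ℝ) / p
      = ((p:ℝ) ^ k * A - p * ∏ i, (m i : ℝ)) / (p ^ k * p) := by
    rw [Finset.prod_div_distrib, Finset.prod_const, Finset.card_univ, ← hk]
    field_simp
  rw [h5, abs_div, abs_of_pos (show (0:ℝ) < p ^ k * p by positivity), div_le_iff₀ (by positivity)]
  refine h3.trans (le_of_eq ?_)
  rw [mul_pow]
  have h6 : √(p:ℝ) * √p = p := Real.mul_self_sqrt hp'.le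
  have h7 : √(p:ℝ) ≠ 0 := by positivity
  field_simp
  rw [sq, h6]

end box

end KW

namespace KW

lemma prod_sub_prod {ι : Type*} (s : Finset ι) (a b : ι → ℝ) {ε : ℝ}
    (ha : ∀ i, a i ∈ Set.Icc (0:ℝ) 1) (hb : ∀ i, b i ∈ Set.Icc (0:ℝ) 1)
    (hab : ∀ i, |a i - b i| ≤ ε) : |∏ i ∈ s, a i - ∏ i ∈ s, b i| ≤ s.card * ε := by
  classical
  induction s using Finset.induction_on with
  | empty => simp
  | insert i s hi ih =>
    rw [Finset.prod_insert hi, Finset.prod_insert hi, Finset.card_insert_of_notMem hi]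
    have e : a i * ∏ j ∈ s, a j - b i * ∏ j ∈ s, b j
        = a i * (∏ j ∈ s, a j - ∏ j ∈ s, b j) + (a i - b i) * ∏ j ∈ s, b j := by ring
    have hB0 : 0 ≤ ∏ j ∈ s, b j := Finset.prod_nonneg fun j _ => (hb j).1
    have hB1 : ∏ j ∈ s, b j ≤ 1 := Finset.prod_le_one (fun j _ => (hb j).1) fun j _ => (hb j).2
    rw [e]
    refine (abs_add_le _ _).trans ?_
    rw [abs_mul, abs_mul, abs_of_nonneg (ha i).1, abs_of_nonneg hB0]
    have h1 : a i * |∏ j ∈ s, a j - ∏ j ∈ s, b j| ≤ s.card * ε :=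
      (mul_le_of_le_one_left (abs_nonneg _) (ha i).2).trans ih
    have h2 : |a i - b i| * ∏ j ∈ s, b j ≤ ε :=
      (mul_le_of_le_one_right (abs_nonneg _) hB1).trans (hab i)
    push_cast
    linarith

lemma abs_localDisc_le_one {N s : ℕ} (x : Fin N → Fin s → ℝ) (t : Fin s → ℝ)
    (ht : ∀ j, t j ∈ Set.Icc (0:ℝ) 1) : |localDisc x t| ≤ 1 := by
  have h0 : 0 ≤ ∏ j, t j := Finset.prod_nonneg fun j _ => (ht j).1
  have h1 : ∏ j, t j ≤ 1 := Finset.prod_le_one (fun j _ => (ht j).1) fun j _ => (ht j).2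
  unfold localDisc
  have h2 : ((univ.filter fun n => ∀ j, x n j < t j).card : ℝ) ≤ N := by
    have := Finset.card_filter_le (univ : Finset (Fin N)) (fun n => ∀ j, x n j < t j)
    rw [Finset.card_univ, Fintype.card_fin] at this
    exact_mod_cast this
  have h3 : ((univ.filter fun n => ∀ j, x n j < t j).card : ℝ) / N ≤ 1 :=
    div_le_one_of_le₀ h2 (Nat.cast_nonneg _)
  have h4 : 0 ≤ ((univ.filter fun n => ∀ j, x n j < t j).card : ℝ) / N := by positivity
  rw [abs_le]
  constructor <;> linarith

lemma projPoint_mem {s : ℕ} (u : Finset (Fin s)) {z : Fin s → ℝ}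
    (hz : ∀ j, z j ∈ Set.Icc (0:ℝ) 1) (j : Fin s) : projPoint u z j ∈ Set.Icc (0:ℝ) 1 := by
  unfold projPoint
  split_ifs
  · exact hz j
  · simp

lemma mem_box_iff {p s : ℕ} [Fact p.Prime] (u : Finset (Fin s)) (z : Fin s → ℝ) (n : Fin p) :
    (∀ j, korobovP p s n j < projPoint u z j) ↔
      ∀ i : u, (((n.1 : ZMod p)) ^ (i.1.1 + 1)).val < ⌈z i.1 * p⌉₊ := by
  have hp : 0 < p := (Fact.out : p.Prime).pos
  have hp' : (0:ℝ) < p := by exact_mod_cast hp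
  have key : ∀ j : Fin s, korobovP p s n j < z j ↔
      (((n.1 : ZMod p)) ^ (j.1 + 1)).val < ⌈z j * p⌉₊ := by
    intro j
    unfold korobovP
    have e1 : ((n.1 : ℝ)) ^ (j.1 + 1) / p = ((n.1 ^ (j.1 + 1) : ℕ) : ℝ) / p := by push_cast; rfl
    rw [e1, Int.fract_div_natCast_eq_div_natCast_mod, div_lt_iff₀ hp', ← Nat.cast_pow,
      ZMod.val_natCast, Nat.lt_ceil]
  constructor
  · intro h i
    have := h i.1
    rw [projPoint, if_pos i.2] at this
    exact (key i.1).1 this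
  · intro h j
    by_cases hj : j ∈ u
    · rw [projPoint, if_pos hj]
      exact (key j).2 (h ⟨j, hj⟩)
    · rw [projPoint, if_neg hj]
      exact Int.fract_lt_one _

lemma card_box {p s : ℕ} [Fact p.Prime] (u : Finset (Fin s)) (z : Fin s → ℝ) :
    (univ.filter fun n : Fin p => ∀ j, korobovP p s n j < projPoint u z j).card
      = (univ.filter fun n : ZMod p => ∀ i : u, (n ^ (i.1.1 + 1)).val < ⌈z i.1 * p⌉₊).card := by
  simp_rw [mem_box_iff]
  refine Finset.card_nbij' (fun n => (n.1 : ZMod p)) (fun x => ⟨x.val, ZMod.val_lt x⟩) ?_ ?_ ?_ ?_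
  · intro n hn
    simpa using hn
  · intro x hx
    simpa using hx
  · intro n _
    ext
    exact ZMod.val_cast_of_lt n.2
  · intro x _
    exact ZMod.natCast_zmod_val x

lemma localDisc_korobovP_le {p s : ℕ} [Fact p.Prime] (u : Finset (Fin s)) {z : Fin s → ℝ}
    (hz : ∀ j, z j ∈ Set.Icc (0:ℝ) 1) {M : ℕ} (hM : ∀ j ∈ u, j.1 + 1 ≤ M) (huM : u.card ≤ M) :
    |localDisc (korobovP p s) (projPoint u z)|
      ≤ 2 * M / √p * (2 + Real.log p) ^ u.card := by
  have hp : 0 < p := (Fact.out : p.Prime).pos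
  have hp1' : (1:ℝ) ≤ p := by exact_mod_cast hp
  have hp' : (0:ℝ) < p := by linarith
  have hlog : 0 ≤ Real.log p := Real.log_nonneg hp1'
  have hL : 1 ≤ (2 + Real.log p) ^ u.card := one_le_pow₀ (by linarith)
  have hs1 : 1 ≤ √(p:ℝ) := Real.one_le_sqrt.2 hp1'
  have hss : √(p:ℝ) * √p = p := Real.mul_self_sqrt hp'.le
  rcases le_or_gt p M with hpM | hMp
  · refine (abs_localDisc_le_one _ _ (projPoint_mem u hz)).trans ?_
    have : 1 ≤ 2 * (M:ℝ) / √p := by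
      rw [le_div_iff₀ (by linarith)]
      have : (p:ℝ) ≤ M := by exact_mod_cast hpM
      nlinarith
    nlinarith
  · have hm : ∀ i : u, ⌈z i.1 * p⌉₊ ≤ p := by
      intro i
      rw [Nat.ceil_le]
      exact mul_le_of_le_one_left hp'.le (hz _).2
    have hB := box_count (p := p) (ι := u) (e := fun i => i.1.1 + 1)
      (fun a b hab => by
        apply Subtype.ext; apply Fin.ext; simpa using hab) (M := M)
      (fun i => by simp) (fun i => hM _ i.2) hMp (m := fun i => ⌈z i.1 * p⌉₊) hm
    rw [← card_box, Fintype.card_coe] at hB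
    have hpr : ∏ j, projPoint u z j = ∏ i : u, z i.1 := by
      rw [Finset.prod_coe_sort u (fun j => z j)]
      unfold projPoint
      simp
    have hP := prod_sub_prod (univ : Finset u) (fun i => ((⌈z i.1 * p⌉₊ : ℕ) : ℝ) / p)
      (fun i => z i.1) (ε := 1 / p)
      (fun i => ⟨by positivity, div_le_one_of_le₀ (by exact_mod_cast hm i) hp'.le⟩)
      (fun i => hz _)
      (fun i => by
        have h0 : 0 ≤ z i.1 * p := mul_nonneg (hz _).1 hp'.le
        have h1 := Nat.le_ceil (z i.1 * p)
        have h2 := Nat.ceil_lt_add_one h0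
        have : ((⌈z i.1 * p⌉₊ : ℕ) : ℝ) / p - z i.1 = (((⌈z i.1 * p⌉₊ : ℕ) : ℝ) - z i.1 * p) / p := by
          field_simp
        rw [this, abs_of_nonneg (div_nonneg (by linarith) hp'.le)]
        gcongr
        linarith)
    rw [Finset.card_univ, Fintype.card_coe] at hP
    unfold localDisc
    rw [hpr]
    have htri := abs_sub_le (((univ.filter fun n : Fin p => ∀ j,
      korobovP p s n j < projPoint u z j).card : ℝ) / p)
      (∏ i : u, ((⌈z i.1 * p⌉₊ : ℕ) : ℝ) / p) (∏ i : u, z i.1)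
    have h5 : (u.card : ℝ) * (1 / p) ≤ M / √p * (2 + Real.log p) ^ u.card := by
      have h6 : (u.card : ℝ) * (1 / p) ≤ M * (1 / √p) := by
        have : (u.card : ℝ) ≤ M := by exact_mod_cast huM
        gcongr
        nlinarith
      refine h6.trans (le_trans (by rw [mul_one_div]) (le_mul_of_one_le_right (by positivity) hL))
    have h7 : 2 * M / √p * (2 + Real.log p) ^ u.card
      = M / √p * (2 + Real.log p) ^ u.card + M / √p * (2 + Real.log p) ^ u.card := by ring
    linarith

end KW

namespace KW

lemma mul_le_tsum_of_antitone {g : ℕ → ℝ} (hg0 : ∀ j, 0 ≤ g j) (hg : Antitone g)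
    (hsum : Summable g) (k : ℕ) : ((k + 1 : ℕ) : ℝ) * g k ≤ ∑' j, g j := by
  refine le_trans ?_ (hsum.sum_le_tsum (range (k + 1)) fun i _ => hg0 i)
  have : ∑ i ∈ range (k + 1), g k ≤ ∑ i ∈ range (k + 1), g i :=
    Finset.sum_le_sum fun i hi => hg (by have := Finset.mem_range.1 hi; omega)
  simpa using this

lemma prod_le_aux {g : ℕ → ℝ} (hg0 : ∀ j, 0 ≤ g j) (hsum : Summable g) {ε : ℝ} {J : ℕ}
    (hJ : ∑' j, g (j + J) ≤ ε) {L : ℝ} (hL : 1 ≤ L) (s : ℕ) :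
    ∏ j ∈ range s, (1 + g j * L) ≤ ((1 + ∑' j, g j) * L) ^ J * Real.exp (L * ε) := by
  have h1 : ∀ j, 1 ≤ 1 + g j * L := fun j => by
    have := mul_nonneg (hg0 j) (by linarith : (0:ℝ) ≤ L)
    linarith
  have h2 : ∏ j ∈ range s, (1 + g j * L) ≤ ∏ j ∈ range (J + s), (1 + g j * L) := by
    refine Finset.prod_le_prod_of_subset_of_one_le
      (Finset.range_subset_range.2 (by omega)) (fun j _ => by linarith [h1 j]) fun j _ _ => h1 j
  refine h2.trans ?_
  rw [Finset.prod_range_add]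
  have hΓ : 0 ≤ ∑' j, g j := tsum_nonneg hg0
  have h3 : ∏ j ∈ range J, (1 + g j * L) ≤ ((1 + ∑' j, g j) * L) ^ J := by
    calc ∏ j ∈ range J, (1 + g j * L) ≤ ∏ j ∈ range J, ((1 + ∑' j, g j) * L) := by
          refine Finset.prod_le_prod (fun j _ => by linarith [h1 j]) fun j _ => ?_
          have : g j ≤ ∑' j, g j := hsum.le_tsum j fun i _ => hg0 i
          nlinarith
      _ = _ := by simp
  have h4 : ∏ j ∈ range s, (1 + g (J + j) * L) ≤ Real.exp (L * ε) := by
    calc ∏ j ∈ range s, (1 + g (J + j) * L) ≤ ∏ j ∈ range s, Real.exp (g (J + j) * L) := by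
          refine Finset.prod_le_prod (fun j _ => by linarith [h1 (J + j)]) fun j _ => ?_
          rw [add_comm]
          exact Real.add_one_le_exp _
      _ = Real.exp (L * ∑ j ∈ range s, g (J + j)) := by
          rw [← Real.exp_sum, Finset.mul_sum]
          simp_rw [mul_comm L]
      _ ≤ Real.exp (L * ε) := by
          have hs' : Summable fun j => g (j + J) := (summable_nat_add_iff J).2 hsum
          have := hs'.sum_le_tsum (range s) fun i _ => hg0 _
          have e : ∑ j ∈ range s, g (J + j) = ∑ j ∈ range s, g (j + J) := by simp_rw [add_comm J]
          rw [e]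
          gcongr
          linarith
  refine mul_le_mul h3 h4 (Finset.prod_nonneg fun j _ => by linarith [h1 (J + j)]) ?_
  exact pow_nonneg (mul_nonneg (by linarith) (by linarith)) _

lemma weighted_le {γ : ℕ → ℝ} (hγ : ∀ j, 0 ≤ γ (j + 1)) (hdec : Antitone fun j => γ (j + 1))
    (hsum : Summable fun j => γ (j + 1)) {p s : ℕ} [Fact p.Prime] (u : Finset (Fin s))
    (hu : u.Nonempty) {z : Fin s → ℝ} (hz : ∀ j, z j ∈ Set.Icc (0:ℝ) 1) :
    weightOf γ u * |localDisc (korobovP p s) (projPoint u z)|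
      ≤ 2 * (∑' j, γ (j + 1)) * (2 + Real.log p) / √p *
        ∏ j ∈ range s, (1 + γ (j + 1) * (2 + Real.log p)) := by
  have hp : 0 < p := (Fact.out : p.Prime).pos
  have hp1' : (1:ℝ) ≤ p := by exact_mod_cast hp
  have hlog : 0 ≤ Real.log p := Real.log_nonneg hp1'
  set L := 2 + Real.log p with hL
  have hL0 : 0 ≤ L := by linarith
  set j0 := u.max' hu with hj0
  have hle : ∀ j ∈ u, j.1 ≤ j0.1 := fun j hj => u.le_max' j hj
  have hcard : u.card ≤ j0.1 + 1 := by
    rw [← Finset.card_range (j0.1 + 1)]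
    refine Finset.card_le_card_of_injOn (fun j => j.1) (fun j hj => ?_) (fun a _ b _ h => Fin.ext h)
    have := hle j hj
    simp
    omega
  have hloc := localDisc_korobovP_le (p := p) u hz (M := j0.1 + 1)
    (fun j hj => Nat.succ_le_succ (hle j hj)) hcard
  have hw0 : 0 ≤ weightOf γ u := Finset.prod_nonneg fun j _ => hγ _
  refine (mul_le_mul_of_nonneg_left hloc hw0).trans ?_
  have hmem : j0 ∈ u := u.max'_mem hu
  have e1 : weightOf γ u * L ^ u.card
      = γ (j0.1 + 1) * L * ∏ j ∈ u.erase j0, (γ (j.1 + 1) * L) := by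
    rw [Finset.mul_prod_erase u (fun j => γ (j.1 + 1) * L) hmem, Finset.prod_mul_distrib,
      Finset.prod_const]
    rfl
  have e2 : ∏ j ∈ u.erase j0, (γ (j.1 + 1) * L) ≤ ∏ j ∈ range s, (1 + γ (j + 1) * L) := by
    rw [← Fin.prod_univ_eq_prod_range (fun j => 1 + γ (j + 1) * L)]
    calc ∏ j ∈ u.erase j0, (γ (j.1 + 1) * L) ≤ ∏ j ∈ u.erase j0, (1 + γ (j.1 + 1) * L) :=
          Finset.prod_le_prod (fun j _ => mul_nonneg (hγ _) hL0) fun j _ => by linarith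
      _ ≤ _ := by
          have h1 : ∀ j : Fin s, 1 ≤ 1 + γ (j.1 + 1) * L := fun j => by
            linarith [mul_nonneg (hγ j.1) hL0]
          exact Finset.prod_le_prod_of_subset_of_one_le (Finset.subset_univ _)
            (fun j _ => by linarith [h1 j]) fun j _ _ => h1 j
  have e3 := mul_le_tsum_of_antitone hγ hdec hsum j0.1
  set P := ∏ j ∈ range s, (1 + γ (j + 1) * L)
  have hP : 0 ≤ P := le_trans (Finset.prod_nonneg fun j _ => mul_nonneg (hγ _) hL0) e2
  calc weightOf γ u * (2 * ((j0.1 + 1 : ℕ) : ℝ) / √p * L ^ u.card)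
      = 2 * ((j0.1 + 1 : ℕ) : ℝ) / √p * (weightOf γ u * L ^ u.card) := by ring
    _ = 2 * L / √p * (((j0.1 + 1 : ℕ) : ℝ) * γ (j0.1 + 1)) *
          ∏ j ∈ u.erase j0, (γ (j.1 + 1) * L) := by rw [e1]; ring
    _ ≤ 2 * L / √p * (∑' j, γ (j + 1)) * P := by
        gcongr
        · exact Finset.prod_nonneg fun j _ => mul_nonneg (hγ _) hL0
        · exact mul_nonneg (by positivity) (tsum_nonneg hγ)
    _ = _ := by ring

end KW

/-- for non-increasing, summable, nonnegative weights and any `δ > 0`,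
`D*_γ(P_{p,s}) ≤ C p^{−(1/2−δ)}` with `C` independent of the prime `p` and of `s`. -/
theorem wStarDisc_korobovP_le (γ : ℕ → ℝ) (hγ : ∀ j, 1 ≤ j → 0 ≤ γ j)
    (hdec : ∀ j, 1 ≤ j → γ (j + 1) ≤ γ j)
    (hsum : Summable fun j => γ (j + 1)) (δ : ℝ) (hδ : 0 < δ) :
    ∃ C : ℝ, 0 < C ∧ ∀ p s : ℕ, p.Prime → 1 ≤ s →
      wStarDisc γ (korobovP p s) ≤ C * (p : ℝ) ^ (-(1 / 2 - δ) : ℝ) := by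
  have hγ' : ∀ j, 0 ≤ γ (j + 1) := fun j => hγ _ (by omega)
  have hanti : Antitone fun j => γ (j + 1) := antitone_nat_of_succ_le fun j => hdec _ (by omega)
  obtain ⟨J, hJ⟩ : ∃ J, ∑' j, γ (j + J + 1) ≤ δ / 2 := by
    have := tendsto_sum_nat_add (fun j => γ (j + 1))
    exact ((this.eventually (ge_mem_nhds (by linarith : (0:ℝ) < δ / 2))).exists)
  set Γ := ∑' j, γ (j + 1) with hΓ
  have hΓ0 : 0 ≤ Γ := tsum_nonneg hγ'
  set η := δ / 2 / ((J + 1 : ℕ) : ℝ) with hη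
  have hη0 : 0 < η := by positivity
  refine ⟨2 * Γ * (1 + Γ) ^ J * Real.exp δ * (2 + 1 / η) ^ (J + 1) + 1, by positivity, ?_⟩
  intro p s hpp _
  have : Fact p.Prime := ⟨hpp⟩
  have hp1' : (1:ℝ) ≤ p := by exact_mod_cast hpp.one_lt.le
  have hp0 : (0:ℝ) < p := by linarith
  have hlog : 0 ≤ Real.log p := Real.log_nonneg hp1'
  refine Real.sSup_le ?_ (by positivity)
  rintro d ⟨z, hz, u, hu, rfl⟩
  refine (KW.weighted_le hγ' hanti hsum u hu hz).trans ?_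
  have hprod := KW.prod_le_aux hγ' hsum hJ (L := 2 + Real.log p) (by linarith) s
  rw [← hΓ] at hprod ⊢
  have hLη : 2 + Real.log p ≤ (2 + 1 / η) * (p:ℝ) ^ η := by
    have h1 := Real.log_le_rpow_div hp0.le hη0
    have h2 : 1 ≤ (p:ℝ) ^ η := Real.one_le_rpow hp1' hη0.le
    have h3 : (2 + 1 / η) * (p:ℝ) ^ η = 2 * (p:ℝ) ^ η + (p:ℝ) ^ η / η := by ring
    linarith
  have hexp : Real.exp ((2 + Real.log p) * (δ / 2)) = Real.exp δ * (p:ℝ) ^ (δ / 2) := by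
    rw [Real.rpow_def_of_pos hp0, ← Real.exp_add]
    congr 1
    ring
  have hpow : ((p:ℝ) ^ η) ^ (J + 1) = (p:ℝ) ^ (δ / 2) := by
    rw [← Real.rpow_natCast, ← Real.rpow_mul hp0.le]
    congr 1
    rw [hη]
    field_simp
  have hfin : (p:ℝ) ^ (-(1 / 2 - δ)) = (p:ℝ) ^ (δ / 2) * (p:ℝ) ^ (δ / 2) / √p := by
    rw [Real.sqrt_eq_rpow, ← Real.rpow_add hp0, ← Real.rpow_sub hp0]
    congr 1
    ring
  set L := 2 + Real.log p with hL
  have hL0 : 0 ≤ L := by linarith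
  calc 2 * Γ * L / √p * ∏ j ∈ range s, (1 + γ (j + 1) * L)
      ≤ 2 * Γ * L / √p * (((1 + Γ) * L) ^ J * Real.exp (L * (δ / 2))) := by gcongr
    _ = 2 * Γ * (1 + Γ) ^ J * Real.exp δ * (p:ℝ) ^ (δ / 2) / √p * L ^ (J + 1) := by
        rw [hexp, mul_pow]; ring
    _ ≤ 2 * Γ * (1 + Γ) ^ J * Real.exp δ * (p:ℝ) ^ (δ / 2) / √p *
          ((2 + 1 / η) * (p:ℝ) ^ η) ^ (J + 1) := by gcongr
    _ = (2 * Γ * (1 + Γ) ^ J * Real.exp δ * (2 + 1 / η) ^ (J + 1)) * (p:ℝ) ^ (-(1 / 2 - δ)) := by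
        rw [mul_pow, hpow, hfin]; ring
    _ ≤ _ := by
        gcongr
        linarith
end
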